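/- Let ω be a non-quasianalytic concave weight function and let d ≥ 1. Then the ring of germs at 0 ∈ ℝ^d of complex-valued E^{ω}-functions (Roumieu) has property (D), and the ring of germs at 0 ∈ ℝ^d of complex-valued E^{(ω)}-functions (Beurling) has property (D): for every function f defined on an open neighborhood of 0 in ℝ^d and every integer j ≥ 1, if f^j and f^{j+1} are of the respective class on some open neighborhood of 0, then f is of that class on some open neighborhood of 0. -/

import Mathlib

open Filter Set Asymptotics MeasureTheory

noncomputable section

/-- `M` is a weight sequence: `M 0 = 1`, positive, `M 1 ≥ 1`, log-convex and
`M k ^ (1/k) → ∞`. -/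
def IsWeightSeq (M : ℕ → ℝ) : Prop :=
  M 0 = 1 ∧ (∀ k, 0 < M k) ∧ 1 ≤ M 1 ∧
    (∀ k : ℕ, 1 ≤ k → M k ^ 2 ≤ M (k - 1) * M (k + 1)) ∧
    Tendsto (fun k : ℕ => M k ^ (1 / (k : ℝ))) atTop atTop

/-- The sequence `m k = M k / k!`. -/
def mseq (M : ℕ → ℝ) : ℕ → ℝ := fun k => M k / (Nat.factorial k : ℝ)

/-- Log-convexity of a sequence. -/
def LogConvexSeq (m : ℕ → ℝ) : Prop := ∀ k : ℕ, 1 ≤ k → m k ^ 2 ≤ m (k - 1) * m (k + 1)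

/-- `m k ^ (1/k) → ∞`. -/
def RootTendsToInfty (m : ℕ → ℝ) : Prop :=
  Tendsto (fun k : ℕ => m k ^ (1 / (k : ℝ))) atTop atTop

/-- Moderate growth of a sequence. -/
def ModerateGrowth (M : ℕ → ℝ) : Prop :=
  ∃ C : ℝ, 0 < C ∧ ∀ j k : ℕ, M (j + k) ≤ C ^ (j + k) * M j * M k

/-- Derivation closedness of a sequence. -/
def DerivClosed (M : ℕ → ℝ) : Prop :=
  ∃ C : ℝ, 0 < C ∧ ∀ k : ℕ, M (k + 1) ≤ C ^ (k + 1) * M k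

/-- Non-quasianalyticity: `∑_{k≥1} M (k-1) / M k = ∑_{k≥1} 1/μ_k < ∞`. -/
def NonQuasianalytic (M : ℕ → ℝ) : Prop := Summable fun k : ℕ => M k / M (k + 1)

/-- Quasianalyticity: `∑_{k≥1} 1/μ_k = ∞`. -/
def Quasianalytic (M : ℕ → ℝ) : Prop := ¬ NonQuasianalytic M

/-- The associated function `h_m (t) = inf_k m k * t ^ k`. -/
def hFun (m : ℕ → ℝ) (t : ℝ) : ℝ := ⨅ k : ℕ, m k * t ^ k

/-- `Γ̄_m (t) = min {k | h_m t = m k * t ^ k}`. -/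
def GammaBar (m : ℕ → ℝ) (t : ℝ) : ℕ := sInf {k : ℕ | hFun m t = m k * t ^ k}

/-- `Γ̲_m (t) = min {k | m (k+1) / m k ≥ 1 / t}`. -/
def GammaLow (m : ℕ → ℝ) (t : ℝ) : ℕ := sInf {k : ℕ | 1 / t ≤ m (k + 1) / m k}

/-- The set whose supremum is `mg (M, N)`. -/
def mgSet (M N : ℕ → ℝ) : Set ℝ :=
  {x | ∃ j k : ℕ, 1 ≤ j + k ∧ x = (M (j + k) / (N j * N k)) ^ (1 / (j + k : ℝ))}

/-- `mg (M, N) = sup_{j+k ≥ 1} (M (j+k) / (N j * N k)) ^ (1/(j+k))`. -/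
def mg (M N : ℕ → ℝ) : ℝ := sSup (mgSet M N)

/-- `mg (M, N) < ∞`. -/
def MgFinite (M N : ℕ → ℝ) : Prop := BddAbove (mgSet M N)

/-- A weight sequence is regular: `m k ^ (1/k) → ∞`, derivation closed, and
`Γ̄_m (C t) ≤ Γ̲_m t` for some `C ≥ 1`. -/
def RegularWS (M : ℕ → ℝ) : Prop :=
  RootTendsToInfty (mseq M) ∧ DerivClosed M ∧
    ∃ C : ℝ, 1 ≤ C ∧ ∀ t : ℝ, 0 < t → GammaBar (mseq M) (C * t) ≤ GammaLow (mseq M) t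

/-- `f` is of class `E^{M}` (Roumieu) on the open set `U`. -/
def RoumieuOn {E : Type*} [NormedAddCommGroup E] [NormedSpace ℝ E]
    (M : ℕ → ℝ) (f : E → ℂ) (U : Set E) : Prop :=
  ContDiffOn ℝ (⊤ : ℕ∞) f U ∧
    ∀ V : Set E, IsOpen V → IsCompact (closure V) → closure V ⊆ U →
      ∃ C σ : ℝ, 0 < C ∧ 0 < σ ∧
        ∀ x ∈ V, ∀ k : ℕ, ‖iteratedFDerivWithin ℝ k f U x‖ ≤ C * σ ^ k * M k

/-- `f` is of class `E^{(M)}` (Beurling) on the open set `U`. -/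
def BeurlingOn {E : Type*} [NormedAddCommGroup E] [NormedSpace ℝ E]
    (M : ℕ → ℝ) (f : E → ℂ) (U : Set E) : Prop :=
  ContDiffOn ℝ (⊤ : ℕ∞) f U ∧
    ∀ V : Set E, IsOpen V → IsCompact (closure V) → closure V ⊆ U →
      ∀ σ : ℝ, 0 < σ → ∃ C : ℝ, 0 < C ∧
        ∀ x ∈ V, ∀ k : ℕ, ‖iteratedFDerivWithin ℝ k f U x‖ ≤ C * σ ^ k * M k

/-- A weight matrix: a nonempty, pointwise totally ordered family of weight sequences. -/
def IsWeightMatrix (W : Set (ℕ → ℝ)) : Prop :=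
  W.Nonempty ∧ (∀ M ∈ W, IsWeightSeq M) ∧
    ∀ M ∈ W, ∀ N ∈ W, (∀ k, M k ≤ N k) ∨ (∀ k, N k ≤ M k)

/-- R-regularity of a weight matrix. -/
def RRegular (W : Set (ℕ → ℝ)) : Prop :=
  (∀ M ∈ W, RootTendsToInfty (mseq M)) ∧
    (∀ M ∈ W, ∃ N ∈ W, ∃ C : ℝ, 1 ≤ C ∧ ∀ j : ℕ, M (j + 1) ≤ C ^ (j + 1) * N j) ∧
    (∀ M ∈ W, ∃ N ∈ W, ∃ C : ℝ, 1 ≤ C ∧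
      ∀ t : ℝ, 0 < t → GammaBar (mseq N) (C * t) ≤ GammaLow (mseq M) t)

/-- B-regularity of a weight matrix. -/
def BRegular (W : Set (ℕ → ℝ)) : Prop :=
  (∀ M ∈ W, RootTendsToInfty (mseq M)) ∧
    (∀ M ∈ W, ∃ N ∈ W, ∃ C : ℝ, 1 ≤ C ∧ ∀ j : ℕ, N (j + 1) ≤ C ^ j * M j) ∧
    (∀ M ∈ W, ∃ N ∈ W, ∃ C : ℝ, 1 ≤ C ∧
      ∀ t : ℝ, 0 < t → GammaBar (mseq M) (C * t) ≤ GammaLow (mseq N) t)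

/-- R-moderate growth of a weight matrix. -/
def RModerateGrowth (W : Set (ℕ → ℝ)) : Prop := ∀ M ∈ W, ∃ N ∈ W, MgFinite M N

/-- B-moderate growth of a weight matrix. -/
def BModerateGrowth (W : Set (ℕ → ℝ)) : Prop := ∀ M ∈ W, ∃ N ∈ W, MgFinite N M

/-- `f` is of class `E^{W}` (Roumieu, weight matrix) on the open set `U`. -/
def MatrixRoumieuOn {E : Type*} [NormedAddCommGroup E] [NormedSpace ℝ E]
    (W : Set (ℕ → ℝ)) (f : E → ℂ) (U : Set E) : Prop :=
  ContDiffOn ℝ (⊤ : ℕ∞) f U ∧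
    ∀ V : Set E, IsOpen V → IsCompact (closure V) → closure V ⊆ U →
      ∃ M ∈ W, ∃ C σ : ℝ, 0 < C ∧ 0 < σ ∧
        ∀ x ∈ V, ∀ k : ℕ, ‖iteratedFDerivWithin ℝ k f U x‖ ≤ C * σ ^ k * M k

/-- `f` is of class `E^{(W)}` (Beurling, weight matrix) on the open set `U`. -/
def MatrixBeurlingOn {E : Type*} [NormedAddCommGroup E] [NormedSpace ℝ E]
    (W : Set (ℕ → ℝ)) (f : E → ℂ) (U : Set E) : Prop :=
  ContDiffOn ℝ (⊤ : ℕ∞) f U ∧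
    ∀ V : Set E, IsOpen V → IsCompact (closure V) → closure V ⊆ U →
      ∀ M ∈ W, ∀ σ : ℝ, 0 < σ → ∃ C : ℝ, 0 < C ∧
        ∀ x ∈ V, ∀ k : ℕ, ‖iteratedFDerivWithin ℝ k f U x‖ ≤ C * σ ^ k * M k

/-- `ω` is a weight function. -/
def IsWeightFunction (ω : ℝ → ℝ) : Prop :=
  ContinuousOn ω (Ici 0) ∧ MonotoneOn ω (Ici 0) ∧ (∀ t ∈ Ici (0 : ℝ), 0 ≤ ω t) ∧
    ((fun t => ω (2 * t)) =O[atTop] ω) ∧ (ω =o[atTop] fun t : ℝ => t) ∧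
    ((fun t => Real.log t) =o[atTop] ω) ∧ ConvexOn ℝ (Ici 0) fun t => ω (Real.exp t)

/-- The Young conjugate `φ*_ω (s) = sup_{t ≥ 0} (s t - ω (e^t))`. -/
def phiStar (ω : ℝ → ℝ) (s : ℝ) : ℝ := sSup ((fun t => s * t - ω (Real.exp t)) '' Ici 0)

/-- Non-quasianalyticity of a weight function. -/
def NonQuasianalyticW (ω : ℝ → ℝ) : Prop := IntegrableOn (fun t => ω t / t ^ 2) (Ici 1)

/-- `f` is of class `E^{ω}` (Roumieu) on the open set `U`. -/
def OmegaRoumieuOn {E : Type*} [NormedAddCommGroup E] [NormedSpace ℝ E]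
    (ω : ℝ → ℝ) (f : E → ℂ) (U : Set E) : Prop :=
  ContDiffOn ℝ (⊤ : ℕ∞) f U ∧
    ∀ V : Set E, IsOpen V → IsCompact (closure V) → closure V ⊆ U →
      ∃ C ρ : ℝ, 0 < C ∧ 0 < ρ ∧
        ∀ x ∈ V, ∀ k : ℕ,
          ‖iteratedFDerivWithin ℝ k f U x‖ ≤ C * Real.exp (phiStar ω (ρ * k) / ρ)

/-- `f` is of class `E^{(ω)}` (Beurling) on the open set `U`. -/
def OmegaBeurlingOn {E : Type*} [NormedAddCommGroup E] [NormedSpace ℝ E]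
    (ω : ℝ → ℝ) (f : E → ℂ) (U : Set E) : Prop :=
  ContDiffOn ℝ (⊤ : ℕ∞) f U ∧
    ∀ V : Set E, IsOpen V → IsCompact (closure V) → closure V ⊆ U →
      ∀ ρ : ℝ, 0 < ρ → ∃ C : ℝ, 0 < C ∧
        ∀ x ∈ V, ∀ k : ℕ,
          ‖iteratedFDerivWithin ℝ k f U x‖ ≤ C * Real.exp (phiStar ω (ρ * k) / ρ)

/-- The open ellipse `Ω_ε` with vertices `± cosh ε` and co-vertices `± i sinh ε`. -/
def OmegaE (ε : ℝ) : Set ℂ :=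
  {z : ℂ | (z.re / Real.cosh ε) ^ 2 + (z.im / Real.sinh ε) ^ 2 < 1}

/-- The sequence space `Λ^{M}`. -/
def Lambda (M : ℕ → ℝ) : Set (ℕ → ℂ) :=
  {c | ∃ ρ : ℝ, 0 < ρ ∧ ∃ C : ℝ, ∀ k, ‖c k‖ ≤ C * ρ ^ k * M k}

/-- `L(M)`: all non-quasianalytic weight sequences `N ≥ M` with `n = N/k!` log-convex. -/
def LM (M : ℕ → ℝ) : Set (ℕ → ℝ) :=
  {N | IsWeightSeq N ∧ NonQuasianalytic N ∧ (∀ k, M k ≤ N k) ∧ LogConvexSeq (mseq N)}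

/-- A quasianalytic weight sequence `M` is intersectable if `Λ^{M} = ⋂_{N ∈ L(M)} Λ^{N}`. -/
def Intersectable (M : ℕ → ℝ) : Prop := Lambda M = ⋂ N ∈ LM M, Lambda N

/-- two constants theorem on half discs -/
lemma two_const_half (F : ℂ → ℂ) (r C δ : ℝ) (hr : 0 < r) (hδ : 0 < δ) (hδC : δ ≤ C)
    (hF : DifferentiableOn ℂ F (Metric.ball 0 r))
    (hC : ∀ z ∈ Metric.ball (0:ℂ) r, ‖F z‖ ≤ C)
    (hR : ∀ t : ℝ, |t| < r → ‖F t‖ ≤ δ) (z : ℂ) (hz : ‖z‖ ≤ r / 16) (him : 0 ≤ z.im) :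
    ‖F z‖ ≤ Real.sqrt (C * δ) := by
  have hC0 : 0 < C := hδ.trans_le hδC
  rcases him.eq_or_lt with h0 | him
  · have hzr : z = (z.re : ℂ) := by
      apply Complex.ext <;> simp [← h0]
    have h1 : ‖F z‖ ≤ δ := by
      rw [hzr]; apply hR
      have := Complex.abs_re_le_norm z
      linarith
    refine h1.trans (Real.le_sqrt_of_sq_le ?_)
    nlinarith
  set L := Real.log (C / δ) with hL
  have hL0 : 0 ≤ L := Real.log_nonneg ((one_le_div hδ).2 hδC)
  set s := r / 2 with hs
  have hs0 : 0 < s := by positivity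
  set g : ℂ → ℂ := fun w => 1 - (w / s) ^ 2 + 2 * Complex.I * (w / s) with hg
  set U : Set ℂ := {w | ‖w‖ < s ∧ 0 < w.im} with hU
  have hre : ∀ w : ℂ, (g w).re = 1 - (w.re / s)^2 + (w.im / s)^2 - 2 * (w.im / s) := by
    intro w
    have : w / s = ((w.re / s : ℝ) : ℂ) + ((w.im / s : ℝ) : ℂ) * Complex.I := by
      apply Complex.ext <;> simp [Complex.div_re, Complex.div_im, Complex.normSq] <;> field_simp
    simp only [hg, this]
    simp [pow_two]
    ring
  set Φ : ℂ → ℂ := fun w => F w * Complex.exp (L * g w) with hΦ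
  have hclos : closure U ⊆ {w | ‖w‖ ≤ s ∧ 0 ≤ w.im} := by
    apply closure_minimal
    · rintro w ⟨h1, h2⟩; exact ⟨h1.le, h2.le⟩
    · exact (isClosed_le continuous_norm continuous_const).inter
        (isClosed_le continuous_const Complex.continuous_im)
  have hopen : IsOpen U := (isOpen_lt continuous_norm continuous_const).inter
        (isOpen_lt continuous_const Complex.continuous_im)
  have hsub : {w : ℂ | ‖w‖ ≤ s ∧ 0 ≤ w.im} ⊆ Metric.ball 0 r := by
    rintro w ⟨h1, _⟩
    simp; linarith
  have hgd : Differentiable ℂ g := by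
    simp only [hg]; fun_prop
  have hdiff : DifferentiableOn ℂ Φ (Metric.ball 0 r) := by
    apply hF.mul
    apply Differentiable.differentiableOn
    fun_prop
  have hcl : DiffContOnCl ℂ Φ U :=
    ⟨hdiff.mono ((subset_closure.trans hclos).trans hsub),
      hdiff.continuousOn.mono (hclos.trans hsub)⟩
  have hbd : Bornology.IsBounded U :=
    Metric.isBounded_ball.subset ((subset_closure.trans hclos).trans hsub)
  have hnorm : ∀ w, ‖Φ w‖ = ‖F w‖ * Real.exp (L * (g w).re) := by
    intro w
    simp [hΦ, Complex.norm_exp]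
  have hexpL : Real.exp L = C / δ := Real.exp_log (by positivity)
  have key : ‖Φ z‖ ≤ C := by
    apply Complex.norm_le_of_forall_mem_frontier_norm_le hbd hcl
    · intro w hw
      have hwc := hclos hw.1
      have hwU : w ∉ U := by
        have := hw.2; rwa [hopen.interior_eq] at this
      rw [hnorm]
      by_cases hwi : 0 < w.im
      · have hws : ‖w‖ = s := by
          apply le_antisymm hwc.1
          by_contra hlt
          exact hwU ⟨not_le.1 hlt, hwi⟩
        have hsq : w.re ^ 2 + w.im ^ 2 = s ^ 2 := by
          rw [← hws, Complex.sq_norm, Complex.normSq_apply]; ring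
        have hys : w.im ≤ s := by rw [← hws]; exact (le_abs_self _).trans (Complex.abs_im_le_norm w)
        have hre0 : (g w).re ≤ 0 := by
          rw [hre]
          have e1 : (w.re/s)^2 + (w.im/s)^2 = 1 := by
            field_simp; linarith
          have e2 : w.im / s ≤ 1 := (div_le_one hs0).2 hys
          have e3 : 0 ≤ w.im / s := by positivity
          nlinarith
        have : Real.exp (L * (g w).re) ≤ 1 := Real.exp_le_one_iff.2 (by nlinarith)
        have h3 := hC w (hsub hwc)
        have h4 := norm_nonneg (F w)
        nlinarith
      · have hw0 : w.im = 0 := le_antisymm (not_lt.1 hwi) hwc.2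
        have hwr : w = (w.re : ℂ) := by apply Complex.ext <;> simp [hw0]
        have h1 : ‖F w‖ ≤ δ := by
          rw [hwr]; apply hR
          have := Complex.abs_re_le_norm w
          have := hwc.1
          linarith
        have hre1 : (g w).re ≤ 1 := by
          rw [hre, hw0]; simp; positivity
        have h2 : Real.exp (L * (g w).re) ≤ C / δ := by
          rw [← hexpL]; apply Real.exp_le_exp.2; nlinarith
        calc ‖F w‖ * Real.exp (L * (g w).re) ≤ δ * (C / δ) := by gcongr
          _ = C := by field_simp
    · apply subset_closure
      exact ⟨by linarith, him⟩
  rw [hnorm] at key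
  have hrez : 1 / 2 ≤ (g z).re := by
    rw [hre]
    have a1 : |z.re / s| ≤ 1/8 := by
      rw [abs_div, abs_of_pos hs0, div_le_iff₀ hs0]
      have := Complex.abs_re_le_norm z; linarith
    have a2 : |z.im / s| ≤ 1/8 := by
      rw [abs_div, abs_of_pos hs0, div_le_iff₀ hs0]
      have := Complex.abs_im_le_norm z; linarith
    rw [abs_le] at a1 a2
    nlinarith [sq_nonneg (z.im / s)]
  have h5 : Real.exp (L / 2) ≤ Real.exp (L * (g z).re) := Real.exp_le_exp.2 (by nlinarith)
  have h6 : Real.exp (L / 2) = Real.sqrt (C / δ) := by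
    rw [← hexpL]; exact Real.exp_half L
  have h7 : ‖F z‖ * Real.sqrt (C / δ) ≤ C := by
    rw [← h6]
    exact (mul_le_mul_of_nonneg_left h5 (norm_nonneg _)).trans key
  have h8 : Real.sqrt (C * δ) * Real.sqrt (C / δ) = C := by
    rw [← Real.sqrt_mul (by positivity)]
    rw [show C * δ * (C / δ) = C ^ 2 by field_simp]
    exact Real.sqrt_sq hC0.le
  have h9 : 0 < Real.sqrt (C / δ) := Real.sqrt_pos.2 (by positivity)
  exact le_of_mul_le_mul_right (h7.trans_eq h8.symm) h9

lemma two_const (F : ℂ → ℂ) (r C δ : ℝ) (hr : 0 < r) (hδ : 0 < δ) (hδC : δ ≤ C)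
    (hF : DifferentiableOn ℂ F (Metric.ball 0 r))
    (hC : ∀ z ∈ Metric.ball (0:ℂ) r, ‖F z‖ ≤ C)
    (hR : ∀ t : ℝ, |t| < r → ‖F t‖ ≤ δ) (z : ℂ) (hz : ‖z‖ ≤ r / 16) :
    ‖F z‖ ≤ Real.sqrt (C * δ) := by
  rcases le_total 0 z.im with h | h
  · exact two_const_half F r C δ hr hδ hδC hF hC hR z hz h
  · have := two_const_half (fun w => F (-w)) r C δ hr hδ hδC
      (hF.comp (differentiable_id.neg.differentiableOn) (fun w hw => by simpa using hw))
      (fun w hw => hC _ (by simpa using hw))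
      (fun t ht => by have := hR (-t) (by simpa using ht); simpa using this)
      (-z) (by simpa using hz) (by simpa using h)
    simpa using this

/-- two constants + Cauchy -/
lemma two_const_deriv (F : ℂ → ℂ) (r C δ : ℝ) (hr : 0 < r) (hδ : 0 < δ) (hδC : δ ≤ C)
    (hF : DifferentiableOn ℂ F (Metric.ball 0 r))
    (hC : ∀ z ∈ Metric.ball (0:ℂ) r, ‖F z‖ ≤ C)
    (hR : ∀ t : ℝ, |t| < r → ‖F t‖ ≤ δ) (k : ℕ) :
    ‖iteratedDeriv k F 0‖ ≤ k.factorial * Real.sqrt (C * δ) / (r / 16) ^ k := by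
  apply Complex.norm_iteratedDeriv_le_of_forall_mem_sphere_norm_le k (by positivity)
  · refine ⟨hF.mono (Metric.ball_subset_ball (by linarith)), hF.continuousOn.mono ?_⟩
    refine (Metric.closure_ball_subset_closedBall).trans (Metric.closedBall_subset_ball (by linarith))
  · intro z hz
    exact two_const F r C δ hr hδ hδC hF hC hR z (by simpa using (mem_sphere_zero_iff_norm.1 hz).le)

/-- twice the Cauchy-Riemann operator -/
def dbar (u : ℂ → ℂ) (z : ℂ) : ℂ := fderiv ℝ u z 1 + Complex.I * fderiv ℝ u z Complex.I

lemma dbar_mul (u v : ℂ → ℂ) (z : ℂ) (hu : DifferentiableAt ℝ u z) (hv : DifferentiableAt ℝ v z) :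
    dbar (fun z => u z * v z) z = u z * dbar v z + v z * dbar u z := by
  unfold dbar
  rw [fderiv_fun_mul hu hv]
  simp
  ring

/-- regularised quotient -/
def qfun (G H : ℂ → ℂ) (η : ℝ) (z : ℂ) : ℂ :=
  H z * (starRingEnd ℂ) (G z) / (G z * (starRingEnd ℂ) (G z) + (η:ℂ) ^ 2)

lemma qden (w : ℂ) (η : ℝ) : w * (starRingEnd ℂ) w + (η:ℂ) ^ 2 = ((‖w‖ ^ 2 + η ^ 2 : ℝ) : ℂ) := by
  rw [Complex.mul_conj, Complex.normSq_eq_norm_sq]; push_cast; ring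

lemma qden_ne (w : ℂ) (η : ℝ) (hη : 0 < η) : w * (starRingEnd ℂ) w + (η:ℂ) ^ 2 ≠ 0 := by
  rw [qden]; 
  have : 0 < ‖w‖ ^ 2 + η ^ 2 := by positivity
  exact_mod_cast this.ne'

lemma qfun_contDiff (G H : ℂ → ℂ) (η : ℝ) (hη : 0 < η) (hG : Differentiable ℂ G)
    (hH : Differentiable ℂ H) {n : ℕ∞} : ContDiff ℝ n (qfun G H η) := by
  have h1 : ContDiff ℝ n G := (hG.contDiff (n := n)).restrict_scalars ℝ
  have h2 : ContDiff ℝ n H := (hH.contDiff (n := n)).restrict_scalars ℝ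
  have h3 : ContDiff ℝ n (fun z => (starRingEnd ℂ) (G z)) :=
    (Complex.conjCLE.contDiff (n := n)).comp h1
  have h4 : ContDiff ℝ n (fun z => G z * (starRingEnd ℂ) (G z) + (η:ℂ) ^ 2) :=
    (h1.mul h3).add contDiff_const
  have h5 := h4.inv (fun z => qden_ne _ _ hη)
  have h6 := (h2.mul h3).mul h5
  have e : qfun G H η = fun x => H x * (starRingEnd ℂ) (G x) *
      (fun z => G z * (starRingEnd ℂ) (G z) + (η:ℂ) ^ 2)⁻¹ x := by
    ext z
    simp only [qfun, div_eq_mul_inv]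
    rfl
  rw [e]; exact h6

lemma qfun_dbar (G H : ℂ → ℂ) (η : ℝ) (hη : 0 < η) (hG : Differentiable ℂ G)
    (hH : Differentiable ℂ H) (z : ℂ) :
    dbar (qfun G H η) z = 2 * H z * η ^ 2 * (starRingEnd ℂ) (deriv G z) /
      (G z * (starRingEnd ℂ) (G z) + (η:ℂ) ^ 2) ^ 2 := by
  have hG1 := (hG z).hasDerivAt.hasFDerivAt.restrictScalars ℝ
  have hH1 := (hH z).hasDerivAt.hasFDerivAt.restrictScalars ℝ
  have hGc : HasFDerivAt (fun z => (starRingEnd ℂ) (G z)) _ z :=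
    (Complex.conjCLE.hasFDerivAt (x := G z)).comp z hG1
  have hN := hH1.mul hGc
  have hD := (hG1.mul hGc).add_const ((η:ℂ)^2)
  have hne := qden_ne (G z) η hη
  have hinv := (hasDerivAt_inv hne).hasFDerivAt.restrictScalars ℝ
  have hDi := hinv.comp z hD
  have hQ := hN.mul hDi
  have hQ' : HasFDerivAt (qfun G H η) _ z := hQ
  unfold dbar
  rw [hQ'.fderiv]
  simp
  field_simp
  ring_nf
  simp [Complex.I_sq]
  ring

lemma dbar_ibp (u k : ℂ → ℂ) (hu : ContDiff ℝ 1 u) (hk : ContDiff ℝ 1 k)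
    (hc : HasCompactSupport u) :
    ∫ z, dbar u z * k z = - ∫ z, u z * dbar k z := by
  have cu := hu.continuous_fderiv (by norm_num)
  have ck := hk.continuous_fderiv (by norm_num)
  have hcf : ∀ v, HasCompactSupport (fun z => fderiv ℝ u z v) := fun v => hc.fderiv_apply (𝕜 := ℝ) v
  have i1 : ∀ v, Integrable (fun z => fderiv ℝ u z v * k z) := fun v =>
    ((by fun_prop : Continuous (fun z => fderiv ℝ u z v)).mul hk.continuous).integrable_of_hasCompactSupport
      ((hcf v).mul_right)
  have i2 : ∀ v, Integrable (fun z => u z * fderiv ℝ k z v) := fun v =>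
    (hu.continuous.mul (by fun_prop : Continuous (fun z => fderiv ℝ k z v))).integrable_of_hasCompactSupport
      (hc.mul_right)
  have i3 : Integrable (fun z => u z * k z) :=
    (hu.continuous.mul hk.continuous).integrable_of_hasCompactSupport (hc.mul_right)
  have key : ∀ v, ∫ z, u z * fderiv ℝ k z v = - ∫ z, fderiv ℝ u z v * k z := fun v =>
    integral_mul_fderiv_eq_neg_fderiv_mul_of_integrable (i1 v) (i2 v) i3
      (fun x _ => hu.differentiable (by norm_num) x) (fun x _ => hk.differentiable (by norm_num) x)
  have e1 : ∫ z, dbar u z * k z = (∫ z, fderiv ℝ u z 1 * k z)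
      + Complex.I * ∫ z, fderiv ℝ u z Complex.I * k z := by
    rw [← integral_const_mul, ← integral_add (i1 1) ((i1 _).const_mul _)]
    congr 1; ext z; unfold dbar; ring
  have e2 : ∫ z, u z * dbar k z = (∫ z, u z * fderiv ℝ k z 1)
      + Complex.I * ∫ z, u z * fderiv ℝ k z Complex.I := by
    rw [← integral_const_mul, ← integral_add (i2 1) ((i2 _).const_mul _)]
    congr 1; ext z; unfold dbar; ring
  rw [e1, e2, key, key]; ring

def phi0 (x : ℂ) : ℝ := 2 / (1 + ‖x‖ ^ 2) ^ 2

lemma phi0_pos (x : ℂ) : 0 < phi0 x := by unfold phi0; positivity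

lemma phi0_cont : Continuous phi0 := by
  unfold phi0
  apply Continuous.div (by fun_prop) (by fun_prop)
  intro x; positivity

lemma phi0_integrable : Integrable phi0 := by
  have h := integrable_one_add_norm (E := ℂ) (μ := volume) (r := 4) (by simp; norm_num)
  refine (h.const_mul 8).mono' phi0_cont.aestronglyMeasurable (ae_of_all _ fun x => ?_)
  rw [Real.norm_of_nonneg (phi0_pos x).le, Real.rpow_neg (by positivity)]
  unfold phi0
  rw [← div_eq_mul_inv, div_le_div_iff₀ (by positivity) (by positivity)]
  have : (1 + ‖x‖) ^ (4:ℝ) = (1 + ‖x‖) ^ 4 := by exact_mod_cast Real.rpow_natCast (1 + ‖x‖) 4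
  rw [this]
  have h1 : (1 + ‖x‖) ^ 2 ≤ 2 * (1 + ‖x‖ ^ 2) := by nlinarith [sq_nonneg (1 - ‖x‖)]
  have h2 : ((1 + ‖x‖) ^ 2)^2 ≤ (2 * (1 + ‖x‖ ^ 2)) ^ 2 := by gcongr
  nlinarith

def kap : ℝ := ∫ x, phi0 x

lemma kap_pos : 0 < kap := by
  unfold kap
  rw [integral_pos_iff_support_of_nonneg (fun x => (phi0_pos x).le) phi0_integrable]
  have : Function.support phi0 = univ := by
    ext x; simp [(phi0_pos x).ne']
  rw [this]; simp

lemma inv_sub_integrable (d : ℂ → ℂ) (hd : Continuous d) (hc : HasCompactSupport d) (z : ℂ) :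
    Integrable (fun w => ‖d w‖ * ‖w - z‖⁻¹) := by
  have hl : LocallyIntegrable (fun w : ℂ => ‖w‖⁻¹) := by
    apply locallyIntegrable_of_norm_le_rpow (α := 1) (C := 1) (by simp) (by simp)
    · refine ae_of_all _ fun x => ?_
      simp [Real.rpow_neg_one]
    · exact (measurable_norm.inv).aestronglyMeasurable
  have h1 := hl.integrable_smul_left_of_hasCompactSupport (g := fun w => ‖d (w + z)‖)
    (by fun_prop) ((hc.comp_homeomorph (Homeomorph.addRight z)).norm)
  have h2 := h1.comp_sub_right z
  simpa using h2

/-- Cauchy-Pompeiu formula -/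
lemma cauchy_pompeiu (u : ℂ → ℂ) (hu : ContDiff ℝ 1 u) (hc : HasCompactSupport u) (z : ℂ) :
    ∫ w, dbar u w * (w - z)⁻¹ = - (kap * u z) := by
  have cu := hu.continuous_fderiv (by norm_num)
  have hdc : Continuous (dbar u) := by unfold dbar; fun_prop
  have hds : HasCompactSupport (dbar u) := by
    unfold dbar
    exact (hc.fderiv_apply (𝕜 := ℝ) 1).add ((hc.fderiv_apply (𝕜 := ℝ) Complex.I).mul_left)
  set k : ℝ → ℂ → ℂ := fun s => qfun (fun w => w - z) (fun _ => 1) s with hk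
  have hdz : deriv (fun w : ℂ => w - z) = fun _ => 1 := by ext w; simp
  have lim1 : Tendsto (fun c : ℝ => ∫ w, dbar u w * k c⁻¹ w) atTop
      (nhds (∫ w, dbar u w * (w - z)⁻¹)) := by
    apply tendsto_integral_filter_of_dominated_convergence (fun w => ‖dbar u w‖ * ‖w - z‖⁻¹)
    · filter_upwards [eventually_gt_atTop 0] with c hc0
      exact (hdc.mul (qfun_contDiff (n := 0) _ _ _ (inv_pos.2 hc0) (by fun_prop)
        (by fun_prop)).continuous).aestronglyMeasurable
    · filter_upwards [eventually_gt_atTop 0] with c hc0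
      refine ae_of_all _ fun w => ?_
      rw [norm_mul]
      gcongr
      simp only [hk, qfun, qden, norm_mul, norm_div, Complex.norm_real, one_mul, RCLike.norm_conj]
      rw [Real.norm_of_nonneg (by positivity)]
      rcases eq_or_ne (w - z) 0 with h | h
      · simp [h]
      · have h0 : 0 < ‖w - z‖ := norm_pos_iff.2 h
        rw [div_le_iff₀ (by positivity)]
        have : ‖w - z‖⁻¹ * (‖w - z‖ ^ 2 + c⁻¹ ^ 2) = ‖w - z‖ + ‖w - z‖⁻¹ * c⁻¹ ^ 2 := by
          field_simp
        rw [this]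
        have : 0 ≤ ‖w - z‖⁻¹ * c⁻¹ ^ 2 := by positivity
        linarith
    · exact inv_sub_integrable _ hdc hds z
    · have : ∀ᵐ w : ℂ, w ≠ z := by
        simp [ae_iff]
      filter_upwards [this] with w hw
      apply Tendsto.const_mul
      have hwz : w - z ≠ 0 := sub_ne_zero.2 hw
      have hcz : (starRingEnd ℂ) (w - z) ≠ 0 := (map_ne_zero _).2 hwz
      have e : (w - z)⁻¹ = 1 * (starRingEnd ℂ) (w - z) /
          ((w - z) * (starRingEnd ℂ) (w - z) + ((0:ℝ):ℂ) ^ 2) := by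
        rw [Complex.ofReal_zero, zero_pow two_ne_zero, add_zero, one_mul, div_mul_cancel_right₀ hcz]
      rw [e]
      simp only [hk, qfun]
      apply Tendsto.div tendsto_const_nhds
      · apply Tendsto.add tendsto_const_nhds
        apply Tendsto.pow
        exact (Complex.continuous_ofReal.tendsto 0).comp tendsto_inv_atTop_zero
      · rw [Complex.ofReal_zero, zero_pow two_ne_zero, add_zero]
        exact mul_ne_zero hwz hcz
  have lim2 : Tendsto (fun c : ℝ => ∫ w, dbar u w * k c⁻¹ w) atTop (nhds (- (kap * u z))) := by
    have hp := tendsto_integral_comp_smul_smul_of_integrable' (μ := (volume : Measure ℂ))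
      (φ := fun x => kap⁻¹ * phi0 x) (fun x => mul_nonneg (inv_nonneg.2 kap_pos.le) (phi0_pos x).le)
      (by rw [integral_const_mul]; exact inv_mul_cancel₀ kap_pos.ne')
      (by
        have hb : ∀ x : ℂ, ‖x‖ ^ Module.finrank ℝ ℂ * (kap⁻¹ * phi0 x) ≤ 2 * kap⁻¹ * (‖x‖ ^ 2)⁻¹ := by
          intro x
          have := kap_pos
          unfold phi0
          simp only [Complex.finrank_real_complex]
          rcases eq_or_ne x 0 with h | h
          · simp [h]
          have h0 : 0 < ‖x‖ := norm_pos_iff.2 h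
          rw [show ‖x‖ ^ 2 * (kap⁻¹ * (2 / (1 + ‖x‖ ^ 2) ^ 2)) = 2 * kap⁻¹ * (‖x‖ ^ 2 / (1 + ‖x‖ ^ 2) ^ 2) by ring]
          gcongr
          rw [div_le_iff₀ (by positivity), ← div_eq_inv_mul, le_div_iff₀ (by positivity)]
          nlinarith [sq_nonneg (‖x‖)]
        refine squeeze_zero (fun x => ?_) hb ?_
        · exact mul_nonneg (by positivity) (mul_nonneg (inv_nonneg.2 kap_pos.le) (phi0_pos x).le)
        · have : Tendsto (fun x : ℂ => (‖x‖ ^ 2)⁻¹) (Bornology.cobounded ℂ) (nhds 0) := by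
            apply Tendsto.comp tendsto_inv_atTop_zero
            exact (tendsto_pow_atTop (by norm_num)).comp tendsto_norm_cobounded_atTop
          simpa using this.const_mul (2 * kap⁻¹))
      (g := u) (x₀ := z) (hu.continuous.integrable_of_hasCompactSupport hc) hu.continuous.continuousAt
    have h2 := (hp.const_mul ((kap:ℂ))).neg
    refine h2.congr' ?_
    filter_upwards [eventually_gt_atTop 0] with c hc0
    rw [dbar_ibp u (k c⁻¹) hu (qfun_contDiff (n := 1) _ _ _ (inv_pos.2 hc0) (by fun_prop)
        (by fun_prop)) hc, ← integral_const_mul]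
    congr 2
    ext w
    have kp : (kap : ℂ) ≠ 0 := by exact_mod_cast kap_pos.ne'
    rw [qfun_dbar _ _ _ (inv_pos.2 hc0) (by fun_prop) (by fun_prop), qden, hdz]
    unfold phi0
    rw [Complex.real_smul, Complex.finrank_real_complex, norm_smul, norm_sub_rev z w,
      Real.norm_of_nonneg hc0.le]
    have hcC : (c:ℂ) ≠ 0 := by exact_mod_cast hc0.ne'
    have hD : ((‖w - z‖ : ℂ) ^ 2 + (c⁻¹:ℂ) ^ 2) ≠ 0 := by
      have : 0 < ‖w - z‖ ^ 2 + c⁻¹ ^ 2 := by positivity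
      exact_mod_cast this.ne'
    have hE : (1 + ((c:ℂ) * (‖w - z‖ : ℂ)) ^ 2) = c ^ 2 * ((‖w - z‖ : ℂ) ^ 2 + (c⁻¹:ℂ) ^ 2) := by
      field_simp; ring
    push_cast
    rw [hE]
    simp only [map_one]
    field_simp
  exact tendsto_nhds_unique lim1 lim2

/-- twice the conjugate Cauchy-Riemann operator -/
def dzop (u : ℂ → ℂ) (z : ℂ) : ℂ := fderiv ℝ u z 1 - Complex.I * fderiv ℝ u z Complex.I

lemma dzop_ibp (u k : ℂ → ℂ) (hu : ContDiff ℝ 1 u) (hk : ContDiff ℝ 1 k)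
    (hc : HasCompactSupport u) :
    ∫ z, dzop u z * k z = - ∫ z, u z * dzop k z := by
  have cu := hu.continuous_fderiv (by norm_num)
  have ck := hk.continuous_fderiv (by norm_num)
  have hcf : ∀ v, HasCompactSupport (fun z => fderiv ℝ u z v) := fun v => hc.fderiv_apply (𝕜 := ℝ) v
  have i1 : ∀ v, Integrable (fun z => fderiv ℝ u z v * k z) := fun v =>
    ((by fun_prop : Continuous (fun z => fderiv ℝ u z v)).mul hk.continuous).integrable_of_hasCompactSupport
      ((hcf v).mul_right)
  have i2 : ∀ v, Integrable (fun z => u z * fderiv ℝ k z v) := fun v =>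
    (hu.continuous.mul (by fun_prop : Continuous (fun z => fderiv ℝ k z v))).integrable_of_hasCompactSupport
      (hc.mul_right)
  have i3 : Integrable (fun z => u z * k z) :=
    (hu.continuous.mul hk.continuous).integrable_of_hasCompactSupport (hc.mul_right)
  have key : ∀ v, ∫ z, u z * fderiv ℝ k z v = - ∫ z, fderiv ℝ u z v * k z := fun v =>
    integral_mul_fderiv_eq_neg_fderiv_mul_of_integrable (i1 v) (i2 v) i3
      (fun x _ => hu.differentiable (by norm_num) x) (fun x _ => hk.differentiable (by norm_num) x)
  have e1 : ∫ z, dzop u z * k z = (∫ z, fderiv ℝ u z 1 * k z)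
      - Complex.I * ∫ z, fderiv ℝ u z Complex.I * k z := by
    rw [← integral_const_mul, ← integral_sub (i1 1) ((i1 _).const_mul _)]
    congr 1; ext z; unfold dzop; ring
  have e2 : ∫ z, u z * dzop k z = (∫ z, u z * fderiv ℝ k z 1)
      - Complex.I * ∫ z, u z * fderiv ℝ k z Complex.I := by
    rw [← integral_const_mul, ← integral_sub (i2 1) ((i2 _).const_mul _)]
    congr 1; ext z; unfold dzop; ring
  rw [e1, e2, key, key]; ring

def lfun (G : ℂ → ℂ) (η : ℝ) (z : ℂ) : ℂ := ((Real.log (‖G z‖ ^ 2 + η ^ 2) : ℝ) : ℂ)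

lemma lfun_contDiff (G : ℂ → ℂ) (η : ℝ) (hη : 0 < η) (hG : Differentiable ℂ G) {n : ℕ∞} :
    ContDiff ℝ n (lfun G η) := by
  have h1 : ContDiff ℝ n G := (hG.contDiff (n := n)).restrict_scalars ℝ
  have h2 : ContDiff ℝ n (fun z => ‖G z‖ ^ 2 + η ^ 2) := (h1.norm_sq ℝ).add contDiff_const
  exact Complex.ofRealCLM.contDiff.comp (h2.log (fun z => by positivity))

lemma lfun_dzop (G : ℂ → ℂ) (η : ℝ) (hη : 0 < η) (hG : Differentiable ℂ G) (z : ℂ) :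
    dzop (lfun G η) z = 2 * qfun G (deriv G) η z := by
  have hG1 := (hG z).hasDerivAt.hasFDerivAt.restrictScalars ℝ
  have h2 := (hG1.norm_sq).add_const (η ^ 2)
  have h3 := h2.log (by positivity)
  have h4 : HasFDerivAt (lfun G η) _ z := (Complex.ofRealCLM.hasFDerivAt).comp z h3
  unfold dzop
  rw [h4.fderiv]
  unfold qfun
  rw [qden]
  have hne : ((‖G z‖ ^ 2 + η ^ 2 : ℝ) : ℂ) ≠ 0 := by
    have : 0 < ‖G z‖ ^ 2 + η ^ 2 := by positivity
    exact_mod_cast this.ne'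
  generalize (‖G z‖ ^ 2 + η ^ 2 : ℝ) = D at *
  have hD : D ≠ 0 := by exact_mod_cast hne
  simp [Complex.inner]
  field_simp
  apply Complex.ext <;> simp <;> ring

def th1 : ContDiffBump (0:ℂ) := ⟨1/2, 3/4, by norm_num, by norm_num⟩
def th2 : ContDiffBump (0:ℂ) := ⟨3/4, 7/8, by norm_num, by norm_num⟩

def cth (f : ContDiffBump (0:ℂ)) (z : ℂ) : ℂ := ((f z : ℝ) : ℂ)

lemma cth_contDiff (f : ContDiffBump (0:ℂ)) {n : ℕ∞} : ContDiff ℝ n (cth f) :=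
  Complex.ofRealCLM.contDiff.comp f.contDiff

lemma cth_supp (f : ContDiffBump (0:ℂ)) : HasCompactSupport (cth f) := by
  have := f.hasCompactSupport
  exact this.comp_left (g := fun x : ℝ => (x:ℂ)) (by simp)

lemma cth_zero (f : ContDiffBump (0:ℂ)) (z : ℂ) (h : z ∉ Metric.closedBall (0:ℂ) f.rOut) :
    cth f =ᶠ[nhds z] 0 := by
  have : IsOpen ((Metric.closedBall (0:ℂ) f.rOut)ᶜ) := Metric.isClosed_closedBall.isOpen_compl
  filter_upwards [this.mem_nhds h] with w hw
  have : f w = 0 := f.zero_of_le_dist (by simp at hw; simpa using hw.le)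
  simp [cth, this]

lemma dbar_congr {u v : ℂ → ℂ} {z : ℂ} (h : u =ᶠ[nhds z] v) : dbar u z = dbar v z := by
  unfold dbar; rw [h.fderiv_eq]
lemma dzop_congr {u v : ℂ → ℂ} {z : ℂ} (h : u =ᶠ[nhds z] v) : dzop u z = dzop v z := by
  unfold dzop; rw [h.fderiv_eq]

lemma dbar_contDiff {u : ℂ → ℂ} (h : ContDiff ℝ 2 u) : ContDiff ℝ 1 (dbar u) := by
  have h1 : ContDiff ℝ 1 (fderiv ℝ u) := h.fderiv_right (by norm_num)
  unfold dbar
  exact (h1.clm_apply contDiff_const).add (contDiff_const.mul (h1.clm_apply contDiff_const))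

lemma dbar_compact {u : ℂ → ℂ} (hc : HasCompactSupport u) : HasCompactSupport (dbar u) := by
  unfold dbar
  exact (hc.fderiv_apply (𝕜 := ℝ) 1).add ((hc.fderiv_apply (𝕜 := ℝ) Complex.I).mul_left)
lemma dzop_compact {u : ℂ → ℂ} (hc : HasCompactSupport u) : HasCompactSupport (dzop u) := by
  unfold dzop
  exact (hc.fderiv_apply (𝕜 := ℝ) 1).sub ((hc.fderiv_apply (𝕜 := ℝ) Complex.I).mul_left)

lemma dbar_cont {u : ℂ → ℂ} (h : ContDiff ℝ 1 u) : Continuous (dbar u) := by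
  have cu := h.continuous_fderiv (by norm_num)
  unfold dbar; fun_prop
lemma dzop_cont {u : ℂ → ℂ} (h : ContDiff ℝ 1 u) : Continuous (dzop u) := by
  have cu := h.continuous_fderiv (by norm_num)
  unfold dzop; fun_prop

def En (G : ℂ → ℂ) (η : ℝ) (z : ℂ) : ℝ := ‖deriv G z‖ * η / (‖G z‖ ^ 2 + η ^ 2)

lemma En_cont (G : ℂ → ℂ) (η : ℝ) (hη : 0 < η) (hG : Differentiable ℂ G) :
    Continuous (En G η) := by
  have h1 : Continuous (deriv G) := (hG.contDiff (n := 1)).continuous_deriv (by norm_num)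
  have h2 := hG.continuous
  unfold En
  apply Continuous.div (by fun_prop) (by fun_prop)
  intro z; positivity

lemma En_nonneg (G : ℂ → ℂ) (η : ℝ) (hη : 0 < η) (z : ℂ) : 0 ≤ En G η z := by
  unfold En; positivity

lemma energy : ∃ K : ℝ, 0 < K ∧ ∀ (C : ℝ) (G : ℂ → ℂ) (η : ℝ), 1 ≤ C → Differentiable ℂ G →
    0 < η → η ≤ 1 → (∀ z ∈ Metric.ball (0:ℂ) 1, ‖G z‖ ≤ C) →
    ∫ z, th2 z * En G η z ^ 2 ≤ K * (Real.log (C ^ 2 + 1) + 2 * Real.log (1 / η)) := by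
  set T := cth th2 with hT
  have hT2 : ContDiff ℝ 2 T := cth_contDiff th2
  have hT1 : ContDiff ℝ 1 T := cth_contDiff th2
  have hTc := cth_supp th2
  refine ⟨1 + ∫ z, ‖dzop (dbar T) z‖, by positivity, ?_⟩
  intro C G η hC hG hη hη1 hGC
  set B := Real.log (C ^ 2 + 1) + 2 * Real.log (1 / η) with hB
  have hG' : Differentiable ℂ (deriv G) := by
    have := (hG.contDiff (n := 2))
    exact (this.deriv' (n := 1)).differentiable (by norm_num)
  have hlog : 0 ≤ Real.log (1 / η) := Real.log_nonneg ((one_le_div hη).2 hη1)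
  have hB0 : 0 ≤ B := add_nonneg (Real.log_nonneg (by nlinarith)) (by positivity)
  -- main identity
  have hV : ContDiff ℝ 1 (qfun G (deriv G) η) := qfun_contDiff _ _ _ hη hG hG'
  have i1 := dbar_ibp T (qfun G (deriv G) η) hT1 hV hTc
  have i2 := dzop_ibp (dbar T) (lfun G η) (dbar_contDiff hT2) (lfun_contDiff G η hη hG)
    (dbar_compact hTc)
  have e1 : ∫ z, dbar T z * dzop (lfun G η) z = 2 * ∫ z, dbar T z * qfun G (deriv G) η z := by
    rw [← integral_const_mul]; congr 1; ext z; rw [lfun_dzop G η hη hG]; ring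
  have e2 : ∫ z, T z * dbar (qfun G (deriv G) η) z
      = 2 * ((∫ z, th2 z * En G η z ^ 2 : ℝ) : ℂ) := by
    rw [← integral_complex_ofReal, ← integral_const_mul]
    congr 1; ext z
    rw [qfun_dbar _ _ _ hη hG hG', qden]
    simp only [hT, cth, En]
    have : deriv G z * (starRingEnd ℂ) (deriv G z) = ((‖deriv G z‖ ^ 2 : ℝ) : ℂ) := by
      rw [Complex.mul_conj, Complex.normSq_eq_norm_sq]
    push_cast at this ⊢
    rw [show 2 * deriv G z * (η:ℂ) ^ 2 * (starRingEnd ℂ) (deriv G z)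
      = 2 * (η:ℂ)^2 * (deriv G z * (starRingEnd ℂ) (deriv G z)) by ring, this, div_pow]
    ring
  have e3 : (4:ℂ) * ((∫ z, th2 z * En G η z ^ 2 : ℝ) : ℂ) = ∫ z, dzop (dbar T) z * lfun G η z := by
    rw [i2, e1, i1, e2]; ring
  have hnn : 0 ≤ ∫ z, th2 z * En G η z ^ 2 :=
    integral_nonneg fun z => mul_nonneg th2.nonneg (sq_nonneg _)
  have e4 : 4 * (∫ z, th2 z * En G η z ^ 2) ≤ ∫ z, ‖dzop (dbar T) z‖ * B := by
    have : ‖(4:ℂ) * ((∫ z, th2 z * En G η z ^ 2 : ℝ) : ℂ)‖ = 4 * ∫ z, th2 z * En G η z ^ 2 := by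
      rw [norm_mul, Complex.norm_real, Real.norm_of_nonneg hnn]; simp
    rw [← this, e3]
    refine norm_integral_le_of_norm_le ?_ (ae_of_all _ fun z => ?_)
    · apply Integrable.mul_const
      exact ((dzop_cont (dbar_contDiff hT2)).integrable_of_hasCompactSupport
        (dzop_compact (dbar_compact hTc))).norm
    · rw [norm_mul]
      by_cases hz : z ∈ Metric.closedBall (0:ℂ) (7/8)
      · gcongr
        simp only [lfun, Complex.norm_real]
        have hz1 : ‖G z‖ ≤ C := hGC z (Metric.closedBall_subset_ball (by norm_num) hz)
        have hw1 : η ^ 2 ≤ ‖G z‖ ^ 2 + η ^ 2 := by nlinarith [sq_nonneg ‖G z‖]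
        have hw2 : ‖G z‖ ^ 2 + η ^ 2 ≤ C ^ 2 + 1 := by nlinarith [norm_nonneg (G z)]
        have l1 := Real.log_le_log (by positivity) hw1
        have l2 := Real.log_le_log (by positivity) hw2
        rw [Real.log_pow] at l1
        have l3 : Real.log (1 / η) = - Real.log η := by rw [one_div, Real.log_inv]
        have l4 : 0 ≤ Real.log (C ^ 2 + 1) := Real.log_nonneg (by nlinarith)
        rw [Real.norm_eq_abs, abs_le]
        push_cast at l1
        constructor <;> rw [hB] <;> linarith
      · have h0 : ∀ w ∈ (Metric.closedBall (0:ℂ) (7/8))ᶜ, dbar T w = 0 := by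
          intro w hw
          rw [dbar_congr (cth_zero th2 w hw)]; simp [dbar]
        have : dzop (dbar T) z = 0 := by
          have h1 : dbar T =ᶠ[nhds z] 0 := by
            filter_upwards [Metric.isClosed_closedBall.isOpen_compl.mem_nhds hz] with w hw
            exact h0 w hw
          rw [dzop_congr h1]; simp [dzop]
        simp [this]
  rw [integral_mul_const] at e4
  have : 0 ≤ ∫ z, ‖dzop (dbar T) z‖ := by positivity
  nlinarith

/-- The kernel bound: `E/r` splits by the Young inequality. -/
lemma young_split (a E r B : ℝ) (ha : 0 < a) (ha1 : a < 1) (hE : 0 ≤ E) (hr : 0 ≤ r) (hB : 0 < B)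
    (hEB : E ≤ B) : E * r⁻¹ ≤ B ^ a * (E ^ 2 + r ^ (-(2 / (1 + a)))) := by
  have hB' : E ≤ B ^ a * E ^ (1 - a) := by
    rcases hE.eq_or_lt with h | h
    · rw [← h]; positivity
    calc E = E ^ a * E ^ (1 - a) := by rw [← Real.rpow_add h]; simp
      _ ≤ B ^ a * E ^ (1 - a) := by gcongr
  have hpq : (2 / (1 - a)).HolderConjugate (2 / (1 + a)) := by
    rw [Real.holderConjugate_iff]
    constructor
    · rw [lt_div_iff₀ (by linarith)]; linarith
    · field_simp; ring
  have hy := Real.young_inequality_of_nonneg (a := E ^ (1 - a)) (b := r⁻¹) (by positivity)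
    (by positivity) hpq
  have e1 : (E ^ (1 - a)) ^ (2 / (1 - a)) = E ^ 2 := by
    rw [← Real.rpow_mul hE, mul_div_cancel₀ _ (by linarith)]; simp
  have e2 : r⁻¹ ^ (2 / (1 + a)) = r ^ (-(2 / (1 + a))) := by
    rw [Real.inv_rpow hr, Real.rpow_neg hr]
  rw [e1, e2] at hy
  have h1 : E ^ 2 / (2 / (1 - a)) ≤ E ^ 2 := by
    apply div_le_self (sq_nonneg _)
    rw [le_div_iff₀ (by linarith)]; linarith
  have h2 : r ^ (-(2 / (1 + a))) / (2 / (1 + a)) ≤ r ^ (-(2 / (1 + a))) := by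
    apply div_le_self (by positivity)
    rw [le_div_iff₀ (by linarith)]; linarith
  calc E * r⁻¹ ≤ (B ^ a * E ^ (1 - a)) * r⁻¹ := by gcongr
    _ = B ^ a * (E ^ (1 - a) * r⁻¹) := by ring
    _ ≤ _ := by gcongr; linarith

lemma pow_integrable (q : ℝ) (hq : q < 2) :
    IntegrableOn (fun w : ℂ => ‖w‖ ^ (-q)) (Metric.closedBall 0 2) := by
  have hl : LocallyIntegrable (fun w : ℂ => ‖w‖ ^ (-q)) := by
    apply locallyIntegrable_of_norm_le_rpow (α := q) (C := 1) (by simp) (by simpa using hq)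
    · refine ae_of_all _ fun x => ?_
      rw [Real.norm_of_nonneg (by positivity)]; simp
    · exact (measurable_norm.pow_const _).aestronglyMeasurable
  exact hl.integrableOn_isCompact (isCompact_closedBall _ _)

/-- pointwise bound for dbar of the quotient -/
lemma dbarQ_bound (j : ℕ) (hj : 1 ≤ j) (C : ℝ) (hC : 1 ≤ C) (G H : ℂ → ℂ) (η : ℝ) (hη : 0 < η)
    (hη1 : η ≤ 1) (hG : Differentiable ℂ G) (hH : Differentiable ℂ H) (z : ℂ)
    (h : ‖H z‖ ^ (2 * j) ≤ C * (‖G z‖ ^ 2 + η ^ 2) ^ (j + 1)) :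
    ‖dbar (qfun G H η) z‖ ≤ 2 * C * En G η z * η ^ (1 / (j:ℝ)) := by
  have hj0 : (0:ℝ) < j := by exact_mod_cast hj
  set W := ‖G z‖ ^ 2 + η ^ 2 with hW
  have hW0 : 0 < W := by positivity
  have hHb : ‖H z‖ ≤ C * W ^ (1 / 2 + 1 / (2 * (j:ℝ))) := by
    have h1 : ‖H z‖ ^ (2 * j) ≤ (C * W ^ (1 / 2 + 1 / (2 * (j:ℝ)))) ^ (2 * j) := by
      refine h.trans ?_
      rw [mul_pow, ← Real.rpow_natCast (W ^ _), ← Real.rpow_mul hW0.le]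
      have : (1 / 2 + 1 / (2 * (j:ℝ))) * ((2 * j : ℕ) : ℝ) = ((j + 1 : ℕ) : ℝ) := by
        push_cast; field_simp
      rw [this, Real.rpow_natCast]
      gcongr
      exact le_self_pow₀ hC (by omega)
    exact le_of_pow_le_pow_left₀ (by omega) (by positivity) h1
  rw [qfun_dbar _ _ _ hη hG hH, qden, ← hW]
  have e : ‖2 * H z * (η:ℂ) ^ 2 * (starRingEnd ℂ) (deriv G z) / ((W:ℝ):ℂ) ^ 2‖
      = 2 * ‖H z‖ * η ^ 2 * ‖deriv G z‖ / W ^ 2 := by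
    simp only [norm_div, norm_mul, norm_pow, Complex.norm_real, RCLike.norm_conj,
      Real.norm_of_nonneg hη.le, Real.norm_of_nonneg hW0.le]
    simp
  rw [e]
  have hk : ‖H z‖ * η / W ≤ C * η ^ (1 / (j:ℝ)) := by
    rw [div_le_iff₀ hW0]
    have s0 : (0:ℝ) ≤ 1 / 2 - 1 / (2 * (j:ℝ)) := by
      have : 1 / (2 * (j:ℝ)) ≤ 1 / 2 := by
        apply one_div_le_one_div_of_le (by norm_num)
        have : (1:ℝ) ≤ j := by exact_mod_cast hj
        linarith
      linarith
    have s1 : η ^ (1 - 1 / (j:ℝ)) ≤ W ^ (1 / 2 - 1 / (2 * (j:ℝ))) := by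
      have : η ^ (1 - 1 / (j:ℝ)) = (η ^ 2) ^ (1 / 2 - 1 / (2 * (j:ℝ))) := by
        rw [← Real.rpow_natCast η 2, ← Real.rpow_mul hη.le]
        congr 1; push_cast; field_simp
      rw [this]
      apply Real.rpow_le_rpow (by positivity) _ s0
      rw [hW]; nlinarith [sq_nonneg ‖G z‖]
    have s2 : η = η ^ (1 / (j:ℝ)) * η ^ (1 - 1 / (j:ℝ)) := by
      rw [← Real.rpow_add hη]; simp
    have s3 : W = W ^ (1 / 2 + 1 / (2 * (j:ℝ))) * W ^ (1 / 2 - 1 / (2 * (j:ℝ))) := by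
      rw [← Real.rpow_add hW0]; ring_nf; simp
    calc ‖H z‖ * η ≤ (C * W ^ (1 / 2 + 1 / (2 * (j:ℝ)))) * (η ^ (1 / (j:ℝ)) * η ^ (1 - 1 / (j:ℝ))) := by
          rw [← s2]; gcongr
      _ ≤ (C * W ^ (1 / 2 + 1 / (2 * (j:ℝ)))) * (η ^ (1 / (j:ℝ)) * W ^ (1 / 2 - 1 / (2 * (j:ℝ)))) := by
          gcongr
      _ = C * η ^ (1 / (j:ℝ)) * (W ^ (1 / 2 + 1 / (2 * (j:ℝ))) * W ^ (1 / 2 - 1 / (2 * (j:ℝ)))) := by ring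
      _ = C * η ^ (1 / (j:ℝ)) * W := by rw [← s3]
  have : 2 * ‖H z‖ * η ^ 2 * ‖deriv G z‖ / W ^ 2 = 2 * En G η z * (‖H z‖ * η / W) := by
    unfold En; rw [← hW]; field_simp
  rw [this]
  have := En_nonneg G η hη z
  calc 2 * En G η z * (‖H z‖ * η / W) ≤ 2 * En G η z * (C * η ^ (1 / (j:ℝ))) := by gcongr
    _ = _ := by ring

/-- bound for the quotient itself -/
lemma Q_bound (j : ℕ) (hj : 1 ≤ j) (C : ℝ) (hC : 1 ≤ C) (G H : ℂ → ℂ) (η : ℝ) (hη : 0 < η)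
    (hη1 : η ≤ 1) (z : ℂ) (hGz : ‖G z‖ ≤ C)
    (h : ‖H z‖ ^ (2 * j) ≤ C * (‖G z‖ ^ 2 + η ^ 2) ^ (j + 1)) :
    ‖qfun G H η z‖ ≤ C * (C ^ 2 + 1) := by
  set W := ‖G z‖ ^ 2 + η ^ 2 with hW
  have hW0 : 0 < W := by positivity
  have hW1 : W ≤ C ^ 2 + 1 := by nlinarith [norm_nonneg (G z)]
  have e : ‖qfun G H η z‖ = ‖H z‖ * ‖G z‖ / W := by
    unfold qfun
    rw [qden, ← hW]
    simp only [norm_div, norm_mul, Complex.norm_real, RCLike.norm_conj, Real.norm_of_nonneg hW0.le]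
  rw [e]
  have h1 : ‖H z‖ * ‖G z‖ / W ≤ ‖H z‖ / Real.sqrt W := by
    rw [div_le_div_iff₀ hW0 (Real.sqrt_pos.2 hW0), mul_assoc]
    gcongr
    have h2 : ‖G z‖ ≤ Real.sqrt W := Real.le_sqrt_of_sq_le (by rw [hW]; nlinarith)
    nlinarith [Real.mul_self_sqrt hW0.le, Real.sqrt_nonneg W]
  refine h1.trans ?_
  have h3 : (‖H z‖ / Real.sqrt W) ^ (2 * j) ≤ (C * (C ^ 2 + 1)) ^ (2 * j) := by
    rw [div_pow, pow_mul (Real.sqrt W), Real.sq_sqrt hW0.le, div_le_iff₀ (by positivity)]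
    calc _ ≤ C * W ^ (j + 1) := h
      _ = C * W * W ^ j := by ring
      _ ≤ (C * (C ^ 2 + 1)) * W ^ j := by gcongr
      _ ≤ _ := by
        gcongr
        apply le_self_pow₀ _ (by omega)
        nlinarith
  exact le_of_pow_le_pow_left₀ (by omega) (by positivity) h3

lemma th1_le_th2 (w : ℂ) : th1 w ≤ th2 w := by
  by_cases h : w ∈ Metric.closedBall (0:ℂ) (3/4)
  · have : th2 w = 1 := th2.one_of_mem_closedBall h
    rw [this]; exact th1.le_one
  · have : th1 w = 0 := th1.zero_of_le_dist (by
      simp only [Metric.mem_closedBall, not_le] at h; exact h.le)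
    rw [this]; exact th2.nonneg

lemma unit_disc (j : ℕ) (hj : 1 ≤ j) (C : ℝ) (hC : 1 ≤ C) : ∃ C' : ℝ, 0 < C' ∧
    ∀ (G H : ℂ → ℂ) (η : ℝ), 0 < η → η ≤ 1 → Differentiable ℂ G → Differentiable ℂ H →
    (∀ z ∈ Metric.ball (0:ℂ) 1, ‖G z‖ ≤ C) →
    (∀ z ∈ Metric.ball (0:ℂ) 1, ‖H z‖ ^ (2 * j) ≤ C * (‖G z‖ ^ 2 + η ^ 2) ^ (j + 1)) →
    ∃ F : ℂ → ℂ, DifferentiableOn ℂ F (Metric.ball 0 (1/4)) ∧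
      (∀ z ∈ Metric.ball (0:ℂ) (1/4), ‖F z‖ ≤ C') ∧
      ∀ z ∈ Metric.ball (0:ℂ) (1/4), ‖F z - qfun G H η z‖ ≤ C' * η ^ (1 / (2 * (j:ℝ))) := by
  have hj0 : (0:ℝ) < j := by exact_mod_cast hj
  have hj1 : (1:ℝ) ≤ j := by exact_mod_cast hj
  obtain ⟨K, hK, hen⟩ := energy
  set a : ℝ := 1 / (4 * j) with ha
  have ha0 : 0 < a := by positivity
  have ha1 : a < 1 := by rw [ha, div_lt_one (by positivity)]; linarith
  set q : ℝ := 2 / (1 + a) with hq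
  have hq2 : q < 2 := by rw [hq, div_lt_iff₀ (by positivity)]; linarith
  set S := cth th1 with hS
  have hS1 : ContDiff ℝ 1 S := cth_contDiff th1
  have hSc := cth_supp th1
  have hSz : ∀ w, S w ≠ 0 → w ∈ Metric.closedBall (0:ℂ) (3/4) := by
    intro w hw
    by_contra h
    exact hw (cth_zero th1 w h).self_of_nhds
  have hdS0 : ∀ w, dbar S w ≠ 0 → w ∈ Metric.closedBall (0:ℂ) (3/4) := by
    intro w hw
    by_contra h
    apply hw; rw [dbar_congr (cth_zero th1 w h)]; simp [dbar]
  have hdS1 : ∀ w, ‖w‖ < 1/2 → dbar S w = 0 := by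
    intro w hw
    have : S =ᶠ[nhds w] fun _ => 1 := by
      filter_upwards [Metric.isOpen_ball.mem_nhds (show w ∈ Metric.ball (0:ℂ) (1/2) by simpa using hw)]
        with x hx
      have : th1 x = 1 := th1.one_of_mem_closedBall (Metric.ball_subset_closedBall hx)
      simp [hS, cth, this]
    rw [dbar_congr this]; simp [dbar]
  set Iq := ∫ w in Metric.closedBall (0:ℂ) 2, ‖w‖ ^ (-q) with hIq
  have hIq0 : 0 ≤ Iq := integral_nonneg fun w => by positivity
  set J := ∫ w, ‖dbar S w‖ with hJ
  have hJ0 : 0 ≤ J := by positivity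
  set C1 := kap⁻¹ * (C * (C ^ 2 + 1) * 4 * J) with hC1
  set C2 := kap⁻¹ * (2 * C) * ((8 * C) ^ a * (K * (Real.log (C ^ 2 + 1) + 2 * (4 * j)) + Iq)) with hC2
  have hkap := kap_pos
  have hlC : 0 ≤ Real.log (C ^ 2 + 1) := Real.log_nonneg (by nlinarith)
  refine ⟨1 + C1 + C2, by positivity, ?_⟩
  intro G H η hη hη1 hG hH hGC hHC
  set Q := qfun G H η with hQ
  have hQ1 : ContDiff ℝ 1 Q := qfun_contDiff _ _ _ hη hG hH
  have hball : ∀ w, w ∈ Metric.closedBall (0:ℂ) (3/4) → w ∈ Metric.ball (0:ℂ) 1 :=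
    fun w hw => Metric.closedBall_subset_ball (by norm_num) hw
  set p : ℂ → ℂ := fun w => Q w * dbar S w with hp
  have hpc : Continuous p := hQ1.continuous.mul (dbar_cont hS1)
  have hps : HasCompactSupport p := (dbar_compact hSc).mul_left
  have hpi : Integrable p := hpc.integrable_of_hasCompactSupport hps
  have hp0 : ∀ w, ‖w‖ < 1/2 → p w = 0 := fun w hw => by simp [hp, hdS1 w hw]
  have hkb : ∀ z w : ℂ, ‖z‖ < 1/4 → 1/2 ≤ ‖w‖ → 1/4 ≤ ‖w - z‖ := by
    intro z w hz hw
    have := norm_sub_norm_le w z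
    linarith
  set F : ℂ → ℂ := fun z => -(kap⁻¹:ℂ) * ∫ w, p w * (w - z)⁻¹ with hF
  refine ⟨F, ?_, ?_, ?_⟩
  · -- holomorphy
    intro z0 hz0
    apply DifferentiableAt.differentiableWithinAt
    apply DifferentiableAt.const_mul
    have hz0' : Metric.ball (0:ℂ) (1/4) ∈ nhds z0 := Metric.isOpen_ball.mem_nhds hz0
    have key := hasDerivAt_integral_of_dominated_loc_of_deriv_le (μ := volume) (𝕜 := ℂ)
      (F := fun z w => p w * (w - z)⁻¹) (F' := fun z w => p w * ((w - z) ^ 2)⁻¹) (x₀ := z0)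
      (s := Metric.ball (0:ℂ) (1/4)) (bound := fun w => ‖p w‖ * 16) hz0' ?_ ?_ ?_ ?_ ?_ ?_
    · exact key.2.differentiableAt
    · refine Eventually.of_forall fun z => ?_
      exact hpc.aestronglyMeasurable.mul
        ((measurable_id.sub_const z).inv.aestronglyMeasurable)
    · refine (hpi.norm.mul_const 4).mono' (hpc.aestronglyMeasurable.mul
        ((measurable_id.sub_const z0).inv.aestronglyMeasurable)) (ae_of_all _ fun w => ?_)
      rw [norm_mul, norm_inv]
      by_cases hw : ‖w‖ < 1/2
      · simp [hp0 w hw]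
      · have := hkb z0 w (by simpa using hz0) (not_lt.1 hw)
        gcongr
        rw [inv_le_comm₀ (by linarith) (by norm_num)]; linarith
    · exact hpc.aestronglyMeasurable.mul
        (((measurable_id.sub_const z0).pow_const 2).inv.aestronglyMeasurable)
    · refine ae_of_all _ fun w z hz => ?_
      rw [norm_mul, norm_inv, norm_pow]
      by_cases hw : ‖w‖ < 1/2
      · simp [hp0 w hw]
      · have := hkb z w (by simpa using hz) (not_lt.1 hw)
        gcongr
        rw [inv_le_comm₀ (by positivity) (by norm_num)]; nlinarith
    · exact hpi.norm.mul_const 16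
    · refine ae_of_all _ fun w z hz => ?_
      by_cases hw : ‖w‖ < 1/2
      · simp only [hp0 w hw, zero_mul]; exact hasDerivAt_const _ _
      · have h1 := hkb z w (by simpa using hz) (not_lt.1 hw)
        have h2 : w - z ≠ 0 := norm_pos_iff.1 (by linarith)
        have h3 := (((hasDerivAt_id z).const_sub w).inv h2).const_mul (p w)
        have e3 : p w * (- -1 / (w - id z) ^ 2) = p w * ((w - z) ^ 2)⁻¹ := by
          rw [neg_neg, one_div]; rfl
        rw [e3] at h3
        exact h3
  · -- bound
    intro z hz
    have : ‖∫ w, p w * (w - z)⁻¹‖ ≤ ∫ w, C * (C ^ 2 + 1) * 4 * ‖dbar S w‖ := by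
      apply norm_integral_le_of_norm_le
      · exact (((dbar_cont hS1).integrable_of_hasCompactSupport (dbar_compact hSc)).norm).const_mul _
      · refine ae_of_all _ fun w => ?_
        by_cases hw : dbar S w = 0
        · simp [hp, hw]
        have hw1 := hdS0 w hw
        have hw2 : 1/2 ≤ ‖w‖ := by
          by_contra h
          exact hw (hdS1 w (not_le.1 h))
        have h1 := hkb z w (by simpa using hz) hw2
        have h2 := Q_bound j hj C hC G H η hη hη1 w (hGC w (hball w hw1)) (hHC w (hball w hw1))
        rw [norm_mul, norm_mul, norm_inv]
        have h3 : ‖w - z‖⁻¹ ≤ 4 := by rw [inv_le_comm₀ (by linarith) (by norm_num)]; linarith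
        calc ‖Q w‖ * ‖dbar S w‖ * ‖w - z‖⁻¹ ≤ (C * (C ^ 2 + 1)) * ‖dbar S w‖ * 4 := by gcongr
          _ = _ := by ring
    rw [integral_const_mul] at this
    have h2 : ‖F z‖ ≤ C1 := by
      simp only [hF, norm_mul, norm_neg, norm_inv, Complex.norm_real, Real.norm_of_nonneg hkap.le]
      rw [hC1]; gcongr
    have : 0 ≤ C2 := by positivity
    linarith
  · -- approximation
    intro z hz
    have hcp := cauchy_pompeiu (fun w => S w * Q w) (hS1.mul hQ1) (hSc.mul_right) z
    have hSone : S z = 1 := by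
      have : th1 z = 1 := th1.one_of_mem_closedBall (by
        simp only [Metric.mem_ball] at hz
        simp only [Metric.mem_closedBall]; show dist z 0 ≤ 1/2; linarith)
      simp [hS, cth, this]
    have hdSQ : ∀ w, dbar (fun w => S w * Q w) w * (w - z)⁻¹
        = S w * dbar Q w * (w - z)⁻¹ + p w * (w - z)⁻¹ := by
      intro w
      rw [dbar_mul _ _ _ (hS1.differentiable (by norm_num) w) (hQ1.differentiable (by norm_num) w)]
      simp only [hp]; ring
    have hc1 : Continuous (fun w => S w * dbar Q w) := hS1.continuous.mul (dbar_cont hQ1)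
    have hs1 : HasCompactSupport (fun w => S w * dbar Q w) := hSc.mul_right
    have hi : ∀ d : ℂ → ℂ, Continuous d → HasCompactSupport d →
        Integrable (fun w => d w * (w - z)⁻¹) := by
      intro d hd hdc
      refine (inv_sub_integrable d hd hdc z).mono' (hd.aestronglyMeasurable.mul
        ((measurable_id.sub_const z).inv.aestronglyMeasurable)) (ae_of_all _ fun w => ?_)
      rw [norm_mul, norm_inv]
    simp_rw [hdSQ] at hcp
    rw [integral_add (hi _ hc1 hs1) (hi _ hpc hps), hSone, one_mul] at hcp
    have hkC : (kap:ℂ) ≠ 0 := by exact_mod_cast hkap.ne'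
    have hdiff : F z - Q z = (kap⁻¹:ℂ) * ∫ w, S w * dbar Q w * (w - z)⁻¹ := by
      have : Q z = -(kap⁻¹:ℂ) * ((∫ w, S w * dbar Q w * (w - z)⁻¹) + ∫ w, p w * (w - z)⁻¹) := by
        rw [hcp]; field_simp
      rw [this]; simp only [hF]; ring
    have hlogη : Real.log (1 / η) ≤ (4 * j) * η ^ (-a) := by
      have := Real.log_le_rpow_div (x := 1 / η) (by positivity) ha0
      rw [one_div, Real.inv_rpow hη.le, ← Real.rpow_neg hη.le] at this
      rw [one_div]
      refine this.trans (le_of_eq ?_)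
      rw [ha]; field_simp
    have hη_a : 1 ≤ η ^ (-a) := Real.one_le_rpow_of_pos_of_le_one_of_nonpos hη hη1 (by linarith)
    set B := 8 * C / η with hB
    have hB0 : 0 < B := by positivity
    have hEi : Integrable (fun w => th2 w * En G η w ^ 2) :=
      (th2.continuous.mul ((En_cont G η hη hG).pow 2)).integrable_of_hasCompactSupport
        th2.hasCompactSupport.mul_right
    have hIi : Integrable (fun w => (Metric.closedBall (0:ℂ) 2).indicator (fun w => ‖w‖ ^ (-q)) (w - z)) :=
      ((pow_integrable q hq2).integrable_indicator measurableSet_closedBall).comp_sub_right z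
    have hmain : ‖∫ w, S w * dbar Q w * (w - z)⁻¹‖ ≤ ∫ w, (2 * C * η ^ (1 / (j:ℝ)) * B ^ a) *
        (th2 w * En G η w ^ 2 +
          (Metric.closedBall (0:ℂ) 2).indicator (fun w => ‖w‖ ^ (-q)) (w - z)) := by
      apply norm_integral_le_of_norm_le
      · exact (hEi.add hIi).const_mul _
      · refine ae_of_all _ fun w => ?_
        have hind : 0 ≤ (Metric.closedBall (0:ℂ) 2).indicator (fun w => ‖w‖ ^ (-q)) (w - z) :=
          indicator_nonneg (fun w _ => by positivity) _
        have hth2 : 0 ≤ th2 w := th2.nonneg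
        by_cases hw : S w = 0
        · simp only [hw, zero_mul, norm_zero]
          positivity
        have hw1 := hSz w hw
        have hwn : ‖w‖ ≤ 3/4 := by simpa using hw1
        have hzn : ‖z‖ < 1/4 := by simpa using hz
        have b1 := dbarQ_bound j hj C hC G H η hη hη1 hG hH w (hHC w (hball w hw1))
        have t2 : th2 w = 1 := th2.one_of_mem_closedBall hw1
        have i2 : (Metric.closedBall (0:ℂ) 2).indicator (fun w => ‖w‖ ^ (-q)) (w - z)
            = ‖w - z‖ ^ (-q) := by
          apply indicator_of_mem
          simp only [Metric.mem_closedBall, dist_zero_right]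
          have := norm_sub_le w z
          linarith
        have hSn : ‖S w‖ ≤ 1 := by
          simp only [hS, cth, Complex.norm_real, Real.norm_of_nonneg th1.nonneg]
          exact th1.le_one
        have hG' : ‖deriv G w‖ ≤ 8 * C := by
          have := Complex.norm_deriv_le_of_forall_mem_sphere_norm_le (f := G) (c := w) (R := 1/8) (C := C)
            (by norm_num) hG.diffContOnCl (fun x hx => hGC x (by
              simp only [mem_sphere_iff_norm] at hx
              simp only [Metric.mem_ball, dist_zero_right]
              have := norm_sub_norm_le x w
              linarith))
          refine this.trans (le_of_eq (by ring))
        have hEB : En G η w ≤ B := by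
          unfold En
          rw [hB, div_le_div_iff₀ (by positivity) hη]
          have : η * η ≤ ‖G w‖ ^ 2 + η ^ 2 := by nlinarith [sq_nonneg ‖G w‖]
          calc ‖deriv G w‖ * η * η = ‖deriv G w‖ * (η * η) := by ring
            _ ≤ (8 * C) * (‖G w‖ ^ 2 + η ^ 2) := by gcongr
        have hy := young_split a (En G η w) ‖w - z‖ B ha0 ha1 (En_nonneg G η hη w) (norm_nonneg _)
          hB0 hEB
        rw [i2, t2, one_mul, norm_mul, norm_mul, norm_inv]
        have hE0 := En_nonneg G η hη w
        calc ‖S w‖ * ‖dbar Q w‖ * ‖w - z‖⁻¹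
            ≤ 1 * (2 * C * En G η w * η ^ (1 / (j:ℝ))) * ‖w - z‖⁻¹ := by gcongr
          _ = (2 * C * η ^ (1 / (j:ℝ))) * (En G η w * ‖w - z‖⁻¹) := by ring
          _ ≤ (2 * C * η ^ (1 / (j:ℝ))) * (B ^ a * (En G η w ^ 2 + ‖w - z‖ ^ (-(2 / (1 + a))))) := by
            gcongr
          _ = _ := by rw [← hq]; ring
    rw [integral_const_mul, integral_add hEi hIi,
      integral_sub_right_eq_self (fun w => (Metric.closedBall (0:ℂ) 2).indicator (fun w => ‖w‖ ^ (-q)) w),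
      integral_indicator measurableSet_closedBall, ← hIq] at hmain
    have he := hen C G η hC hG hη hη1 hGC
    have hfin : (2 * C * η ^ (1 / (j:ℝ)) * B ^ a) * ((∫ w, th2 w * En G η w ^ 2) + Iq)
        ≤ (2 * C) * ((8 * C) ^ a * (K * (Real.log (C ^ 2 + 1) + 2 * (4 * j)) + Iq))
          * η ^ (1 / (2 * (j:ℝ))) := by
      have hBa : B ^ a = (8 * C) ^ a * η ^ (-a) := by
        rw [hB, Real.div_rpow (by positivity) hη.le, Real.rpow_neg hη.le]; rfl
      have hx : (∫ w, th2 w * En G η w ^ 2) + Iq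
          ≤ (K * (Real.log (C ^ 2 + 1) + 2 * (4 * j)) + Iq) * η ^ (-a) := by
        calc _ ≤ K * (Real.log (C ^ 2 + 1) + 2 * ((4 * j) * η ^ (-a))) + Iq := by
              refine add_le_add (he.trans ?_) le_rfl
              gcongr
          _ ≤ K * (Real.log (C ^ 2 + 1) * η ^ (-a) + 2 * ((4 * j) * η ^ (-a))) + Iq * η ^ (-a) := by
              gcongr
              · exact le_mul_of_one_le_right hlC hη_a
              · exact le_mul_of_one_le_right hIq0 hη_a
          _ = _ := by ring
      have hexp : η ^ (1 / (j:ℝ)) * η ^ (-a) * η ^ (-a) = η ^ (1 / (2 * (j:ℝ))) := by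
        rw [← Real.rpow_add hη, ← Real.rpow_add hη]; congr 1; rw [ha]; field_simp; ring
      calc _ ≤ (2 * C * η ^ (1 / (j:ℝ)) * B ^ a) *
            ((K * (Real.log (C ^ 2 + 1) + 2 * (4 * j)) + Iq) * η ^ (-a)) := by gcongr
        _ = (2 * C) * ((8 * C) ^ a * (K * (Real.log (C ^ 2 + 1) + 2 * (4 * j)) + Iq))
            * (η ^ (1 / (j:ℝ)) * η ^ (-a) * η ^ (-a)) := by rw [hBa]; ring
        _ = _ := by rw [hexp]
    rw [hdiff, norm_mul, norm_inv, Complex.norm_real, Real.norm_of_nonneg hkap.le]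
    calc kap⁻¹ * ‖∫ w, S w * dbar Q w * (w - z)⁻¹‖ ≤ kap⁻¹ * ((2 * C) * ((8 * C) ^ a *
          (K * (Real.log (C ^ 2 + 1) + 2 * (4 * j)) + Iq)) * η ^ (1 / (2 * (j:ℝ)))) := by
          gcongr; exact hmain.trans hfin
      _ = C2 * η ^ (1 / (2 * (j:ℝ))) := by rw [hC2]; ring
      _ ≤ _ := by
        gcongr
        have : 0 ≤ C1 := by positivity
        linarith

lemma pow_sub_bound (x y : ℂ) (M : ℝ) (hM : 1 ≤ M) (hx : ‖x‖ ≤ M) (hy : ‖y‖ ≤ M) (n : ℕ) :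
    ‖x ^ n - y ^ n‖ ≤ n * M ^ n * ‖x - y‖ := by
  induction n with
  | zero => simp
  | succ n ih =>
    have : x ^ (n+1) - y ^ (n+1) = x * (x ^ n - y ^ n) + (x - y) * y ^ n := by ring
    rw [this]
    have h1 : ‖y ^ n‖ ≤ M ^ (n + 1) := by
      rw [norm_pow]
      exact (pow_le_pow_left₀ (norm_nonneg _) hy n).trans (pow_le_pow_right₀ hM (by omega))
    calc _ ≤ ‖x‖ * ‖x ^ n - y ^ n‖ + ‖x - y‖ * ‖y ^ n‖ := by
          refine (norm_add_le _ _).trans ?_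
          rw [norm_mul, norm_mul]
      _ ≤ M * (n * M ^ n * ‖x - y‖) + ‖x - y‖ * M ^ (n + 1) := by gcongr
      _ = _ := by push_cast; ring

lemma real_approx (j : ℕ) (hj : 1 ≤ j) (C0 : ℝ) (hC0 : 1 ≤ C0) (p G H : ℂ) (η : ℝ) (hη : 0 < η)
    (hη1 : η ≤ 1) (hp : ‖p‖ ≤ C0) (hG : ‖G - p ^ j‖ ≤ C0 * η ^ (2 * (j + 1)))
    (hH : ‖H - p ^ (j + 1)‖ ≤ C0 * η ^ (2 * (j + 1))) :
    ‖H * (starRingEnd ℂ) G / (G * (starRingEnd ℂ) G + (η:ℂ) ^ 2) - p‖ ≤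
      (2 * C0 ^ 2 + 2 * (1 + C0 ^ 2)) * η ^ (1 / (2 * (j:ℝ))) := by
  have hj1 : (1:ℝ) ≤ j := by exact_mod_cast hj
  have hj0 : (0:ℝ) < j := by linarith
  set W := ‖G‖ ^ 2 + η ^ 2 with hW
  have hW0 : 0 < W := by positivity
  have hden := qden_ne G η hη
  have e : H * (starRingEnd ℂ) G / (G * (starRingEnd ℂ) G + (η:ℂ) ^ 2) - p
      = ((starRingEnd ℂ) G * ((H - p ^ (j + 1)) - p * (G - p ^ j)) - p * (η:ℂ) ^ 2) /
        (G * (starRingEnd ℂ) G + (η:ℂ) ^ 2) := by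
    rw [div_sub' hden]; congr 1; ring
  rw [e, qden, ← hW, norm_div, Complex.norm_real, Real.norm_of_nonneg hW0.le]
  set s := η ^ (1 / (2 * (j:ℝ))) with hs
  have hηs : η ≤ s := by
    have : η ^ (1:ℝ) ≤ s := by
      apply Real.rpow_le_rpow_of_exponent_ge hη hη1
      rw [div_le_one (by positivity)]; linarith
    simpa using this
  have hδ1 : η ^ (2 * (j + 1)) ≤ η ^ 2 := pow_le_pow_of_le_one hη.le hη1 (by omega)
  -- first part
  have h1 : ‖(starRingEnd ℂ) G * ((H - p ^ (j + 1)) - p * (G - p ^ j))‖ ≤ 2 * C0 ^ 2 * s * W := by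
    rw [norm_mul, RCLike.norm_conj]
    have a1 : ‖(H - p ^ (j + 1)) - p * (G - p ^ j)‖ ≤ 2 * C0 ^ 2 * η ^ 2 := by
      calc _ ≤ ‖H - p ^ (j + 1)‖ + ‖p‖ * ‖G - p ^ j‖ := by
            refine (norm_sub_le _ _).trans ?_; rw [norm_mul]
        _ ≤ C0 * η ^ 2 + C0 * (C0 * η ^ 2) := by
            gcongr
            · exact hH.trans (by gcongr)
            · exact hG.trans (by gcongr)
        _ ≤ C0 ^ 2 * η ^ 2 + C0 * (C0 * η ^ 2) := by gcongr; nlinarith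
        _ = _ := by ring
    have a2 : ‖G‖ * η ≤ W := by rw [hW]; nlinarith [sq_nonneg (‖G‖ - η), sq_nonneg (‖G‖ + η)]
    calc ‖G‖ * ‖(H - p ^ (j + 1)) - p * (G - p ^ j)‖ ≤ ‖G‖ * (2 * C0 ^ 2 * η ^ 2) := by gcongr
      _ = 2 * C0 ^ 2 * η * (‖G‖ * η) := by ring
      _ ≤ 2 * C0 ^ 2 * s * W := by gcongr
  have hpj : ‖p‖ ^ (2 * j) ≤ 2 * (1 + C0 ^ 2) * W := by
    have b1 : ‖p‖ ^ j ≤ ‖G‖ + C0 * η := by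
      have : ‖p ^ j‖ ≤ ‖G‖ + ‖G - p ^ j‖ := by
        have := norm_sub_le G (G - p ^ j); simpa using this
      rw [norm_pow] at this
      refine this.trans ?_
      gcongr
      refine hG.trans ?_
      gcongr
      exact hδ1.trans (by nlinarith)
    calc ‖p‖ ^ (2 * j) = (‖p‖ ^ j) ^ 2 := by rw [← pow_mul, mul_comm]
      _ ≤ (‖G‖ + C0 * η) ^ 2 := by gcongr
      _ ≤ _ := by rw [hW]; nlinarith [sq_nonneg (‖G‖ - C0 * η), sq_nonneg (C0 * ‖G‖), sq_nonneg η,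
          sq_nonneg (‖G‖), sq_nonneg (C0 * η)]
  have hpW : ‖p‖ ≤ 2 * (1 + C0 ^ 2) * W ^ (1 / (2 * (j:ℝ))) := by
    have : ‖p‖ ^ (2 * j) ≤ (2 * (1 + C0 ^ 2) * W ^ (1 / (2 * (j:ℝ)))) ^ (2 * j) := by
      refine hpj.trans ?_
      rw [mul_pow, ← Real.rpow_natCast (W ^ _), ← Real.rpow_mul hW0.le]
      have : 1 / (2 * (j:ℝ)) * ((2 * j : ℕ) : ℝ) = 1 := by push_cast; field_simp
      rw [this, Real.rpow_one]
      gcongr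
      exact le_self_pow₀ (by nlinarith) (by omega)
    exact le_of_pow_le_pow_left₀ (by omega) (by positivity) this
  have h2 : ‖p * (η:ℂ) ^ 2‖ ≤ 2 * (1 + C0 ^ 2) * s * W := by
    rw [norm_mul, norm_pow, Complex.norm_real, Real.norm_of_nonneg hη.le]
    have s0 : (0:ℝ) ≤ 1 - 1 / (2 * (j:ℝ)) := by
      rw [sub_nonneg, div_le_one (by positivity)]; linarith
    have s1 : (η ^ 2) ^ (1 - 1 / (2 * (j:ℝ))) ≤ W ^ (1 - 1 / (2 * (j:ℝ))) := by
      apply Real.rpow_le_rpow (by positivity) _ s0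
      rw [hW]; nlinarith [sq_nonneg ‖G‖]
    have s2 : η ^ 2 = (η ^ 2) ^ (1 / (2 * (j:ℝ))) * (η ^ 2) ^ (1 - 1 / (2 * (j:ℝ))) := by
      rw [← Real.rpow_add (by positivity)]; simp
    have s3 : W = W ^ (1 / (2 * (j:ℝ))) * W ^ (1 - 1 / (2 * (j:ℝ))) := by
      rw [← Real.rpow_add hW0]; simp
    have s4 : (η ^ 2) ^ (1 / (2 * (j:ℝ))) ≤ s := by
      apply Real.rpow_le_rpow (by positivity) (by nlinarith) (by positivity)
    calc ‖p‖ * η ^ 2 ≤ (2 * (1 + C0 ^ 2) * W ^ (1 / (2 * (j:ℝ)))) * ((η ^ 2) ^ (1 / (2 * (j:ℝ))) * (η ^ 2) ^ (1 - 1 / (2 * (j:ℝ)))) := by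
          rw [← s2]; gcongr
      _ ≤ (2 * (1 + C0 ^ 2) * W ^ (1 / (2 * (j:ℝ)))) * (s * W ^ (1 - 1 / (2 * (j:ℝ)))) := by gcongr
      _ = 2 * (1 + C0 ^ 2) * s * (W ^ (1 / (2 * (j:ℝ))) * W ^ (1 - 1 / (2 * (j:ℝ)))) := by ring
      _ = _ := by rw [← s3]
  rw [div_le_iff₀ hW0]
  refine (norm_sub_le _ _).trans ?_
  calc _ ≤ 2 * C0 ^ 2 * s * W + 2 * (1 + C0 ^ 2) * s * W := add_le_add h1 h2
    _ = _ := by ring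

lemma division (j : ℕ) (hj : 1 ≤ j) (C0 : ℝ) (hC0 : 1 ≤ C0) : ∃ C' : ℝ, 1 ≤ C' ∧
    ∀ (p : ℝ → ℂ) (G H : ℂ → ℂ) (ε η : ℝ), 0 < ε → 0 < η → η ≤ 1 →
    Differentiable ℂ G → Differentiable ℂ H →
    (∀ z ∈ Metric.ball (0:ℂ) ε, ‖G z‖ ≤ C0) → (∀ z ∈ Metric.ball (0:ℂ) ε, ‖H z‖ ≤ C0) →
    (∀ t : ℝ, |t| < ε → ‖p t‖ ≤ C0) →
    (∀ t : ℝ, |t| < ε → ‖G t - p t ^ j‖ ≤ C0 * η ^ (2 * (j + 1))) →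
    (∀ t : ℝ, |t| < ε → ‖H t - p t ^ (j + 1)‖ ≤ C0 * η ^ (2 * (j + 1))) →
    ∃ F : ℂ → ℂ, DifferentiableOn ℂ F (Metric.ball 0 (ε/64)) ∧
      (∀ z ∈ Metric.ball (0:ℂ) (ε/64), ‖F z‖ ≤ C') ∧
      ∀ t : ℝ, |t| < ε/64 → ‖F t - p t‖ ≤ C' * η ^ (1 / (2 * (j:ℝ))) := by
  set M := C0 ^ (j + 1) with hM
  have hM1 : 1 ≤ M := one_le_pow₀ hC0
  have hCM : C0 ≤ M := le_self_pow₀ hC0 (by omega)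
  set C1 := 2 * ((j + 1 : ℕ) : ℝ) * M ^ (j + 1) * C0 with hC1
  have hMj : 1 ≤ M ^ (j + 1) := one_le_pow₀ hM1
  have hC1p : 1 ≤ C1 := by
    rw [hC1]
    have h1 : (1:ℝ) ≤ 2 * ((j + 1 : ℕ) : ℝ) := by
      push_cast
      have : (0:ℝ) ≤ j := by positivity
      linarith
    exact one_le_mul_of_one_le_of_one_le (one_le_mul_of_one_le_of_one_le h1 hMj) hC0
  set C2 := 4 * (1 + C1 ^ 2) + C0 with hC2
  obtain ⟨C3, hC3, hA⟩ := unit_disc j hj C2 (by rw [hC2]; nlinarith)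
  refine ⟨C3 + (2 * C0 ^ 2 + 2 * (1 + C0 ^ 2)), by nlinarith, ?_⟩
  intro p G H ε η hε hη hη1 hG hH hGC hHC hp hGp hHp
  set δ := η ^ (2 * (j + 1)) with hδ
  have hδ0 : 0 < δ := by positivity
  have hδ1 : δ ≤ 1 := pow_le_one₀ hη.le hη1
  have hD : ∀ z : ℂ, ‖z‖ ≤ ε / 16 → ‖H z ^ j - G z ^ (j + 1)‖ ≤ C1 * Real.sqrt δ := by
    intro z hz
    have := two_const (fun z => H z ^ j - G z ^ (j + 1)) ε C1 (C1 * δ) hε (by positivity)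
      (by nlinarith) ((hH.pow j).sub (hG.pow (j+1))).differentiableOn ?_ ?_ z hz
    · refine this.trans (le_of_eq ?_)
      rw [← mul_assoc, Real.sqrt_mul (by positivity), Real.sqrt_mul_self (by positivity)]
    · intro w hw
      have b1 : ‖H w ^ j‖ ≤ M ^ (j + 1) := by
        rw [norm_pow]
        exact (pow_le_pow_left₀ (norm_nonneg _) ((hHC w hw).trans hCM) j).trans
          (pow_le_pow_right₀ hM1 (by omega))
      have b2 : ‖G w ^ (j+1)‖ ≤ M ^ (j + 1) := by
        rw [norm_pow]
        exact (pow_le_pow_left₀ (norm_nonneg _) ((hGC w hw).trans hCM) _)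
      refine (norm_sub_le _ _).trans ?_
      calc _ ≤ 2 * 1 * M ^ (j + 1) * 1 := by linarith
        _ ≤ C1 := by
          rw [hC1]; gcongr
          push_cast; have : (0:ℝ) ≤ j := by positivity
          linarith
    · intro t ht
      have htb : (t:ℂ) ∈ Metric.ball (0:ℂ) ε := by simpa using ht
      have hpM : ∀ n ≤ j + 1, ‖p t ^ n‖ ≤ M := by
        intro n hn
        rw [norm_pow]
        exact (pow_le_pow_left₀ (norm_nonneg _) (hp t ht) n).trans (pow_le_pow_right₀ hC0 hn)
      have c1 := pow_sub_bound (H t) (p t ^ (j+1)) M hM1 ((hHC t htb).trans hCM) (hpM _ le_rfl) j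
      have c2 := pow_sub_bound (G t) (p t ^ j) M hM1 ((hGC t htb).trans hCM) (hpM _ (by omega)) (j+1)
      have e : H t ^ j - G t ^ (j + 1) = (H t ^ j - (p t ^ (j+1)) ^ j)
          - (G t ^ (j+1) - (p t ^ j) ^ (j+1)) := by
        rw [← pow_mul, ← pow_mul, mul_comm j (j+1)]; ring
      rw [e]
      calc _ ≤ ‖H t ^ j - (p t ^ (j+1)) ^ j‖ + ‖G t ^ (j+1) - (p t ^ j) ^ (j+1)‖ := norm_sub_le _ _
        _ ≤ (j:ℝ) * M ^ j * (C0 * δ) + ((j + 1 : ℕ) : ℝ) * M ^ (j + 1) * (C0 * δ) := by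
            refine add_le_add (c1.trans ?_) (c2.trans ?_)
            · gcongr; exact hHp t ht
            · gcongr; exact hGp t ht
        _ ≤ ((j + 1 : ℕ) : ℝ) * M ^ (j+1) * (C0 * δ) + ((j + 1 : ℕ) : ℝ) * M ^ (j + 1) * (C0 * δ) := by
            gcongr
            · omega
            · omega
        _ = C1 * δ := by rw [hC1]; ring
  -- rescale
  set c : ℂ := ((ε / 16 : ℝ) : ℂ) with hc
  have hcn : ‖c‖ = ε / 16 := by rw [hc, Complex.norm_real, Real.norm_of_nonneg (by positivity)]
  have hc0 : c ≠ 0 := norm_pos_iff.1 (by rw [hcn]; positivity)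
  have hcz : ∀ z ∈ Metric.ball (0:ℂ) 1, ‖c * z‖ ≤ ε / 16 := by
    intro z hz
    rw [norm_mul, hcn]
    have : ‖z‖ < 1 := by simpa using hz
    nlinarith
  have hcz' : ∀ z ∈ Metric.ball (0:ℂ) 1, c * z ∈ Metric.ball (0:ℂ) ε := by
    intro z hz
    have := hcz z hz
    simp only [Metric.mem_ball, dist_zero_right]; linarith
  obtain ⟨F, hFd, hFb, hFa⟩ := hA (fun z => G (c * z)) (fun z => H (c * z)) η hη hη1
    (by fun_prop) (by fun_prop)
    (fun z hz => (hGC _ (hcz' z hz)).trans (by rw [hC2]; nlinarith [sq_nonneg C1]))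
    (by
      intro z hz
      have d1 := hD _ (hcz z hz)
      set g := G (c * z)
      set h := H (c * z)
      have d2 : ‖h‖ ^ j ≤ ‖g‖ ^ (j + 1) + C1 * Real.sqrt δ := by
        have := norm_sub_norm_le (h ^ j) (g ^ (j + 1))
        rw [norm_pow, norm_pow] at this
        linarith
      have hsq := Real.sq_sqrt hδ0.le
      have d3 : ‖h‖ ^ (2 * j) ≤ 2 * (‖g‖ ^ 2) ^ (j + 1) + 2 * C1 ^ 2 * (η ^ 2) ^ (j + 1) := by
        calc ‖h‖ ^ (2 * j) = (‖h‖ ^ j) ^ 2 := by rw [← pow_mul, mul_comm]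
          _ ≤ (‖g‖ ^ (j + 1) + C1 * Real.sqrt δ) ^ 2 := by gcongr
          _ ≤ 2 * (‖g‖ ^ (j + 1)) ^ 2 + 2 * C1 ^ 2 * Real.sqrt δ ^ 2 := by
              nlinarith [sq_nonneg (‖g‖ ^ (j + 1) - C1 * Real.sqrt δ)]
          _ = _ := by rw [hsq, hδ, ← pow_mul, ← pow_mul, ← pow_mul, mul_comm (j+1) 2]
      have d4 : (‖g‖ ^ 2) ^ (j + 1) ≤ (‖g‖ ^ 2 + η ^ 2) ^ (j + 1) := by
        gcongr; nlinarith
      have d5 : (η ^ 2) ^ (j + 1) ≤ (‖g‖ ^ 2 + η ^ 2) ^ (j + 1) := by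
        gcongr; nlinarith [sq_nonneg ‖g‖]
      refine d3.trans ?_
      calc _ ≤ 2 * (‖g‖ ^ 2 + η ^ 2) ^ (j + 1) + 2 * C1 ^ 2 * (‖g‖ ^ 2 + η ^ 2) ^ (j + 1) := by gcongr
        _ = (2 * (1 + C1 ^ 2)) * (‖g‖ ^ 2 + η ^ 2) ^ (j + 1) := by ring
        _ ≤ C2 * (‖g‖ ^ 2 + η ^ 2) ^ (j + 1) := by
          gcongr; rw [hC2]; nlinarith [sq_nonneg C1])
  have hin : ∀ z ∈ Metric.ball (0:ℂ) (ε/64), c⁻¹ * z ∈ Metric.ball (0:ℂ) (1/4) := by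
    intro z hz
    simp only [Metric.mem_ball, dist_zero_right, norm_mul, norm_inv, hcn] at hz ⊢
    rw [← div_eq_inv_mul, div_lt_iff₀ (by positivity)]; linarith
  refine ⟨fun z => F (c⁻¹ * z), ?_, ?_, ?_⟩
  · exact hFd.comp (by fun_prop) hin
  · intro z hz
    exact (hFb _ (hin z hz)).trans (by nlinarith)
  · intro t ht
    have htb : (t:ℂ) ∈ Metric.ball (0:ℂ) (ε/64) := by simpa using ht
    have ht' : |t| < ε := by linarith
    have f1 := hFa _ (hin _ htb)
    have f2 := real_approx j hj C0 hC0 (p t) (G t) (H t) η hη hη1 (hp t ht') (hGp t ht') (hHp t ht')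
    have e : qfun (fun z => G (c * z)) (fun z => H (c * z)) η (c⁻¹ * t)
        = H t * (starRingEnd ℂ) (G t) / (G t * (starRingEnd ℂ) (G t) + (η:ℂ) ^ 2) := by
      simp only [qfun, mul_inv_cancel_left₀ hc0]
    rw [e] at f1
    have := norm_add_le (F (c⁻¹ * t) - H t * (starRingEnd ℂ) (G t) / (G t * (starRingEnd ℂ) (G t) + (η:ℂ) ^ 2))
      (H t * (starRingEnd ℂ) (G t) / (G t * (starRingEnd ℂ) (G t) + (η:ℂ) ^ 2) - p t)
    rw [sub_add_sub_cancel] at this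
    refine this.trans ((add_le_add f1 f2).trans (le_of_eq (by ring)))

/-- the weight sequences associated with `ω` -/
def Mr (ω : ℝ → ℝ) (ρ : ℝ) (k : ℕ) : ℝ := Real.exp (phiStar ω (ρ * k) / ρ)

lemma Mr_pos (ω : ℝ → ℝ) (ρ : ℝ) (k : ℕ) : 0 < Mr ω ρ k := Real.exp_pos _

lemma log_le_weight {ω : ℝ → ℝ} (hω : IsWeightFunction ω) (c : ℝ) (hc : 0 < c) :
    ∃ R0 : ℝ, 1 ≤ R0 ∧ ∀ R, R0 ≤ R → Real.log R ≤ c * ω R := by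
  have h := hω.2.2.2.2.2.1
  have h1 := h.bound hc
  obtain ⟨R1, hR1⟩ := eventually_atTop.1 h1
  refine ⟨max 1 R1, le_max_left _ _, fun R hR => ?_⟩
  have := hR1 R ((le_max_right _ _).trans hR)
  have hR0 : (0:ℝ) ≤ R := by linarith [le_max_left 1 R1]
  rw [Real.norm_of_nonneg (hω.2.2.1 R hR0)] at this
  exact (le_abs_self _).trans this

lemma weight_le_id {ω : ℝ → ℝ} (hω : IsWeightFunction ω) (c : ℝ) (hc : 0 < c) :
    ∃ R0 : ℝ, 1 ≤ R0 ∧ ∀ R, R0 ≤ R → ω R ≤ c * R := by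
  have h := hω.2.2.2.2.1
  have h1 := h.bound hc
  obtain ⟨R1, hR1⟩ := eventually_atTop.1 h1
  refine ⟨max 1 R1, le_max_left _ _, fun R hR => ?_⟩
  have := hR1 R ((le_max_right _ _).trans hR)
  have hR0 : (0:ℝ) ≤ R := by linarith [le_max_left 1 R1]
  rw [Real.norm_of_nonneg hR0] at this
  exact (le_abs_self _).trans this

lemma phiStar_bdd {ω : ℝ → ℝ} (hω : IsWeightFunction ω) (s : ℝ) (hs : 0 ≤ s) :
    BddAbove ((fun t => s * t - ω (Real.exp t)) '' Ici 0) := by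
  obtain ⟨R0, hR0, h⟩ := log_le_weight hω (1 / (s + 1)) (by positivity)
  refine ⟨s * Real.log R0, ?_⟩
  rintro _ ⟨t, ht, rfl⟩
  have ht0 : (0:ℝ) ≤ t := ht
  have hl : 0 ≤ Real.log R0 := Real.log_nonneg hR0
  have hw : 0 ≤ ω (Real.exp t) := hω.2.2.1 _ (Real.exp_pos t).le
  simp only []
  by_cases hc : R0 ≤ Real.exp t
  · have := h _ hc
    rw [Real.log_exp, div_mul_eq_mul_div, one_mul, le_div_iff₀ (by positivity)] at this
    have : 0 ≤ s * Real.log R0 := by positivity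
    nlinarith
  · have h1 : t ≤ Real.log R0 := by
      rw [← Real.log_exp t]
      exact Real.log_le_log (Real.exp_pos t) (not_le.1 hc).le
    nlinarith

lemma Mr_ge {ω : ℝ → ℝ} (hω : IsWeightFunction ω) (ρ : ℝ) (hρ : 0 < ρ) (k : ℕ) (t : ℝ) (ht : 1 ≤ t) :
    t ^ k * Real.exp (-(ρ⁻¹ * ω t)) ≤ Mr ω ρ k := by
  have ht0 : 0 < t := by linarith
  have h1 : ρ * k * Real.log t - ω t ≤ phiStar ω (ρ * k) := by
    apply le_csSup (phiStar_bdd hω _ (by positivity))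
    exact ⟨Real.log t, Real.log_nonneg ht, by simp only [Real.exp_log ht0]⟩
  have h2 : t ^ k = Real.exp (k * Real.log t) := by
    rw [mul_comm, Real.exp_mul, Real.exp_log ht0, Real.rpow_natCast]
  rw [h2, ← Real.exp_add]
  unfold Mr
  apply Real.exp_le_exp.2
  rw [le_div_iff₀ hρ]
  have : (↑k * Real.log t + -(ρ⁻¹ * ω t)) * ρ = ρ * k * Real.log t - ω t := by field_simp; ring
  linarith

lemma Mr_le {ω : ℝ → ℝ} (ρ : ℝ) (hρ : 0 < ρ) (k : ℕ) (A : ℝ) (hA : 0 < A)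
    (h : ∀ t, 1 ≤ t → t ^ k * Real.exp (-(ρ⁻¹ * ω t)) ≤ A) : Mr ω ρ k ≤ A := by
  unfold Mr
  rw [← Real.le_log_iff_exp_le hA, div_le_iff₀ hρ]
  unfold phiStar
  apply csSup_le (Set.image_nonempty.2 ⟨0, by simp⟩)
  rintro _ ⟨s, hs, rfl⟩
  have := h (Real.exp s) (Real.one_le_exp hs)
  rw [← Real.exp_nat_mul, ← Real.exp_add, ← Real.le_log_iff_exp_le hA] at this
  have h2 : ρ * k * s - ω (Real.exp s) = (↑k * s + -(ρ⁻¹ * ω (Real.exp s))) * ρ := by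
    field_simp; ring
  simp only []
  rw [h2]
  gcongr

lemma Mr_mono {ω : ℝ → ℝ} (hω : IsWeightFunction ω) (ρ ρ' : ℝ) (hρ : 0 < ρ) (h : ρ ≤ ρ') (k : ℕ) :
    Mr ω ρ k ≤ Mr ω ρ' k := by
  apply Mr_le ρ hρ k _ (Mr_pos _ _ _)
  intro t ht
  refine le_trans ?_ (Mr_ge hω ρ' (hρ.trans_le h) k t ht)
  have : 0 ≤ ω t := hω.2.2.1 t (by simp; linarith)
  gcongr

lemma subgrad {φ : ℝ → ℝ} (hφ : ConvexOn ℝ (Ici 0) φ) (hm : MonotoneOn φ (Ici 0)) (S : ℝ)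
    (hS : 0 < S) : ∃ σ : ℝ, 0 ≤ σ ∧ ∀ s, 0 ≤ s → φ S + σ * (s - S) ≤ φ s := by
  have hSi : S ∈ interior (Ici (0:ℝ)) := by simpa using hS
  have left : ∀ s, 0 ≤ s → s < S → slope φ s S ≤ derivWithin φ (Ioi S) S := fun s hs hsS =>
    (hφ.slope_le_leftDeriv_of_mem_interior hs hSi hsS).trans
      (hφ.leftDeriv_le_rightDeriv_of_mem_interior hSi)
  refine ⟨derivWithin φ (Ioi S) S, ?_, ?_⟩
  · refine le_trans ?_ (left 0 le_rfl hS)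
    rw [slope_def_field]
    have := hm (by simp : (0:ℝ) ∈ Ici (0:ℝ)) (by simpa using hS.le : S ∈ Ici (0:ℝ)) hS.le
    exact div_nonneg (by linarith) (by linarith)
  · intro s hs
    rcases lt_trichotomy s S with h | h | h
    · have := left s hs h
      rw [slope_def_field, div_le_iff₀ (by linarith)] at this
      linarith
    · rw [h]; simp
    · have := hφ.rightDeriv_le_slope_of_mem_interior hSi (by exact hs : s ∈ Ici (0:ℝ)) h
      rw [slope_def_field, le_div_iff₀ (by linarith)] at this
      linarith

lemma conc_ratio {ω : ℝ → ℝ} (hω : IsWeightFunction ω) (hconc : ConcaveOn ℝ (Ici 0) ω)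
    (t R : ℝ) (ht : 0 ≤ t) (htR : t ≤ R) (hR : 0 < R) : t / R * ω R ≤ ω t := by
  have h := hconc.2 (Set.mem_Ici.2 (le_refl (0:ℝ))) (Set.mem_Ici.2 hR.le)
    (show 0 ≤ 1 - t / R by rw [sub_nonneg, div_le_one hR]; exact htR)
    (show 0 ≤ t / R by positivity) (by ring)
  simp only [smul_eq_mul, mul_zero, zero_add] at h
  rw [div_mul_cancel₀ _ hR.ne'] at h
  have h0 : 0 ≤ ω 0 := hω.2.2.1 0 (by simp)
  have : 0 ≤ (1 - t / R) * ω 0 := mul_nonneg (by rw [sub_nonneg, div_le_one hR]; exact htR) h0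
  linarith

lemma weight_taylor {ω : ℝ → ℝ} (hω : IsWeightFunction ω) (hconc : ConcaveOn ℝ (Ici 0) ω)
    (ρ : ℝ) (hρ : 0 < ρ) (R : ℝ) (hR : 1 < R) (hwR : 0 < ω R)
    (hlog : Real.log R ≤ ρ⁻¹ / 4 * ω R) (ε : ℝ) (hε : ε = ρ⁻¹ / 4 * ω R / R) :
    ∃ K : ℕ, (∀ k ≤ K, Mr ω ρ k * ε ^ k / k.factorial ≤ (1 / 4) ^ k) ∧
      Mr ω ρ K * (2 * ε) ^ K / K.factorial ≤ Real.exp (-(ρ⁻¹ / 4 * ω R)) := by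
  set μ := ρ⁻¹ with hμ
  have hμ0 : 0 < μ := inv_pos.2 hρ
  have hR0 : 0 < R := by linarith
  have hmono : MonotoneOn (fun t => ω (Real.exp t)) (Ici 0) := fun a _ b _ hab =>
    hω.2.1 (Real.exp_pos a).le (Real.exp_pos b).le (Real.exp_le_exp.2 hab)
  obtain ⟨σ, hσ, hsub⟩ := subgrad hω.2.2.2.2.2.2 hmono (Real.log R) (Real.log_pos hR)
  rw [Real.exp_log hR0] at hsub
  have hsub' : ∀ t, 1 ≤ t → ω R + σ * (Real.log t - Real.log R) ≤ ω t := by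
    intro t ht
    have := hsub (Real.log t) (Real.log_nonneg ht)
    rwa [Real.exp_log (by linarith)] at this
  have hpow : ∀ (k : ℕ) (t : ℝ), 0 < t → t ^ k = Real.exp (k * Real.log t) := by
    intro k t ht0
    rw [mul_comm, Real.exp_mul, Real.exp_log ht0, Real.rpow_natCast]
  set K := ⌊μ * σ⌋₊ with hK
  have hK1 : (K:ℝ) ≤ μ * σ := Nat.floor_le (by positivity)
  have hK2 : μ * σ < K + 1 := Nat.lt_floor_add_one _
  refine ⟨K, ?_, ?_⟩
  · intro k hk
    have hkσ : (k:ℝ) ≤ μ * σ := le_trans (by exact_mod_cast hk) hK1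
    have hfac : (0:ℝ) < k.factorial := by exact_mod_cast k.factorial_pos
    have small : ∀ t, 1 ≤ t → t ≤ R → t ^ k * Real.exp (-(μ * ω t)) ≤ k.factorial * (R / (μ * ω R)) ^ k := by
      intro t ht htR
      have h1 := conc_ratio hω hconc t R (by linarith) htR hR0
      set x := μ * (t / R * ω R) with hx
      have hx0 : 0 ≤ x := by positivity
      have h2 : t = (R / (μ * ω R)) * x := by rw [hx]; field_simp
      have h3 : x ^ k / k.factorial ≤ Real.exp x := Real.pow_div_factorial_le_exp x hx0 k
      have h4 : x ^ k * Real.exp (-x) ≤ k.factorial := by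
        rw [div_le_iff₀ hfac] at h3
        rw [Real.exp_neg, ← div_eq_mul_inv, div_le_iff₀ (Real.exp_pos x)]; linarith
      calc t ^ k * Real.exp (-(μ * ω t)) ≤ t ^ k * Real.exp (-x) := by
            gcongr
            rw [hx]; gcongr
        _ = (R / (μ * ω R)) ^ k * (x ^ k * Real.exp (-x)) := by
            rw [← mul_assoc, ← mul_pow, ← h2]
        _ ≤ (R / (μ * ω R)) ^ k * k.factorial := by gcongr
        _ = _ := by ring
    have hM : Mr ω ρ k ≤ k.factorial * (R / (μ * ω R)) ^ k := by
      apply Mr_le ρ hρ k _ (by positivity)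
      intro t ht
      by_cases htR : t ≤ R
      · exact small t ht htR
      · refine le_trans ?_ (small R hR.le le_rfl)
        rw [hpow k t (by linarith), hpow k R hR0, ← Real.exp_add, ← Real.exp_add]
        apply Real.exp_le_exp.2
        have h1 := hsub' t ht
        have h2 : 0 ≤ Real.log t - Real.log R := by
          rw [sub_nonneg]; exact Real.log_le_log hR0 (not_le.1 htR).le
        have h3 : μ * (ω R + σ * (Real.log t - Real.log R)) ≤ μ * ω t := by gcongr
        have h4 : k * (Real.log t - Real.log R) ≤ μ * σ * (Real.log t - Real.log R) := by gcongr
        nlinarith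
    have hε0 : 0 < ε := by rw [hε]; positivity
    rw [div_le_iff₀ hfac]
    calc Mr ω ρ k * ε ^ k ≤ (k.factorial * (R / (μ * ω R)) ^ k) * ε ^ k := by gcongr
      _ = k.factorial * (R / (μ * ω R) * ε) ^ k := by rw [mul_pow]; ring
      _ = k.factorial * (1 / 4) ^ k := by
        congr 2; rw [hε]; field_simp
      _ = _ := by ring
  · have hfac : (0:ℝ) < K.factorial := by exact_mod_cast K.factorial_pos
    have hM : Mr ω ρ K ≤ R ^ K * (R * Real.exp (-(μ * ω R))) := by
      apply Mr_le ρ hρ K _ (by positivity)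
      intro t ht
      have e1 : R = Real.exp (Real.log R) := (Real.exp_log hR0).symm
      have e2 : R * Real.exp (-(μ * ω R)) = Real.exp (Real.log R + -(μ * ω R)) := by
        rw [Real.exp_add, Real.exp_log hR0]
      rw [e2, hpow K t (by linarith), hpow K R hR0, ← Real.exp_add, ← Real.exp_add]
      apply Real.exp_le_exp.2
      have h1 := hsub' t ht
      have h3 : μ * (ω R + σ * (Real.log t - Real.log R)) ≤ μ * ω t := by gcongr
      have hlt : 0 ≤ Real.log t := Real.log_nonneg ht
      have hlR : 0 ≤ Real.log R := Real.log_nonneg hR.le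
      have h5 : (K - μ * σ) * (Real.log t - Real.log R) ≤ Real.log R := by
        rcases le_total (Real.log t) (Real.log R) with h | h
        · nlinarith
        · nlinarith
      nlinarith
    have hε0 : 0 < ε := by rw [hε]; positivity
    have hx : (2 * ε * R) = μ / 2 * ω R := by rw [hε]; field_simp; ring
    have h6 := Real.pow_div_factorial_le_exp (μ / 2 * ω R) (by positivity) K
    calc Mr ω ρ K * (2 * ε) ^ K / K.factorial
        ≤ (R ^ K * (R * Real.exp (-(μ * ω R)))) * (2 * ε) ^ K / K.factorial := by gcongr
      _ = ((2 * ε * R) ^ K / K.factorial) * (R * Real.exp (-(μ * ω R))) := by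
          rw [mul_pow (2 * ε)]; ring
      _ ≤ Real.exp (μ / 2 * ω R) * (Real.exp (μ / 4 * ω R) * Real.exp (-(μ * ω R))) := by
          rw [hx]
          gcongr
          rw [← Real.log_le_iff_le_exp hR0]; exact hlog
      _ = _ := by
          rw [← Real.exp_add, ← Real.exp_add]; congr 1; ring

lemma line_contDiffAt {E : Type*} [NormedAddCommGroup E] [NormedSpace ℝ E] {f : E → ℂ} {U : Set E}
    (hU : IsOpen U) (hf : ContDiffOn ℝ (⊤ : ℕ∞) f U) (x v : E) (t : ℝ) (ht : x + t • v ∈ U) :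
    ContDiffAt ℝ (⊤ : ℕ∞) (fun s : ℝ => f (x + s • v)) t := by
  have h1 : ContDiffAt ℝ (⊤ : ℕ∞) f (x + t • v) := hf.contDiffAt (hU.mem_nhds ht)
  have h2 : ContDiffAt ℝ (⊤ : ℕ∞) (fun s : ℝ => x + s • v) t := by fun_prop
  exact ContDiffAt.comp (f := fun s : ℝ => x + s • v) (g := f) t h1 h2

lemma line_deriv {E : Type*} [NormedAddCommGroup E] [NormedSpace ℝ E] {f : E → ℂ} {U : Set E}
    (hU : IsOpen U) (hf : ContDiffOn ℝ (⊤ : ℕ∞) f U) (x v : E) (k : ℕ) :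
    ∀ t : ℝ, x + t • v ∈ U →
      iteratedDeriv k (fun s : ℝ => f (x + s • v)) t = iteratedFDeriv ℝ k f (x + t • v) (fun _ => v) := by
  induction k with
  | zero => intro t ht; simp
  | succ k ih =>
    intro t ht
    rw [iteratedDeriv_succ]
    have hc : Continuous (fun s : ℝ => x + s • v) := by fun_prop
    have hev : (iteratedDeriv k (fun s : ℝ => f (x + s • v))) =ᶠ[nhds t]
        fun s => iteratedFDeriv ℝ k f (x + s • v) (fun _ => v) := by
      filter_upwards [hc.continuousAt.preimage_mem_nhds (hU.mem_nhds ht)] with s hs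
      exact ih s hs
    rw [hev.deriv_eq, iteratedFDeriv_succ_apply_left]
    have h1 : ContDiffAt ℝ (⊤ : ℕ∞) f (x + t • v) := hf.contDiffAt (hU.mem_nhds ht)
    have h2 : DifferentiableAt ℝ (iteratedFDeriv ℝ k f) (x + t • v) :=
      h1.differentiableAt_iteratedFDeriv (by exact_mod_cast ENat.coe_lt_top k)
    have h3 : HasDerivAt (fun s : ℝ => x + s • v) v t := by
      simpa using ((hasDerivAt_id t).smul_const v).const_add x
    have h4 : HasDerivAt (fun s : ℝ => iteratedFDeriv ℝ k f (x + s • v))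
        (fderiv ℝ (iteratedFDeriv ℝ k f) (x + t • v) v) t :=
      h2.hasFDerivAt.comp_hasDerivAt t h3
    have h5 := ((ContinuousMultilinearMap.apply ℝ (fun _ : Fin k => E) ℂ (fun _ => v)).hasFDerivAt
      (x := iteratedFDeriv ℝ k f (x + t • v))).comp_hasDerivAt t h4
    exact h5.deriv

lemma taylor_real_pos (u : ℝ → ℂ) (r B : ℝ) (hu : ∀ t : ℝ, |t| < r → ContDiffAt ℝ (⊤ : ℕ∞) u t)
    (K : ℕ) (hB : ∀ t : ℝ, |t| < r → ‖iteratedDeriv K u t‖ ≤ B) (t : ℝ) (ht0 : 0 < t) (ht : |t| < r) :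
    ‖u t - ∑ k ∈ Finset.range K, ((t:ℂ) ^ k / k.factorial) * iteratedDeriv k u 0‖
      ≤ B * (2 * |t|) ^ K / K.factorial := by
  have htr : t < r := lt_of_le_of_lt (le_abs_self t) ht
  have hin : ∀ s ∈ Icc (0:ℝ) t, |s| < r := fun s hs => by
    rw [abs_of_nonneg hs.1]; linarith [hs.2]
  have hB0 : 0 ≤ B := (norm_nonneg _).trans (hB t ht)
  rcases K with _ | n
  · simpa using hB t ht
  have hd : ∀ k, ∀ s ∈ Icc (0:ℝ) t, iteratedDerivWithin k u (Icc 0 t) s = iteratedDeriv k u s := by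
    intro k s hs
    apply iteratedDerivWithin_eq_iteratedDeriv (uniqueDiffOn_Icc ht0) _ hs
    exact (hu s (hin s hs)).of_le (by exact_mod_cast le_top)
  have hcd : ContDiffOn ℝ (n + 1) u (Icc 0 t) := fun s hs =>
    ((hu s (hin s hs)).of_le (by exact_mod_cast le_top)).contDiffWithinAt
  have h := taylor_mean_remainder_bound (f := u) (a := 0) (b := t) (C := B) (x := t) (n := n)
    ht0.le hcd ⟨ht0.le, le_rfl⟩ (fun s hs => by rw [hd _ s hs]; exact hB s (hin s hs))
  rw [taylor_within_apply] at h
  have e1 : ∑ k ∈ Finset.range (n + 1), ((k.factorial : ℝ)⁻¹ * (t - 0) ^ k) • iteratedDerivWithin k u (Icc 0 t) 0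
      = ∑ k ∈ Finset.range (n + 1), ((t:ℂ) ^ k / k.factorial) * iteratedDeriv k u 0 := by
    apply Finset.sum_congr rfl
    intro k _
    rw [hd k 0 ⟨le_rfl, ht0.le⟩, Complex.real_smul]
    push_cast
    rw [sub_zero]; ring
  rw [e1] at h
  refine h.trans ?_
  rw [abs_of_pos ht0, sub_zero, Nat.factorial_succ]
  have hn : ((n:ℝ) + 1) ≤ 2 ^ (n + 1) := by
    have := @Nat.lt_two_pow_self (n+1)
    exact_mod_cast this.le
  have hf : (0:ℝ) < n.factorial := by exact_mod_cast n.factorial_pos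
  push_cast
  rw [div_le_div_iff₀ hf (by positivity), mul_pow]
  have : 0 ≤ B * t ^ (n+1) * n.factorial := by positivity
  nlinarith

lemma taylor_real (u : ℝ → ℂ) (r B : ℝ) (hu : ∀ t : ℝ, |t| < r → ContDiffAt ℝ (⊤ : ℕ∞) u t)
    (K : ℕ) (hB : ∀ t : ℝ, |t| < r → ‖iteratedDeriv K u t‖ ≤ B) (t : ℝ) (ht : |t| < r) :
    ‖u t - ∑ k ∈ Finset.range K, ((t:ℂ) ^ k / k.factorial) * iteratedDeriv k u 0‖
      ≤ B * (2 * |t|) ^ K / K.factorial := by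
  have hB0 : 0 ≤ B := (norm_nonneg _).trans (hB t ht)
  rcases lt_trichotomy t 0 with h | h | h
  · have := taylor_real_pos (fun s => u (-s)) r B
      (fun s hs => ContDiffAt.comp (f := fun s : ℝ => -s) (g := u) s
        (hu _ (by rwa [abs_neg])) (by fun_prop)) K
      (fun s hs => by
        rw [iteratedDeriv_comp_neg, norm_smul]
        simpa using hB (-s) (by rwa [abs_neg])) (-t) (by linarith) (by rwa [abs_neg])
    rw [abs_neg] at this
    simp only [neg_neg] at this
    convert this using 3
    apply Finset.sum_congr rfl
    intro k _
    rw [iteratedDeriv_comp_neg, Complex.real_smul, neg_zero]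
    push_cast
    rw [neg_pow (t:ℂ)]
    have : ((-1:ℂ)^k) * (-1)^k = 1 := by rw [← mul_pow]; simp
    linear_combination (-((t:ℂ) ^ k / k.factorial * iteratedDeriv k u 0)) * this
  · subst h
    rcases K with _ | n
    · simpa using hB 0 ht
    · rw [Finset.sum_range_succ']
      simp
  · exact taylor_real_pos u r B hu K hB t h ht

lemma taylor_approx {ω : ℝ → ℝ} (hω : IsWeightFunction ω) (hconc : ConcaveOn ℝ (Ici 0) ω)
    (ρ : ℝ) (hρ : 0 < ρ) (R : ℝ) (hR : 1 < R) (hwR : 0 < ω R)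
    (hlog : Real.log R ≤ ρ⁻¹ / 4 * ω R) (ε : ℝ) (hε : ε = ρ⁻¹ / 4 * ω R / R)
    (u : ℝ → ℂ) (r A : ℝ) (hA : 0 ≤ A) (hεr : ε ≤ r)
    (hu : ∀ t : ℝ, |t| < r → ContDiffAt ℝ (⊤ : ℕ∞) u t)
    (hM : ∀ k, ∀ t : ℝ, |t| < r → ‖iteratedDeriv k u t‖ ≤ A * Mr ω ρ k) :
    ∃ G : ℂ → ℂ, Differentiable ℂ G ∧ (∀ z ∈ Metric.ball (0:ℂ) ε, ‖G z‖ ≤ 2 * A) ∧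
      ∀ t : ℝ, |t| < ε → ‖G t - u t‖ ≤ A * Real.exp (-(ρ⁻¹ / 4 * ω R)) := by
  obtain ⟨K, hK1, hK2⟩ := weight_taylor hω hconc ρ hρ R hR hwR hlog ε hε
  have hε0 : 0 < ε := by rw [hε]; positivity
  refine ⟨fun z => ∑ k ∈ Finset.range K, (z ^ k / k.factorial) * iteratedDeriv k u 0, by fun_prop, ?_, ?_⟩
  · intro z hz
    rw [mem_ball_zero_iff] at hz
    have hterm : ∀ k ∈ Finset.range K, ‖(z ^ k / k.factorial) * iteratedDeriv k u 0‖ ≤ A * (1/4)^k := by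
      intro k hk
      have hf : (0:ℝ) < k.factorial := by exact_mod_cast k.factorial_pos
      rw [norm_mul, norm_div, norm_pow, Complex.norm_natCast]
      have h1 := hM k 0 (by simp; linarith)
      have h2 := hK1 k (Finset.mem_range.1 hk).le
      have := Mr_pos ω ρ k
      calc ‖z‖ ^ k / k.factorial * ‖iteratedDeriv k u 0‖ ≤ ε ^ k / k.factorial * (A * Mr ω ρ k) := by
            gcongr
        _ = A * (Mr ω ρ k * ε ^ k / k.factorial) := by ring
        _ ≤ _ := by gcongr
    refine (norm_sum_le _ _).trans ((Finset.sum_le_sum hterm).trans ?_)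
    rw [← Finset.mul_sum, mul_comm]
    gcongr
    have : Summable (fun k : ℕ => (1/4:ℝ)^k) := summable_geometric_of_lt_one (by norm_num) (by norm_num)
    refine (this.sum_le_tsum _ (fun k _ => by positivity)).trans ?_
    rw [tsum_geometric_of_lt_one (by norm_num) (by norm_num)]; norm_num
  · intro t ht
    have h := taylor_real u r (A * Mr ω ρ K) hu K (hM K) t (ht.trans_le hεr)
    rw [norm_sub_rev]
    refine h.trans ?_
    have := Mr_pos ω ρ K
    calc A * Mr ω ρ K * (2 * |t|) ^ K / K.factorial ≤ A * Mr ω ρ K * (2 * ε) ^ K / K.factorial := by gcongr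
      _ = A * (Mr ω ρ K * (2 * ε) ^ K / K.factorial) := by ring
      _ ≤ _ := by gcongr

lemma Mr_zero_le {ω : ℝ → ℝ} (hω : IsWeightFunction ω) (ρ : ℝ) (hρ : 0 < ρ) : Mr ω ρ 0 ≤ 1 := by
  apply Mr_le ρ hρ 0 1 one_pos
  intro t ht
  have : 0 ≤ ω t := hω.2.2.1 t (by simp; linarith)
  simp; positivity

/-- approximation property -/
def AP {E : Type*} [NormedAddCommGroup E] [NormedSpace ℝ E] (ω : ℝ → ℝ) (f : E → ℂ)
    (r κ b C R0 : ℝ) : Prop :=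
  ∀ R, R0 ≤ R → 0 < ω R ∧ κ * ω R / R ≤ r ∧ ∀ x ∈ Metric.ball (0:E) r, ∀ v : E, ‖v‖ ≤ 1 →
    ∃ F : ℂ → ℂ, DifferentiableOn ℂ F (Metric.ball 0 (κ * ω R / R)) ∧
      (∀ z ∈ Metric.ball (0:ℂ) (κ * ω R / R), ‖F z‖ ≤ C) ∧
      ∀ t : ℝ, |t| < κ * ω R / R → ‖F t - f (x + t • v)‖ ≤ C * Real.exp (-(b * ω R))

lemma approx_property {E : Type*} [NormedAddCommGroup E] [NormedSpace ℝ E] {ω : ℝ → ℝ}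
    (hω : IsWeightFunction ω) (hconc : ConcaveOn ℝ (Ici 0) ω) (j : ℕ) (hj : 1 ≤ j)
    (ρ : ℝ) (hρ : 0 < ρ) (f : E → ℂ) (r A : ℝ) (hr : 0 < r) (hA : 1 ≤ A)
    (hg : ContDiffOn ℝ (⊤ : ℕ∞) (f ^ j) (Metric.ball 0 (2 * r)))
    (hh : ContDiffOn ℝ (⊤ : ℕ∞) (f ^ (j + 1)) (Metric.ball 0 (2 * r)))
    (hgM : ∀ x ∈ Metric.ball (0:E) (2 * r), ∀ k, ‖iteratedFDeriv ℝ k (f ^ j) x‖ ≤ A * Mr ω ρ k)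
    (hhM : ∀ x ∈ Metric.ball (0:E) (2 * r), ∀ k, ‖iteratedFDeriv ℝ k (f ^ (j + 1)) x‖ ≤ A * Mr ω ρ k) :
    ∃ C R0 : ℝ, 1 ≤ C ∧ 1 < R0 ∧
      AP ω f r (ρ⁻¹ / 256) (ρ⁻¹ / (16 * j * (j + 1))) C R0 := by
  obtain ⟨C', hC', hdiv⟩ := division j hj (2 * A) (by linarith)
  have hμ0 : 0 < ρ⁻¹ := inv_pos.2 hρ
  obtain ⟨R1, hR1, h1⟩ := log_le_weight hω (ρ⁻¹ / 4) (by positivity)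
  obtain ⟨R2, hR2, h2⟩ := weight_le_id hω (4 * ρ * r) (by positivity)
  refine ⟨C', max (max R1 R2) 2, hC', lt_of_lt_of_le (by norm_num) (le_max_right _ _), ?_⟩
  intro R hR
  have hRR1 : R1 ≤ R := (le_max_left _ _).trans ((le_max_left _ _).trans hR)
  have hRR2 : R2 ≤ R := (le_max_right _ _).trans ((le_max_left _ _).trans hR)
  have hR2' : 2 ≤ R := (le_max_right _ _).trans hR
  have hlog := h1 R hRR1
  have hR1' : 1 < R := by linarith
  have hR0 : 0 < R := by linarith
  have hwR : 0 < ω R := by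
    have := Real.log_pos hR1'
    by_contra hc
    have : ρ⁻¹ / 4 * ω R ≤ 0 := mul_nonpos_of_nonneg_of_nonpos (by positivity) (not_lt.1 hc)
    linarith
  set ε := ρ⁻¹ / 4 * ω R / R with hε
  have hε0 : 0 < ε := by positivity
  have hεr : ε ≤ r := by
    rw [hε, div_le_iff₀ hR0]
    have := h2 R hRR2
    calc ρ⁻¹ / 4 * ω R ≤ ρ⁻¹ / 4 * (4 * ρ * r * R) := by gcongr
      _ = r * R := by field_simp
  have hrad : ρ⁻¹ / 256 * ω R / R = ε / 64 := by rw [hε]; ring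
  rw [hrad]
  refine ⟨hwR, by linarith, ?_⟩
  intro x hx v hv
  rw [mem_ball_zero_iff] at hx
  have hin : ∀ t : ℝ, |t| < r → x + t • v ∈ Metric.ball (0:E) (2 * r) := by
    intro t ht
    rw [mem_ball_zero_iff]
    calc ‖x + t • v‖ ≤ ‖x‖ + ‖t • v‖ := norm_add_le _ _
      _ = ‖x‖ + |t| * ‖v‖ := by rw [norm_smul, Real.norm_eq_abs]
      _ ≤ ‖x‖ + |t| * 1 := by gcongr
      _ < 2 * r := by linarith
  have app : ∀ g : E → ℂ, ContDiffOn ℝ (⊤ : ℕ∞) g (Metric.ball 0 (2 * r)) →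
      (∀ x ∈ Metric.ball (0:E) (2 * r), ∀ k, ‖iteratedFDeriv ℝ k g x‖ ≤ A * Mr ω ρ k) →
      ∃ G : ℂ → ℂ, Differentiable ℂ G ∧ (∀ z ∈ Metric.ball (0:ℂ) ε, ‖G z‖ ≤ 2 * A) ∧
      ∀ t : ℝ, |t| < ε → ‖G t - g (x + t • v)‖ ≤ A * Real.exp (-(ρ⁻¹ / 4 * ω R)) := by
    intro g hg hgM
    apply taylor_approx hω hconc ρ hρ R hR1' hwR hlog ε hε (fun t => g (x + t • v)) r A (by linarith) hεr
    · intro t ht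
      exact line_contDiffAt Metric.isOpen_ball hg x v t (hin t ht)
    · intro k t ht
      rw [line_deriv Metric.isOpen_ball hg x v k t (hin t ht)]
      refine le_trans ?_ (hgM _ (hin t ht) k)
      refine (ContinuousMultilinearMap.le_opNorm _ _).trans ?_
      refine mul_le_of_le_one_right (norm_nonneg _) ?_
      simp only [Finset.prod_const]
      exact pow_le_one₀ (norm_nonneg _) hv
  obtain ⟨G, hG, hGb, hGa⟩ := app _ hg hgM
  obtain ⟨H, hH, hHb, hHa⟩ := app _ hh hhM
  have hj0 : (0:ℝ) < j := by exact_mod_cast hj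
  set η := Real.exp (-(ρ⁻¹ / (8 * (j + 1)) * ω R)) with hη
  have hηp : η ^ (2 * (j + 1)) = Real.exp (-(ρ⁻¹ / 4 * ω R)) := by
    rw [hη, ← Real.exp_nat_mul]; congr 1; push_cast; field_simp; ring
  have hη1 : η ≤ 1 := by
    rw [hη]; apply Real.exp_le_one_iff.2; 
    have : 0 ≤ ρ⁻¹ / (8 * (j + 1)) * ω R := by positivity
    linarith
  obtain ⟨F, hF1, hF2, hF3⟩ := hdiv (fun t => f (x + t • v)) G H ε η hε0 (Real.exp_pos _) hη1 hG hH hGb hHb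
    (by
      intro t ht
      have := hgM _ (hin t (ht.trans_le hεr)) 0
      rw [norm_iteratedFDeriv_zero] at this
      have h3 : ‖f (x + t • v)‖ ^ j ≤ A := by
        rw [← norm_pow]
        exact this.trans (by have := Mr_zero_le hω ρ hρ; nlinarith)
      by_contra hc
      have hc1 : 2 * A < ‖f (x + t • v)‖ := not_le.1 hc
      have : ‖f (x + t • v)‖ ≤ ‖f (x + t • v)‖ ^ j := le_self_pow₀ (by linarith) (by omega)
      linarith)
    (by
      intro t ht
      rw [hηp]
      refine (hGa t ht).trans ?_
      gcongr; linarith)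
    (by
      intro t ht
      rw [hηp]
      refine (hHa t ht).trans ?_
      gcongr; linarith)
  refine ⟨F, hF1, hF2, ?_⟩
  intro t ht
  refine (hF3 t ht).trans (le_of_eq ?_)
  rw [hη, ← Real.exp_mul]
  congr 2
  field_simp; ring

lemma fd_bound (N : ℕ) (P : Polynomial ℂ) (hP : P.natDegree < N) (h : ℕ → ℂ) (s : ℂ) (δ : ℝ)
    (hδ : ∀ k ≤ N, ‖h k - P.eval (k * s)‖ ≤ δ) :
    ‖∑ k ∈ Finset.range (N + 1), ((-1 : ℂ) ^ (N - k) * N.choose k) * h k‖ ≤ 2 ^ N * δ := by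
  have h0 : ∑ k ∈ Finset.range (N + 1), ((-1 : ℂ) ^ (N - k) * N.choose k) * P.eval (k * s) = 0 := by
    have hd : (P.comp (Polynomial.C s * Polynomial.X)).natDegree < N := by
      refine lt_of_le_of_lt Polynomial.natDegree_comp_le ?_
      have : (Polynomial.C s * Polynomial.X).natDegree ≤ 1 := by
        simpa using Polynomial.natDegree_C_mul_X_pow_le s 1
      nlinarith
    have h1 := congrFun (Polynomial.fwdDiff_iter_eq_zero_of_degree_lt hd) 0
    rw [fwdDiff_iter_eq_sum_shift] at h1
    simp only [Pi.zero_apply] at h1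
    rw [← h1]
    apply Finset.sum_congr rfl
    intro k _
    rw [zsmul_eq_mul]
    push_cast
    rw [Polynomial.eval_comp]
    simp only [Polynomial.eval_mul, Polynomial.eval_C, Polynomial.eval_X, zero_add, nsmul_eq_mul, mul_one]
    rw [mul_comm s]
  have e : ∑ k ∈ Finset.range (N + 1), ((-1 : ℂ) ^ (N - k) * N.choose k) * h k =
      ∑ k ∈ Finset.range (N + 1), ((-1 : ℂ) ^ (N - k) * N.choose k) * (h k - P.eval (k * s)) := by
    simp only [mul_sub, Finset.sum_sub_distrib]
    rw [h0, sub_zero]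
  rw [e]
  refine (norm_sum_le _ _).trans ?_
  have : ∀ k ∈ Finset.range (N + 1),
      ‖((-1 : ℂ) ^ (N - k) * N.choose k) * (h k - P.eval (k * s))‖ ≤ N.choose k * δ := by
    intro k hk
    rw [norm_mul, norm_mul, norm_pow, norm_neg, norm_one, one_pow, one_mul, Complex.norm_natCast]
    have := hδ k (by simpa [Nat.lt_succ_iff] using hk)
    gcongr
  refine (Finset.sum_le_sum this).trans ?_
  rw [← Finset.sum_mul]
  apply le_of_eq
  congr 1
  exact_mod_cast Nat.sum_range_choose N

lemma holo_taylor (F : ℂ → ℂ) (ρ C : ℝ) (hρ : 0 < ρ) (hF : DifferentiableOn ℂ F (Metric.ball 0 ρ))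
    (hC : ∀ z ∈ Metric.ball (0:ℂ) ρ, ‖F z‖ ≤ C) (n : ℕ) (z : ℂ) (hz : ‖z‖ ≤ ρ / 4) :
    ‖F z - ∑ k ∈ Finset.range n, (z ^ k / k.factorial) * iteratedDeriv k F 0‖
      ≤ 2 * C * (2 * ‖z‖ / ρ) ^ n := by
  have hC0 : 0 ≤ C := (norm_nonneg _).trans (hC 0 (by simpa using hρ))
  have hcau : ∀ k, ‖iteratedDeriv k F 0‖ ≤ k.factorial * C / (ρ / 2) ^ k := by
    intro k
    apply Complex.norm_iteratedDeriv_le_of_forall_mem_sphere_norm_le k (by positivity)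
    · apply DifferentiableOn.diffContOnCl
      apply hF.mono
      rw [closure_ball _ (by positivity)]
      exact Metric.closedBall_subset_ball (by linarith)
    · intro w hw
      apply hC
      rw [mem_sphere_zero_iff_norm] at hw
      rw [mem_ball_zero_iff]; linarith
  have hs := Complex.hasSum_taylorSeries_on_ball hF
    (show z ∈ Metric.ball (0:ℂ) ρ by rw [mem_ball_zero_iff]; linarith)
  have hs' : HasSum (fun k : ℕ => (z ^ k / k.factorial) * iteratedDeriv k F 0) (F z) := by
    have e : (fun k : ℕ => (z ^ k / k.factorial) * iteratedDeriv k F 0) =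
        (fun n : ℕ => ((n.factorial : ℂ))⁻¹ • (z - 0) ^ n • iteratedDeriv n F 0) := by
      funext k
      rw [sub_zero, smul_eq_mul, smul_eq_mul]; ring
    rw [e]; exact hs
  have hs2 := (hasSum_nat_add_iff' n).2 hs'
  set q := 2 * ‖z‖ / ρ with hq
  have hq0 : 0 ≤ q := by positivity
  have hq1 : q ≤ 1 / 2 := by rw [hq, div_le_iff₀ hρ]; linarith
  have hg : HasSum (fun i : ℕ => C * q ^ n * (1/2:ℝ) ^ i) (C * q ^ n * (1 - 1/2)⁻¹) :=
    (hasSum_geometric_of_lt_one (by norm_num) (by norm_num)).mul_left _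
  have := hs2.norm_le_of_bounded hg (fun i => by
    have hf : (0:ℝ) < (i+n).factorial := by exact_mod_cast (i+n).factorial_pos
    rw [norm_mul, norm_div, norm_pow, Complex.norm_natCast]
    calc ‖z‖ ^ (i + n) / (i + n).factorial * ‖iteratedDeriv (i + n) F 0‖
        ≤ ‖z‖ ^ (i + n) / (i + n).factorial * ((i + n).factorial * C / (ρ / 2) ^ (i + n)) := by
          gcongr; exact hcau _
      _ = C * q ^ (i + n) := by
          rw [hq]
          have : 2 * ‖z‖ / ρ = ‖z‖ / (ρ / 2) := by field_simp
          rw [this, div_pow ‖z‖]; field_simp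
      _ = C * q ^ n * q ^ i := by rw [pow_add]; ring
      _ ≤ _ := by gcongr)
  refine this.trans (le_of_eq ?_)
  norm_num; ring

lemma exp_weight_le {ω : ℝ → ℝ} (hω : IsWeightFunction ω) (b : ℝ) (hb : 0 < b) (m : ℕ) :
    ∃ R0 : ℝ, 1 ≤ R0 ∧ ∀ R, R0 ≤ R → Real.exp (-(b * ω R)) ≤ (R ^ m)⁻¹ := by
  obtain ⟨R0, hR0, h⟩ := log_le_weight hω (b / (m + 1)) (by positivity)
  refine ⟨R0, hR0, fun R hR => ?_⟩
  have hRp : 0 < R := by linarith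
  have h1 := h R hR
  have hl : 0 ≤ Real.log R := Real.log_nonneg (by linarith)
  have e : (R ^ m)⁻¹ = Real.exp (-(m * Real.log R)) := by
    rw [Real.exp_neg, Real.exp_nat_mul, Real.exp_log hRp]
  rw [e]
  apply Real.exp_le_exp.2
  rw [div_mul_eq_mul_div, le_div_iff₀ (by positivity)] at h1
  nlinarith

lemma taylorPoly_deg (n : ℕ) (a : ℕ → ℂ) :
    (∑ k ∈ Finset.range n, Polynomial.C (a k) * Polynomial.X ^ k).natDegree ≤ n := by
  apply Polynomial.natDegree_sum_le_of_forall_le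
  intro k hk
  exact (Polynomial.natDegree_C_mul_X_pow_le _ _).trans (Finset.mem_range.1 hk).le

lemma poly_app_f {E : Type*} [NormedAddCommGroup E] [NormedSpace ℝ E] {ω : ℝ → ℝ}
    (hω : IsWeightFunction ω) (f : E → ℂ) (r κ b C R0 : ℝ) (hκ : 0 < κ) (hb : 0 < b) (hC : 1 ≤ C)
    (hR0 : 1 < R0) (hAP : AP ω f r κ b C R0) (m : ℕ) (L : ℝ) (hL : 0 < L) :
    ∃ D s0 : ℝ, 0 < D ∧ 0 < s0 ∧ ∀ x ∈ Metric.ball (0:E) r, ∀ v : E, ‖v‖ ≤ 1 → ∀ s, 0 < s → s < s0 →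
      ∃ P : Polynomial ℂ, P.natDegree ≤ 2 * m ∧ ∀ t : ℝ, |t| ≤ L * s →
        ‖P.eval (t:ℂ)‖ ≤ D ∧ ‖f (x + t • v) - P.eval (t:ℂ)‖ ≤ D * s ^ m := by
  obtain ⟨R1, hR1, hexp⟩ := exp_weight_le hω b hb (2 * m)
  have hw0 := (hAP R0 le_rfl).1
  set w0 := ω R0
  set q := 2 * L / (κ * w0) with hq
  have hq0 : 0 < q := by positivity
  set R2 := max (max R0 R1) (2 * q) with hR2
  have hR2p : 0 < R2 := by
    have : R0 ≤ R2 := (le_max_left _ _).trans (le_max_left _ _)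
    linarith
  refine ⟨3 * C + 2 * C * q ^ (2 * m) , (R2⁻¹) ^ 2, by positivity, by positivity, ?_⟩
  intro x hx v hv s hs hs0
  set σ := Real.sqrt s with hσ
  have hσ0 : 0 < σ := Real.sqrt_pos.2 hs
  have hσs : s = σ ^ 2 := (Real.sq_sqrt hs.le).symm
  have hσR : σ < R2⁻¹ := by
    rw [hσs] at hs0
    exact lt_of_pow_lt_pow_left₀ 2 (by positivity) hs0
  have hRR : R2 < σ⁻¹ := by rwa [lt_inv_comm₀ hR2p hσ0]
  set R := σ⁻¹ with hRdef
  have hRp : 0 < R := by positivity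
  have hRR0 : R0 ≤ R := ((le_max_left _ _).trans (le_max_left _ _)).trans hRR.le
  have hRR1 : R1 ≤ R := ((le_max_right _ _).trans (le_max_left _ _)).trans hRR.le
  have hRq : 2 * q ≤ R := (le_max_right _ _).trans hRR.le
  obtain ⟨hwR, -, hF⟩ := hAP R hRR0
  obtain ⟨F, hF1, hF2, hF3⟩ := hF x hx v hv
  have hww : w0 ≤ ω R := hω.2.1 (by simp; linarith) (by simp; linarith) hRR0
  set d := κ * ω R / R with hd
  have hd0 : 0 < d := by positivity
  have hdσ : κ * w0 * σ ≤ d := by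
    rw [hd, hRdef, div_inv_eq_mul]; gcongr
  have hLq : L = q * (κ * w0) / 2 := by rw [hq]; field_simp
  have hqσ : q * σ ≤ 1 / 2 := by
    have : 2 * q * σ ≤ R * σ := by gcongr
    rw [hRdef, inv_mul_cancel₀ hσ0.ne'] at this
    linarith
  have hLs : L * s ≤ d / 4 := by
    rw [hLq, hσs]
    have : q * (κ * w0) / 2 * σ ^ 2 = (q * σ) * (κ * w0 * σ) / 2 := by ring
    rw [this]
    have : (q * σ) * (κ * w0 * σ) ≤ 1 / 2 * d := by gcongr
    linarith
  refine ⟨∑ k ∈ Finset.range (2 * m), Polynomial.C (iteratedDeriv k F 0 / k.factorial) * Polynomial.X ^ k,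
    taylorPoly_deg _ _, ?_⟩
  intro t ht
  have hev : (∑ k ∈ Finset.range (2 * m), Polynomial.C (iteratedDeriv k F 0 / k.factorial) * Polynomial.X ^ k).eval (t:ℂ)
      = ∑ k ∈ Finset.range (2 * m), ((t:ℂ) ^ k / k.factorial) * iteratedDeriv k F 0 := by
    rw [Polynomial.eval_finsetSum]
    apply Finset.sum_congr rfl
    intro k _
    simp; ring
  rw [hev]
  have hnt : ‖(t:ℂ)‖ = |t| := by simp
  have hT := holo_taylor F d C hd0 hF1 hF2 (2 * m) (t:ℂ) (by rw [hnt]; linarith)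
  rw [hnt] at hT
  have hrat : 2 * |t| / d ≤ q * σ := by
    rw [div_le_iff₀ hd0]
    calc 2 * |t| ≤ 2 * (L * s) := by linarith
      _ = q * σ * (κ * w0 * σ) := by rw [hLq, hσs]; ring
      _ ≤ q * σ * d := by gcongr
  have hT1 : ‖F t - ∑ k ∈ Finset.range (2 * m), ((t:ℂ) ^ k / k.factorial) * iteratedDeriv k F 0‖
      ≤ 2 * C * (q * σ) ^ (2 * m) := hT.trans (by gcongr)
  have hT2 : 2 * C * (q * σ) ^ (2 * m) ≤ 2 * C := by
    have : (q * σ) ^ (2 * m) ≤ 1 := pow_le_one₀ (by positivity) (by linarith)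
    nlinarith
  have hFt := hF2 (t:ℂ) (by rw [mem_ball_zero_iff, hnt]; linarith)
  set S := ∑ k ∈ Finset.range (2 * m), ((t:ℂ) ^ k / k.factorial) * iteratedDeriv k F 0
  constructor
  · have : ‖S‖ ≤ ‖F t‖ + ‖F t - S‖ := by
      have := norm_sub_le (F t) (F t - S); simpa using this
    have : 0 ≤ 2 * C * q ^ (2 * m) := by positivity
    linarith
  · have h3 := hF3 t (by linarith)
    have h4 := hexp R hRR1
    have h5 : (R ^ (2 * m))⁻¹ = s ^ m := by
      rw [hRdef, inv_pow, inv_inv, hσs, pow_mul]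
    rw [h5] at h4
    have h6 : (q * σ) ^ (2 * m) = q ^ (2 * m) * s ^ m := by rw [mul_pow, hσs, ← pow_mul]
    rw [h6] at hT1
    have h7 : ‖f (x + t • v) - S‖ ≤ ‖F t - f (x + t • v)‖ + ‖F t - S‖ := by
      have := norm_sub_le (F t - S) (F t - f (x + t • v))
      have e : (F t - S) - (F t - f (x + t • v)) = f (x + t • v) - S := by ring
      rw [e] at this; linarith
    have h8 : C * Real.exp (-(b * ω R)) ≤ C * s ^ m := by gcongr
    have : 0 < s ^ m := by positivity
    nlinarith

lemma poly_app_chi {E : Type*} [NormedAddCommGroup E] [NormedSpace ℝ E]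
    (χ : E → ℂ) (hχ : ContDiff ℝ (⊤ : ℕ∞) χ) (hc : HasCompactSupport χ) (m : ℕ) (L : ℝ) (hL : 0 < L) :
    ∃ D : ℝ, 0 < D ∧ ∀ x : E, ∀ v : E, ‖v‖ ≤ 1 → ∀ s, 0 < s →
      ∃ P : Polynomial ℂ, P.natDegree ≤ m ∧ ∀ t : ℝ, |t| ≤ L * s →
        ‖χ (x + t • v)‖ ≤ D ∧ ‖χ (x + t • v) - P.eval (t:ℂ)‖ ≤ D * s ^ m := by
  have hbd : ∀ k : ℕ, ∃ B, ∀ x, ‖iteratedFDeriv ℝ k χ x‖ ≤ B := fun k =>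
    (hc.iteratedFDeriv k).exists_bound_of_continuous (hχ.continuous_iteratedFDeriv (by exact_mod_cast le_top))
  obtain ⟨B0, hB0⟩ := hbd 0
  obtain ⟨B, hB⟩ := hbd m
  have hB0' : 0 ≤ B0 := (norm_nonneg _).trans (hB0 0)
  have hB' : 0 ≤ B := (norm_nonneg _).trans (hB 0)
  refine ⟨1 + B0 + B * (2 * L) ^ m, by positivity, ?_⟩
  intro x v hv s hs
  set u := fun t : ℝ => χ (x + t • v) with hu
  refine ⟨∑ k ∈ Finset.range m, Polynomial.C (iteratedDeriv k u 0 / k.factorial) * Polynomial.X ^ k,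
    taylorPoly_deg _ _, ?_⟩
  intro t ht
  have hev : (∑ k ∈ Finset.range m, Polynomial.C (iteratedDeriv k u 0 / k.factorial) * Polynomial.X ^ k).eval (t:ℂ)
      = ∑ k ∈ Finset.range m, ((t:ℂ) ^ k / k.factorial) * iteratedDeriv k u 0 := by
    rw [Polynomial.eval_finsetSum]
    apply Finset.sum_congr rfl
    intro k _
    simp; ring
  rw [hev]
  have hL0 : 0 ≤ B * (2 * L) ^ m := by positivity
  constructor
  · have := hB0 (x + t • v)
    rw [norm_iteratedFDeriv_zero] at this
    linarith
  · have h := taylor_real u (L * s + 1) B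
      (fun t _ => line_contDiffAt isOpen_univ hχ.contDiffOn x v t (mem_univ _)) m
      (fun t _ => by
        rw [line_deriv isOpen_univ hχ.contDiffOn x v m t (mem_univ _)]
        refine le_trans ?_ (hB (x + t • v))
        refine (ContinuousMultilinearMap.le_opNorm _ _).trans ?_
        refine mul_le_of_le_one_right (norm_nonneg _) ?_
        simp only [Finset.prod_const]
        exact pow_le_one₀ (norm_nonneg _) hv) t (by linarith)
    refine h.trans ?_
    have hf : (1:ℝ) ≤ m.factorial := by exact_mod_cast m.factorial_pos
    calc B * (2 * |t|) ^ m / m.factorial ≤ B * (2 * |t|) ^ m := div_le_self (by positivity) hf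
      _ ≤ B * (2 * (L * s)) ^ m := by gcongr
      _ = B * (2 * L) ^ m * s ^ m := by rw [← mul_assoc, mul_pow]; ring
      _ ≤ _ := by gcongr; linarith

lemma fd_psi {E : Type*} [NormedAddCommGroup E] [NormedSpace ℝ E] {ω : ℝ → ℝ}
    (hω : IsWeightFunction ω) (f : E → ℂ) (r κ b C R0 : ℝ) (hκ : 0 < κ) (hb : 0 < b) (hC : 1 ≤ C)
    (hR0 : 1 < R0) (hAP : AP ω f r κ b C R0)
    (χ : E → ℂ) (hχ : ContDiff ℝ (⊤ : ℕ∞) χ) (hc : HasCompactSupport χ) (m : ℕ) :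
    ∃ (N : ℕ) (D s0 : ℝ), 0 < D ∧ 0 < s0 ∧ ∀ x ∈ Metric.ball (0:E) r, ∀ τ : E, 0 < ‖τ‖ → ‖τ‖ < s0 →
      ‖∑ k ∈ Finset.range (N + 1), ((-1 : ℂ) ^ (N - k) * N.choose k) *
        (χ (x + (k:ℝ) • τ) * f (x + (k:ℝ) • τ))‖ ≤ D * ‖τ‖ ^ m := by
  set N := 3 * m + 1 with hN
  have hN0 : (0:ℝ) < N := by rw [hN]; positivity
  obtain ⟨D1, s0, hD1, hs0, h1⟩ := poly_app_f hω f r κ b C R0 hκ hb hC hR0 hAP m N hN0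
  obtain ⟨D2, hD2, h2⟩ := poly_app_chi χ hχ hc m N hN0
  refine ⟨N, 2 ^ N * (D2 * D1 + D1 * D2), s0, by positivity, hs0, ?_⟩
  intro x hx τ hτ hτs
  set s := ‖τ‖ with hs
  have hv : ‖(s⁻¹ • τ)‖ ≤ 1 := by
    rw [norm_smul, norm_inv, Real.norm_of_nonneg hτ.le, ← hs, inv_mul_cancel₀ hτ.ne']
  obtain ⟨P, hP, hP'⟩ := h1 x hx _ hv s hτ hτs
  obtain ⟨Q, hQ, hQ'⟩ := h2 x _ hv s hτ
  have hdeg : (Q * P).natDegree < N := by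
    refine lt_of_le_of_lt Polynomial.natDegree_mul_le ?_
    omega
  rw [mul_assoc]
  apply fd_bound N (Q * P) hdeg _ (s:ℂ)
  intro k hk
  have ht : |(k:ℝ) * s| ≤ N * s := by
    rw [abs_of_nonneg (by positivity)]; gcongr
  obtain ⟨p1, p2⟩ := hP' _ ht
  obtain ⟨q1, q2⟩ := hQ' _ ht
  have hx' : ((k:ℝ) * s) • (s⁻¹ • τ) = (k:ℝ) • τ := by
    rw [smul_smul, mul_assoc, mul_inv_cancel₀ hτ.ne', mul_one]
  rw [hx'] at p2 q1 q2
  push_cast at p1 p2 q2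
  rw [Polynomial.eval_mul]
  set a := χ (x + (k:ℝ) • τ)
  set c := f (x + (k:ℝ) • τ)
  set A := Q.eval ((k:ℂ) * s)
  set B := P.eval ((k:ℂ) * s)
  have e : a * c - A * B = a * (c - B) + B * (a - A) := by ring
  rw [e]
  refine (norm_add_le _ _).trans ?_
  rw [norm_mul, norm_mul]
  calc ‖a‖ * ‖c - B‖ + ‖B‖ * ‖a - A‖ ≤ D2 * (D1 * s ^ m) + D1 * (D2 * s ^ m) := by gcongr
    _ = _ := by ring

open scoped FourierTransform RealInnerProductSpace in
lemma fourier_decay {E : Type*} [NormedAddCommGroup E] [InnerProductSpace ℝ E] [FiniteDimensional ℝ E]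
    [MeasurableSpace E] [BorelSpace E] (ψ : E → ℂ) (hintegr : Integrable ψ) (r : ℝ) (hr : 0 < r)
    (hsupp : ∀ x, 3 * r / 4 ≤ ‖x‖ → ψ x = 0) (m : ℕ)
    (N : ℕ) (D s0 : ℝ) (hD : 0 < D) (hs0 : 0 < s0)
    (hfd : ∀ x ∈ Metric.ball (0:E) r, ∀ τ : E, 0 < ‖τ‖ → ‖τ‖ < s0 →
      ‖∑ k ∈ Finset.range (N + 1), ((-1 : ℂ) ^ (N - k) * N.choose k) * ψ (x + (k:ℝ) • τ)‖ ≤ D * ‖τ‖ ^ m) :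
    ∃ B Ξ : ℝ, 0 < B ∧ 0 < Ξ ∧ ∀ ξ : E, Ξ ≤ ‖ξ‖ → ‖ξ‖ ^ m * ‖𝓕 ψ ξ‖ ≤ B := by
  set v := (volume : Measure E).real (Metric.ball (0:E) r) with hv
  have hv0 : 0 ≤ v := measureReal_nonneg
  refine ⟨D * v + 1, 1 / s0 + 4 * (N + 1) / r, by positivity, by positivity, ?_⟩
  intro ξ hξ
  have hX1 : 1 / s0 < ‖ξ‖ := lt_of_lt_of_le (by
    have : 0 < 4 * ((N:ℝ) + 1) / r := by positivity
    linarith) hξ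
  have hX2 : 4 * ((N:ℝ) + 1) / r < ‖ξ‖ := lt_of_lt_of_le (by
    have : 0 < 1 / s0 := by positivity
    linarith) hξ
  have hξ0 : 0 < ‖ξ‖ := lt_trans (by positivity) hX1
  set τ : E := (1 / (2 * ‖ξ‖ ^ 2)) • ξ with hτ
  have hτn : ‖τ‖ = 1 / (2 * ‖ξ‖) := by
    rw [hτ, norm_smul, Real.norm_of_nonneg (by positivity)]; field_simp
  have hτξ : ⟪τ, ξ⟫ = 1 / 2 := by
    rw [hτ, real_inner_smul_left, real_inner_self_eq_norm_sq]; field_simp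
  have hτ0 : 0 < ‖τ‖ := by rw [hτn]; positivity
  have hτs : ‖τ‖ < s0 := by
    rw [hτn, div_lt_iff₀ (by positivity)]
    rw [div_lt_iff₀ hs0] at hX1
    nlinarith
  have hτN : (N:ℝ) * ‖τ‖ ≤ r / 4 := by
    rw [hτn, mul_one_div, div_le_div_iff₀ (by positivity) (by norm_num)]
    rw [div_lt_iff₀ hr] at hX2
    nlinarith
  set Δ : E → ℂ := fun x => ∑ k ∈ Finset.range (N + 1), ((-1 : ℂ) ^ (N - k) * N.choose k) * ψ (x + (k:ℝ) • τ) with hΔ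
  have hΔ0 : ∀ x ∉ Metric.ball (0:E) r, Δ x = 0 := by
    intro x hx
    rw [mem_ball_zero_iff, not_lt] at hx
    apply Finset.sum_eq_zero
    intro k hk
    rw [hsupp, mul_zero]
    have h1 : ‖x‖ ≤ ‖x + (k:ℝ) • τ‖ + ‖(k:ℝ) • τ‖ := by
      have := norm_sub_le (x + (k:ℝ) • τ) ((k:ℝ) • τ); simpa using this
    have h2 : ‖(k:ℝ) • τ‖ ≤ N * ‖τ‖ := by
      rw [norm_smul, Real.norm_of_nonneg (by positivity)]
      have : (k:ℝ) ≤ N := by exact_mod_cast Nat.lt_succ_iff.1 (Finset.mem_range.1 hk)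
      gcongr
    linarith
  have hb1 : ‖𝓕 Δ ξ‖ ≤ D * ‖τ‖ ^ m * v := by
    rw [Real.fourier_eq]
    rw [← setIntegral_eq_integral_of_forall_compl_eq_zero (s := Metric.ball (0:E) r)
      (fun x hx => by rw [hΔ0 x hx, smul_zero])]
    apply norm_setIntegral_le_of_norm_le_const measure_ball_lt_top
    intro x hx
    rw [Circle.norm_smul]
    exact hfd x hx τ hτ0 hτs
  have htr : ∀ k : ℕ, 𝓕 (fun x => ψ (x + (k:ℝ) • τ)) ξ = (-1) ^ k * 𝓕 ψ ξ := by
    intro k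
    have h := congrFun (VectorFourier.fourierIntegral_comp_add_right Real.fourierChar volume (innerₗ E) ψ ((k:ℝ) • τ)) ξ
    have h2 : 𝓕 (fun x => ψ (x + (k:ℝ) • τ)) ξ =
      VectorFourier.fourierIntegral Real.fourierChar volume (innerₗ E) (ψ ∘ fun v ↦ v + (k:ℝ) • τ) ξ := rfl
    rw [h2, h, Circle.smul_def, smul_eq_mul]
    congr 1
    rw [innerₗ_apply_apply, real_inner_smul_left, hτξ, Real.fourierChar_apply]
    rw [← Complex.exp_pi_mul_I, ← Complex.exp_nat_mul]
    congr 1; push_cast; ring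
  have hF : 𝓕 Δ ξ = (-2) ^ N * 𝓕 ψ ξ := by
    have e1 : 𝓕 Δ ξ = ∑ k ∈ Finset.range (N + 1), ((-1 : ℂ) ^ (N - k) * N.choose k) *
        𝓕 (fun x => ψ (x + (k:ℝ) • τ)) ξ := by
      simp only [Real.fourier_eq, hΔ]
      simp_rw [Finset.smul_sum]
      rw [integral_finsetSum]
      · apply Finset.sum_congr rfl
        intro k _
        rw [← integral_const_mul]
        congr 1; funext x
        rw [Circle.smul_def, Circle.smul_def, smul_eq_mul, smul_eq_mul]; ring
      · intro k _
        rw [Real.fourierIntegral_convergent_iff]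
        exact (hintegr.comp_add_right _).const_mul _
    rw [e1]
    simp_rw [htr]
    have e2 : ((-2:ℂ)) ^ N = ∑ k ∈ Finset.range (N + 1), ((-1 : ℂ) ^ (N - k) * N.choose k) * (-1) ^ k := by
      have := add_pow (-1:ℂ) (-1) N
      rw [show (-1:ℂ) + -1 = -2 by norm_num] at this
      rw [this]
      apply Finset.sum_congr rfl
      intro k _; ring
    rw [e2, Finset.sum_mul]
    apply Finset.sum_congr rfl
    intro k _; ring
  have hb2 : ‖𝓕 ψ ξ‖ ≤ D * ‖τ‖ ^ m * v := by
    refine le_trans ?_ hb1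
    rw [hF, norm_mul, norm_pow, norm_neg, Complex.norm_ofNat]
    have : (1:ℝ) ≤ 2 ^ N := one_le_pow₀ (by norm_num)
    nlinarith [norm_nonneg (𝓕 ψ ξ)]
  have hτm : ‖ξ‖ ^ m * ‖τ‖ ^ m ≤ 1 := by
    rw [← mul_pow]
    apply pow_le_one₀ (by positivity)
    rw [hτn]; field_simp; norm_num
  calc ‖ξ‖ ^ m * ‖𝓕 ψ ξ‖ ≤ ‖ξ‖ ^ m * (D * ‖τ‖ ^ m * v) := by gcongr
    _ = D * v * (‖ξ‖ ^ m * ‖τ‖ ^ m) := by ring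
    _ ≤ D * v * 1 := by gcongr
    _ ≤ _ := by linarith

open scoped FourierTransform RealInnerProductSpace in
lemma smooth_of_decay {E : Type*} [NormedAddCommGroup E] [InnerProductSpace ℝ E] [FiniteDimensional ℝ E]
    [MeasurableSpace E] [BorelSpace E] (ψ : E → ℂ) (hintegr : Integrable ψ) (hcont : Continuous ψ)
    (h : ∀ m : ℕ, ∃ B Ξ : ℝ, 0 < B ∧ 0 < Ξ ∧ ∀ ξ : E, Ξ ≤ ‖ξ‖ → ‖ξ‖ ^ m * ‖𝓕 ψ ξ‖ ≤ B) :
    ContDiff ℝ (⊤ : ℕ∞) ψ := by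
  have hFc : Continuous (𝓕 ψ) := by
    have : ContDiff ℝ ((0:ℕ∞):WithTop ℕ∞) (𝓕 ψ) := by
      apply Real.contDiff_fourier
      intro n hn
      have : n = 0 := by simpa using hn
      subst this
      simpa using hintegr.norm
    exact this.continuous
  have hFb : ∀ ξ, ‖𝓕 ψ ξ‖ ≤ ∫ x, ‖ψ x‖ := fun ξ =>
    VectorFourier.norm_fourierIntegral_le_integral_norm _ _ _ _ _
  have hI0 : 0 ≤ ∫ x, ‖ψ x‖ := by positivity
  set I := ∫ x, ‖ψ x‖
  set d := Module.finrank ℝ E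
  have key : ∀ n : ℕ, Integrable (fun ξ : E => ‖ξ‖ ^ n * ‖𝓕 ψ ξ‖) := by
    intro n
    obtain ⟨B, Ξ, hB, hΞ, hdec⟩ := h (n + (d + 1))
    have hK : ∀ ξ : E, ‖ξ‖ ^ n * ‖𝓕 ψ ξ‖ * (1 + ‖ξ‖) ^ (d + 1) ≤
        2 ^ (d + 1) * B + (1 + Ξ) ^ n * I * (2 + Ξ) ^ (d + 1) := by
      intro ξ
      by_cases hc : 1 + Ξ ≤ ‖ξ‖
      · have h1 := hdec ξ (by linarith)
        have h2 : (1 + ‖ξ‖) ^ (d + 1) ≤ (2 * ‖ξ‖) ^ (d + 1) := by gcongr; linarith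
        have h3 : 0 ≤ (1 + Ξ) ^ n * I * (2 + Ξ) ^ (d + 1) := by positivity
        calc ‖ξ‖ ^ n * ‖𝓕 ψ ξ‖ * (1 + ‖ξ‖) ^ (d + 1) ≤ ‖ξ‖ ^ n * ‖𝓕 ψ ξ‖ * (2 * ‖ξ‖) ^ (d + 1) := by
              gcongr
          _ = 2 ^ (d + 1) * (‖ξ‖ ^ (n + (d + 1)) * ‖𝓕 ψ ξ‖) := by
              rw [mul_pow, pow_add ‖ξ‖ n]; ring
          _ ≤ 2 ^ (d + 1) * B := by gcongr
          _ ≤ _ := by linarith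
      · have hc' := (not_le.1 hc).le
        have h3 : 0 ≤ 2 ^ (d + 1) * B := by positivity
        calc ‖ξ‖ ^ n * ‖𝓕 ψ ξ‖ * (1 + ‖ξ‖) ^ (d + 1) ≤ (1 + Ξ) ^ n * I * (2 + Ξ) ^ (d + 1) := by
              have h5 : (1 + ‖ξ‖) ^ (d + 1) ≤ (2 + Ξ) ^ (d + 1) :=
                pow_le_pow_left₀ (by positivity) (by linarith) _
              have h6 := hFb ξ
              gcongr
          _ ≤ _ := by linarith
    set Kc := 2 ^ (d + 1) * B + (1 + Ξ) ^ n * I * (2 + Ξ) ^ (d + 1)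
    have hj := (integrable_one_add_norm (E := E) (μ := volume) (r := (d:ℝ) + 1) (by simp [d])).const_mul Kc
    refine hj.mono' (by fun_prop) (Eventually.of_forall fun ξ => ?_)
    rw [Real.norm_of_nonneg (by positivity)]
    have hp : (0:ℝ) < 1 + ‖ξ‖ := by positivity
    have e : (1 + ‖ξ‖) ^ (-((d:ℝ) + 1)) = ((1 + ‖ξ‖) ^ (d + 1))⁻¹ := by
      rw [Real.rpow_neg hp.le]; congr 1; exact_mod_cast Real.rpow_natCast (1 + ‖ξ‖) (d + 1)
    rw [e, ← div_eq_mul_inv, le_div_iff₀ (by positivity)]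
    exact hK ξ
  have hFi : Integrable (𝓕 ψ) := by
    have := key 0
    simp only [pow_zero, one_mul] at this
    rwa [integrable_norm_iff hFc.aestronglyMeasurable] at this
  have hinv := hcont.fourierInv_fourier_eq hintegr hFi
  have e : ψ = fun w => 𝓕 (𝓕 ψ) (-w) := by
    funext w
    rw [← Real.fourierInv_eq_fourier_neg, hinv]
  rw [e]
  have h1 : ContDiff ℝ ((⊤:ℕ∞):WithTop ℕ∞) (𝓕 (𝓕 ψ)) := Real.contDiff_fourier fun n _ => key n
  exact h1.comp contDiff_neg

lemma smooth_of_AP {E : Type*} [NormedAddCommGroup E] [InnerProductSpace ℝ E] [FiniteDimensional ℝ E]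
    [MeasurableSpace E] [BorelSpace E] {ω : ℝ → ℝ}
    (hω : IsWeightFunction ω) (f : E → ℂ) (r κ b C R0 : ℝ) (hr : 0 < r) (hκ : 0 < κ) (hb : 0 < b) (hC : 1 ≤ C)
    (hR0 : 1 < R0) (hAP : AP ω f r κ b C R0) (hf : ContinuousOn f (Metric.ball 0 r)) :
    ContDiffOn ℝ (⊤ : ℕ∞) f (Metric.ball 0 (r / 2)) := by
  let B : ContDiffBump (0:E) := ⟨r / 2, 3 * r / 4, by positivity, by linarith⟩
  set χ : E → ℂ := fun x => ((B x : ℝ) : ℂ) with hχdef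
  have hχ : ContDiff ℝ (⊤ : ℕ∞) χ := Complex.ofRealCLM.contDiff.comp B.contDiff
  have hsup0 : ∀ x, 3 * r / 4 ≤ ‖x‖ → χ x = 0 := by
    intro x hx
    simp only [hχdef, Complex.ofReal_eq_zero]
    apply B.zero_of_le_dist
    simpa [dist_zero_right] using hx
  have hc : HasCompactSupport χ := by
    apply HasCompactSupport.intro (isCompact_closedBall (0:E) r)
    intro x hx
    apply hsup0
    rw [mem_closedBall_zero_iff, not_le] at hx
    linarith
  set ψ : E → ℂ := fun x => χ x * f x with hψ
  have hψc : HasCompactSupport ψ := hc.mul_right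
  have hts : ∀ x ∈ tsupport ψ, x ∈ Metric.ball (0:E) r := by
    intro x hx
    have : tsupport ψ ⊆ Metric.closedBall 0 (3 * r / 4) := by
      apply closure_minimal _ Metric.isClosed_closedBall
      intro y hy
      by_contra hc
      rw [mem_closedBall_zero_iff, not_le] at hc
      apply hy
      simp only [hψ, hsup0 y hc.le, zero_mul]
    have := this hx
    rw [mem_closedBall_zero_iff] at this
    rw [mem_ball_zero_iff]; linarith
  have hψcont : Continuous ψ := by
    apply continuous_of_tsupport
    intro x hx
    have h1 : ContinuousAt f x := hf.continuousAt (Metric.isOpen_ball.mem_nhds (hts x hx))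
    exact hχ.continuous.continuousAt.mul h1
  have hintegr : Integrable ψ := hψcont.integrable_of_hasCompactSupport hψc
  have hsm : ContDiff ℝ (⊤ : ℕ∞) ψ := by
    apply smooth_of_decay ψ hintegr hψcont
    intro m
    obtain ⟨N, D, s0, hD, hs0, h⟩ := fd_psi hω f r κ b C R0 hκ hb hC hR0 hAP χ hχ hc m
    exact fourier_decay ψ hintegr r hr (fun x hx => by simp only [hψ, hsup0 x hx, zero_mul]) m N D s0 hD hs0 h
  apply hsm.contDiffOn.congr
  intro x hx
  have : χ x = 1 := by
    simp only [hχdef]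
    rw [B.one_of_mem_closedBall]
    · simp
    · rw [mem_closedBall_zero_iff]
      exact (mem_ball_zero_iff.1 hx).le
  simp only [hψ, this, one_mul]

lemma weight_fact {ω : ℝ → ℝ} (hω : IsWeightFunction ω) (hconc : ConcaveOn ℝ (Ici 0) ω) (lam : ℝ)
    (hl : 0 < lam) (R : ℝ) (hR : 1 ≤ R) (hωR : 0 < ω R) (k : ℕ) :
    k.factorial * (R / ω R) ^ k * Real.exp (-(lam * ω R)) ≤ (lam * Real.exp 1) ^ k * Mr ω lam⁻¹ k := by
  have hR0 : 0 < R := by linarith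
  have hfac : (k.factorial : ℝ) ≤ (k:ℝ) ^ k := by exact_mod_cast Nat.factorial_le_pow k
  have hM := Mr_ge hω lam⁻¹ (by positivity) k
  rw [inv_inv] at hM
  rcases le_or_gt (k:ℝ) (lam * ω R) with h | h
  · calc k.factorial * (R / ω R) ^ k * Real.exp (-(lam * ω R))
        ≤ (lam * ω R) ^ k * (R / ω R) ^ k * Real.exp (-(lam * ω R)) := by
          gcongr
          exact hfac.trans (by gcongr)
      _ = lam ^ k * (R ^ k * Real.exp (-(lam * ω R))) := by
          rw [← mul_pow, ← mul_assoc, ← mul_pow]; congr 2; field_simp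
      _ ≤ lam ^ k * Mr ω lam⁻¹ k := by gcongr; exact hM R hR
      _ ≤ (lam * Real.exp 1) ^ k * Mr ω lam⁻¹ k := by
          have := (Mr_pos ω lam⁻¹ k).le
          gcongr
          have : 1 ≤ Real.exp 1 := Real.one_le_exp (by norm_num)
          nlinarith
  · obtain ⟨R1, hR1, h1⟩ := log_le_weight hω 1 one_pos
    set S := max (max R R1) (Real.exp (k / lam)) with hS
    have hRS : R ≤ S := (le_max_left _ _).trans (le_max_left _ _)
    have hωS : k / lam ≤ ω S := by
      have := h1 S ((le_max_right _ _).trans (le_max_left _ _))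
      rw [one_mul] at this
      refine le_trans ?_ this
      rw [Real.le_log_iff_exp_le (by linarith)]
      exact le_max_right _ _
    have hcont : ContinuousOn ω (Icc R S) := hω.1.mono fun t ht => Set.mem_Ici.2 (by linarith [ht.1])
    obtain ⟨R', ⟨hR'1, hR'2⟩, hR'⟩ := intermediate_value_Icc hRS hcont
      (show (k:ℝ) / lam ∈ Icc (ω R) (ω S) from ⟨by rw [le_div_iff₀ hl]; linarith, hωS⟩)
    have hk0 : 0 < (k:ℝ) := lt_trans (by positivity) h
    have hR'0 : 0 < R' := by linarith
    have hrat : R / ω R ≤ R' / ω R' := by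
      have := conc_ratio hω hconc R R' hR0.le hR'1 hR'0
      have hp : 0 < ω R' := by rw [hR']; positivity
      rw [div_le_div_iff₀ hωR hp]
      rw [div_mul_eq_mul_div, div_le_iff₀ hR'0] at this
      linarith
    calc k.factorial * (R / ω R) ^ k * Real.exp (-(lam * ω R))
        ≤ (k:ℝ) ^ k * (R' / ω R') ^ k * 1 := by
          have hp : 0 < ω R' := by rw [hR']; positivity
          have : 0 < lam * ω R := by positivity
          gcongr
          rw [Real.exp_le_one_iff]; linarith
      _ = (lam * Real.exp 1) ^ k * (R' ^ k * Real.exp (-(lam * ω R'))) := by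
          rw [hR', mul_one, ← mul_pow]
          have e1 : (k:ℝ) * (R' / (k / lam)) = lam * R' := by field_simp
          have e2 : lam * (k / lam) = (k:ℝ) := by field_simp
          rw [e1, e2, mul_pow, mul_pow, Real.exp_neg, ← Real.exp_nat_mul, mul_one]
          field_simp
      _ ≤ _ := by gcongr; exact hM R' (by linarith)

lemma holo_contDiffAt (F : ℂ → ℂ) (d : ℝ) (hd : 0 < d) (hF : DifferentiableOn ℂ F (Metric.ball 0 d)) (n : ℕ) :
    ContDiffAt ℂ n F 0 :=
  ((hF.analyticOnNhd Metric.isOpen_ball) 0 (Metric.mem_ball_self hd)).contDiffAt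

lemma chain_bound {ω : ℝ → ℝ} (hω : IsWeightFunction ω) (hconc : ConcaveOn ℝ (Ici 0) ω)
    (κ lam C R0 : ℝ) (hκ : 0 < κ) (hl : 0 < lam) (hC : 1 ≤ C) (hR0 : 1 ≤ R0)
    (hpos : ∀ R, R0 ≤ R → 0 < ω R)
    (hexp : ∀ R, R0 ≤ R → Real.exp (-(lam * ω R)) ≤ R⁻¹) (u : ℝ → ℂ) (F : ℕ → ℂ → ℂ)
    (R : ℕ → ℝ) (hR : R = fun n => 2 ^ n * R0)
    (hF1 : ∀ n, DifferentiableOn ℂ (F n) (Metric.ball 0 (κ * ω (R n) / R n)))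
    (hF2 : ∀ n, ∀ z ∈ Metric.ball (0:ℂ) (κ * ω (R n) / R n), ‖F n z‖ ≤ C)
    (hF3 : ∀ n, ∀ t : ℝ, |t| < κ * ω (R n) / R n → ‖F n t - u t‖ ≤ C * Real.exp (-(4 * lam * ω (R n))))
    (k n : ℕ) : ‖iteratedDeriv k (F n) 0‖ ≤ C * (Real.exp (lam * ω R0) + 4) *
      (32 * lam * Real.exp 1 / κ) ^ k * Mr ω lam⁻¹ k := by
  have hC0 : 0 < C := by linarith
  have hRn : ∀ n, R0 ≤ R n := fun n => by
    rw [hR]; have : (1:ℝ) ≤ 2 ^ n := one_le_pow₀ (by norm_num)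
    simp only; nlinarith
  have hRpos : ∀ n, 0 < R n := fun n => by linarith [hRn n]
  have hRs : ∀ n, R (n+1) = 2 * R n := fun n => by rw [hR]; simp only [pow_succ]; ring
  have hωn : ∀ n, 0 < ω (R n) := fun n => hpos _ (hRn n)
  set d : ℕ → ℝ := fun n => κ * ω (R n) / R n with hd
  have hdp : ∀ n, 0 < d n := fun n => by have := hωn n; have := hRpos n; simp only [hd]; positivity
  have hds : ∀ n, d (n+1) ≤ d n := fun n => by
    have := conc_ratio hω hconc (R n) (R (n+1)) (hRpos n).le (by rw [hRs]; linarith [hRpos n]) (hRpos _)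
    rw [div_mul_eq_mul_div, div_le_iff₀ (hRpos _)] at this
    simp only [hd]
    rw [div_le_div_iff₀ (hRpos _) (hRpos _)]
    nlinarith
  have hmono : ∀ n, ω (R n) ≤ ω (R (n+1)) := fun n =>
    hω.2.1 (Set.mem_Ici.2 (hRpos n).le) (Set.mem_Ici.2 (hRpos _).le) (by rw [hRs]; linarith [hRpos n])
  have hds2 : ∀ n, d n / 2 ≤ d (n+1) := fun n => by
    have h1 := hmono n
    have h2 := hRpos n
    simp only [hd]; rw [hRs] at h1 ⊢
    rw [div_div, div_le_div_iff₀ (by positivity) (by positivity)]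
    have : κ * ω (R n) ≤ κ * ω (2 * R n) := by gcongr
    nlinarith
  have hMp := Mr_pos ω lam⁻¹ k
  set G := 32 * lam * Real.exp 1 / κ with hG
  have hG0 : 0 < G := by positivity
  -- basic term
  have hterm : ∀ n, k.factorial / (d n / 32) ^ k ≤ G ^ k * Mr ω lam⁻¹ k * Real.exp (lam * ω (R n)) := by
    intro n
    have h := weight_fact hω hconc lam hl (R n) (by linarith [hRn n]) (hωn n) k
    have h1 := hωn n; have h2 := hRpos n
    have e : (k.factorial:ℝ) / (d n / 32) ^ k
        = (32 / κ) ^ k * (k.factorial * (R n / ω (R n)) ^ k * Real.exp (-(lam * ω (R n)))) * Real.exp (lam * ω (R n)) := by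
      rw [Real.exp_neg]
      simp only [hd, div_pow, mul_pow]
      field_simp
    rw [e]
    have e2 : G ^ k * Mr ω lam⁻¹ k = (32 / κ) ^ k * ((lam * Real.exp 1) ^ k * Mr ω lam⁻¹ k) := by
      rw [← mul_assoc, ← mul_pow]; congr 2; simp only [hG]; ring
    rw [e2]; gcongr
  have hmain : ∀ n : ℕ, ‖iteratedDeriv k (F n) 0‖ ≤
      C * (Real.exp (lam * ω R0) + 4 * (1 - (1/2) ^ n)) * (G ^ k * Mr ω lam⁻¹ k) := by
    intro n
    induction n with
    | zero =>
      have h := two_const_deriv (F 0) (d 0) C C (hdp 0) hC0 le_rfl (hF1 0) (hF2 0) (fun t ht => hF2 0 _ (by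
        simpa using ht)) k
      rw [Real.sqrt_mul_self hC0.le] at h
      have h3 := hterm 0
      have e0 : R 0 = R0 := by rw [hR]; simp
      rw [e0] at h3
      calc _ ≤ _ := h
        _ ≤ C * (k.factorial / (d 0 / 32) ^ k) := by
          rw [mul_comm (k.factorial:ℝ), mul_div_assoc]
          have := hdp 0
          gcongr; norm_num
        _ ≤ C * (G ^ k * Mr ω lam⁻¹ k * Real.exp (lam * ω R0)) := by gcongr
        _ = _ := by simp; ring
    | succ n ih =>
      have hsub : Metric.ball (0:ℂ) (d (n+1)) ⊆ Metric.ball 0 (d n) := Metric.ball_subset_ball (hds n)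
      have hle1 : Real.exp (-(4 * lam * ω (R n))) ≤ 1 := by
        rw [Real.exp_le_one_iff]; have := hωn n; have : 0 < 4 * lam * ω (R n) := by positivity
        linarith
      have h := two_const_deriv (F (n+1) - F n) (d (n+1)) (2 * C) (2 * C * Real.exp (-(4 * lam * ω (R n))))
        (hdp _) (by positivity) (by nlinarith) ((hF1 (n+1)).sub ((hF1 n).mono hsub))
        (fun z hz => by
          have h1 := hF2 (n+1) z hz
          have h2 := hF2 n z (hsub hz)
          have := norm_sub_le (F (n+1) z) (F n z)
          simp only [Pi.sub_apply]; linarith)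
        (fun t ht => by
          have h1 := hF3 (n+1) t ht
          have h2 := hF3 n t (ht.trans_le (hds n))
          have h3 : Real.exp (-(4 * lam * ω (R (n+1)))) ≤ Real.exp (-(4 * lam * ω (R n))) := by
            have := hmono n
            gcongr
          have h4 := norm_sub_le (F (n+1) t - u t) (F n t - u t)
          rw [sub_sub_sub_cancel_right] at h4
          simp only [Pi.sub_apply]; nlinarith) k
      have hs : Real.sqrt (2 * C * (2 * C * Real.exp (-(4 * lam * ω (R n))))) =
          2 * C * Real.exp (-(2 * lam * ω (R n))) := by
        rw [Real.sqrt_eq_iff_mul_self_eq (by positivity) (by positivity)]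
        have : Real.exp (-(4 * lam * ω (R n))) = Real.exp (-(2 * lam * ω (R n))) * Real.exp (-(2 * lam * ω (R n))) := by
          rw [← Real.exp_add]; congr 1; ring
        rw [this]; ring
      rw [hs, iteratedDeriv_sub (holo_contDiffAt _ _ (hdp _) (hF1 (n+1)) k) (holo_contDiffAt _ _ (hdp _) (hF1 n) k)] at h
      have h5 : k.factorial * (2 * C * Real.exp (-(2 * lam * ω (R n)))) / (d (n+1) / 16) ^ k
          ≤ 2 * C * (1/2) ^ n * (G ^ k * Mr ω lam⁻¹ k) := by
        calc _ ≤ k.factorial * (2 * C * Real.exp (-(2 * lam * ω (R n)))) / (d n / 32) ^ k := by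
              have := hdp n; have := hds2 n
              have hdd : d n / 32 ≤ d (n+1) / 16 := by linarith
              gcongr
          _ = 2 * C * Real.exp (-(2 * lam * ω (R n))) * (k.factorial / (d n / 32) ^ k) := by ring
          _ ≤ 2 * C * Real.exp (-(2 * lam * ω (R n))) * (G ^ k * Mr ω lam⁻¹ k * Real.exp (lam * ω (R n))) := by
              gcongr; exact hterm n
          _ = 2 * C * Real.exp (-(lam * ω (R n))) * (G ^ k * Mr ω lam⁻¹ k) := by
              have : Real.exp (-(lam * ω (R n))) = Real.exp (-(2 * lam * ω (R n))) * Real.exp (lam * ω (R n)) := by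
                rw [← Real.exp_add]; congr 1; ring
              rw [this]; ring
          _ ≤ _ := by
              gcongr
              refine (hexp _ (hRn n)).trans ?_
              rw [hR]; simp only
              rw [mul_inv, one_div, inv_pow]
              have : R0⁻¹ ≤ 1 := inv_le_one_of_one_le₀ hR0
              have h2 : (0:ℝ) < (2 ^ n)⁻¹ := by positivity
              nlinarith
      have h6 := norm_add_le (iteratedDeriv k (F (n+1)) 0 - iteratedDeriv k (F n) 0) (iteratedDeriv k (F n) 0)
      rw [sub_add_cancel] at h6
      have : C * (Real.exp (lam * ω R0) + 4 * (1 - (1/2) ^ (n+1))) * (G ^ k * Mr ω lam⁻¹ k)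
        = 2 * C * (1/2) ^ n * (G ^ k * Mr ω lam⁻¹ k) +
          C * (Real.exp (lam * ω R0) + 4 * (1 - (1/2) ^ n)) * (G ^ k * Mr ω lam⁻¹ k) := by
        rw [pow_succ]; ring
      rw [this]; linarith
  refine (hmain n).trans ?_
  rw [mul_assoc _ (G ^ k)]
  gcongr
  have : (0:ℝ) < (1/2) ^ n := by positivity
  linarith

lemma deriv_limit (u : ℝ → ℂ) (r0 : ℝ) (hr0 : 0 < r0)
    (hu : ∀ t : ℝ, |t| < r0 → ContDiffAt ℝ (⊤ : ℕ∞) u t) (k : ℕ) (d : ℕ → ℝ) (hd : ∀ n, 0 < d n)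
    (hd0 : Tendsto d atTop (nhds 0)) (F : ℕ → ℂ → ℂ) (C A B : ℝ)
    (hF1 : ∀ n, DifferentiableOn ℂ (F n) (Metric.ball 0 (d n)))
    (hF2 : ∀ n, ∀ z ∈ Metric.ball (0:ℂ) (d n), ‖F n z‖ ≤ C)
    (hF3 : ∀ᶠ n in atTop, ∀ t : ℝ, |t| < d n → ‖F n t - u t‖ ≤ A * d n ^ (2 * k + 1))
    (hB : ∀ n, ‖iteratedDeriv k (F n) 0‖ ≤ B) : ‖iteratedDeriv k u 0‖ ≤ B := by
  set K := 2 * k + 1 with hK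
  -- local bound
  have hcK : ContinuousAt (iteratedDeriv K u) 0 := by
    have h := (hu 0 (by simpa using hr0)).iteratedFDeriv_right (m := 0) (i := K) (by norm_cast; exact le_top)
    have h2 := h.continuousAt
    rw [iteratedDeriv_eq_equiv_comp]
    exact (LinearIsometryEquiv.continuous _).continuousAt.comp h2
  obtain ⟨r1, hr1, hB1⟩ := Metric.eventually_nhds_iff.1 (hcK.norm.eventually (gt_mem_nhds (lt_add_one _)))
  set B1 := ‖iteratedDeriv K u 0‖ + 1 with hB1d
  have hB10 : 0 < B1 := by positivity
  set T : ℂ → ℂ := fun z => ∑ i ∈ Finset.range K, z ^ i * ((1 / i.factorial : ℂ) * iteratedDeriv i u 0) with hT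
  have hTd : Differentiable ℂ T := by simp only [hT]; fun_prop
  have hTk : iteratedDeriv k T 0 = iteratedDeriv k u 0 := by
    simp only [hT]
    rw [iteratedDeriv_fun_sum (fun i _ => by fun_prop)]
    simp only [iteratedDeriv_mul_const_field, iteratedDeriv_fun_pow_zero]
    rw [Finset.sum_eq_single_of_mem k (by rw [Finset.mem_range]; omega)]
    · have : (k.factorial : ℂ) ≠ 0 := by exact_mod_cast k.factorial_ne_zero
      simp; field_simp
    · intro i _ hi
      simp [hi.symm]
  obtain ⟨CT, hCT⟩ := (isCompact_closedBall (0:ℂ) 1).exists_bound_of_continuousOn hTd.continuous.continuousOn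
  have hCT0 : 0 ≤ CT := (norm_nonneg _).trans (hCT 0 (by simp))
  set A' := |A| + B1 * 2 ^ K + 1 with hA'
  have hA'0 : 0 < A' := by positivity
  set C' := |C| + CT + A' with hC'
  have hev : ∀ᶠ n in atTop, ‖iteratedDeriv k u 0‖ ≤ B + k.factorial * Real.sqrt (C' * A') * 16 ^ k * Real.sqrt (d n) := by
    have e1 : ∀ᶠ n in atTop, d n < min (min r1 r0) 1 := hd0.eventually (gt_mem_nhds (by positivity))
    filter_upwards [e1, hF3] with n hn1 hn3
    have hdn := hd n
    have hd1 : d n < 1 := hn1.trans_le (min_le_right _ _)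
    have hdr1 : d n < r1 := hn1.trans_le ((min_le_left _ _).trans (min_le_left _ _))
    have hdr0 : d n < r0 := hn1.trans_le ((min_le_left _ _).trans (min_le_right _ _))
    have h := two_const_deriv (F n - T) (d n) C' (A' * d n ^ K) hdn (by positivity)
      (by
        have : d n ^ K ≤ 1 := pow_le_one₀ hdn.le hd1.le
        have : 0 ≤ |C| := abs_nonneg C
        nlinarith) ((hF1 n).sub hTd.differentiableOn)
      (fun z hz => by
        have h1 := hF2 n z hz
        have h2 := hCT z (by rw [mem_ball_zero_iff] at hz; rw [mem_closedBall_zero_iff]; linarith)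
        have := norm_sub_le (F n z) (T z)
        have := le_abs_self C
        simp only [Pi.sub_apply]; linarith)
      (fun t ht => by
        have h1 := hn3 t ht
        have h2 := taylor_real u (d n) B1 (fun s hs => hu s (by linarith)) K
          (fun s hs => (hB1 (by rw [dist_zero_right, Real.norm_eq_abs]; linarith)).le) t ht
        have e : (∑ i ∈ Finset.range K, ((t:ℂ) ^ i / i.factorial) * iteratedDeriv i u 0) = T t := by
          simp only [hT]; apply Finset.sum_congr rfl; intro i _; ring
        rw [e] at h2
        have h3 : B1 * (2 * |t|) ^ K / K.factorial ≤ B1 * 2 ^ K * d n ^ K := by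
          rw [mul_assoc, ← mul_pow]
          have hf : (1:ℝ) ≤ K.factorial := by exact_mod_cast K.factorial_pos
          refine (div_le_self (by positivity) hf).trans ?_
          gcongr
        have h4 := norm_add_le (F n t - u t) (u t - T t)
        rw [sub_add_sub_cancel] at h4
        have h5 : A * d n ^ K ≤ |A| * d n ^ K := by gcongr; exact le_abs_self A
        have h6 : 0 < d n ^ K := by positivity
        simp only [Pi.sub_apply]; nlinarith) k
    rw [iteratedDeriv_sub (holo_contDiffAt _ _ hdn (hF1 n) k) (hTd.contDiff.contDiffAt), hTk] at h
    have hs : Real.sqrt (C' * (A' * d n ^ K)) = Real.sqrt (C' * A') * (d n ^ k * Real.sqrt (d n)) := by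
      rw [← mul_assoc, Real.sqrt_mul (by positivity)]
      congr 1
      rw [hK, pow_succ, mul_comm 2 k, pow_mul, Real.sqrt_mul (by positivity), Real.sqrt_sq (by positivity)]
    rw [hs] at h
    have e : (k.factorial:ℝ) * (Real.sqrt (C' * A') * (d n ^ k * Real.sqrt (d n))) / (d n / 16) ^ k
      = k.factorial * Real.sqrt (C' * A') * 16 ^ k * Real.sqrt (d n) := by
      rw [div_pow]; field_simp
    rw [e] at h
    have h6 := norm_sub_norm_le (iteratedDeriv k u 0) (iteratedDeriv k (F n) 0)
    rw [norm_sub_rev] at h6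
    linarith [hB n]
  have hlim : Tendsto (fun n => B + k.factorial * Real.sqrt (C' * A') * 16 ^ k * Real.sqrt (d n)) atTop (nhds B) := by
    have : Tendsto (fun n => Real.sqrt (d n)) atTop (nhds 0) := by
      have := (Real.continuous_sqrt.tendsto 0).comp hd0
      simpa [Function.comp_def] using this
    simpa using (this.const_mul (k.factorial * Real.sqrt (C' * A') * 16 ^ k)).const_add B
  exact ge_of_tendsto hlim hev

lemma Mr_absorb {ω : ℝ → ℝ} (hω : IsWeightFunction ω) (hconc : ConcaveOn ℝ (Ici 0) ω) (G ρ : ℝ)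
    (hG : 1 ≤ G) (hρ : 0 < ρ) (k : ℕ) : G ^ k * Mr ω ρ k ≤ Mr ω (G * ρ) k := by
  have hG0 : 0 < G := by linarith
  have hGk : 0 < G ^ k := by positivity
  rw [← le_div_iff₀' hGk]
  apply Mr_le ρ hρ k _ (div_pos (Mr_pos _ _ _) hGk)
  intro t ht
  rw [le_div_iff₀' hGk]
  have h := Mr_ge hω (G * ρ) (by positivity) k (G * t) (by nlinarith)
  refine le_trans ?_ h
  rw [mul_pow, ← mul_assoc]
  have hnn : 0 ≤ ω (G * t) := hω.2.2.1 _ (Set.mem_Ici.2 (by positivity))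
  gcongr ?_ * Real.exp (-?_)
  have := conc_ratio hω hconc t (G * t) (by linarith) (by nlinarith) (by positivity)
  have e : t / (G * t) = G⁻¹ := by field_simp
  rw [e] at this
  rw [mul_inv]
  have h0 : 0 < ρ⁻¹ := by positivity
  calc G⁻¹ * ρ⁻¹ * ω (G * t) = ρ⁻¹ * (G⁻¹ * ω (G * t)) := by ring
    _ ≤ _ := by gcongr

lemma line_bound {E : Type*} [NormedAddCommGroup E] [NormedSpace ℝ E] {ω : ℝ → ℝ}
    (hω : IsWeightFunction ω) (hconc : ConcaveOn ℝ (Ici 0) ω) (f : E → ℂ) (r κ lam C R0 : ℝ)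
    (hr : 0 < r) (hκ : 0 < κ) (hl : 0 < lam) (hC : 1 ≤ C) (hR0 : 1 < R0)
    (hAP : AP ω f r κ (4 * lam) C R0) (hf : ContDiffOn ℝ (⊤ : ℕ∞) f (Metric.ball 0 (r / 2))) :
    ∃ C' : ℝ, 0 < C' ∧ ∀ x ∈ Metric.ball (0:E) (r / 2), ∀ v : E, ‖v‖ ≤ 1 → ∀ k : ℕ,
      ‖iteratedFDeriv ℝ k f x (fun _ => v)‖ ≤ C' * (32 * lam * Real.exp 1 / κ) ^ k * Mr ω lam⁻¹ k := by
  obtain ⟨R1, hR1, h1⟩ := exp_weight_le hω lam hl 1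
  set S := max R0 R1 with hS
  have hS1 : 1 < S := hR0.trans_le (le_max_left _ _)
  have hS0 : 0 < S := by linarith
  have hpos : ∀ R, S ≤ R → 0 < ω R := fun R h => (hAP R ((le_max_left _ _).trans h)).1
  refine ⟨C * (Real.exp (lam * ω S) + 4), by positivity, ?_⟩
  intro x hx v hv k
  set R : ℕ → ℝ := fun n => 2 ^ n * S with hR
  have hRn : ∀ n, S ≤ R n := fun n => by
    have : (1:ℝ) ≤ 2 ^ n := one_le_pow₀ (by norm_num)
    simp only [hR]; nlinarith
  have hRp : ∀ n, 0 < R n := fun n => by linarith [hRn n]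
  have hRtop : Tendsto R atTop atTop :=
    (tendsto_pow_atTop_atTop_of_one_lt (by norm_num : (1:ℝ) < 2)).atTop_mul_const hS0
  choose F hF1 hF2 hF3 using fun n => (hAP (R n) ((le_max_left _ _).trans (hRn n))).2.2 x
    (Metric.ball_subset_ball (by linarith) hx) v hv
  have hch := chain_bound hω hconc κ lam C S hκ hl hC hS1.le hpos
    (fun R h => by have := h1 R ((le_max_right _ _).trans h); simpa using this)
    (fun t => f (x + t • v)) F R hR hF1 hF2 hF3 k
  have hld := line_deriv Metric.isOpen_ball hf x v k 0 (by simpa using hx)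
  rw [zero_smul, add_zero] at hld
  rw [← hld]
  obtain ⟨r0, hr0, hr0'⟩ : ∃ r0 : ℝ, 0 < r0 ∧ ∀ t : ℝ, |t| < r0 → x + t • v ∈ Metric.ball (0:E) (r / 2) := by
    rw [mem_ball_zero_iff] at hx
    refine ⟨r / 2 - ‖x‖, by linarith, fun t ht => ?_⟩
    rw [mem_ball_zero_iff]
    have := norm_add_le x (t • v)
    rw [norm_smul, Real.norm_eq_abs] at this
    have h3 : |t| * ‖v‖ ≤ |t| := mul_le_of_le_one_right (abs_nonneg _) hv
    linarith
  have hd0 : Tendsto (fun n => κ * ω (R n) / R n) atTop (nhds 0) := by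
    have h := (hω.2.2.2.2.1.tendsto_div_nhds_zero).comp hRtop
    have h := h.const_mul κ
    simp only [mul_zero] at h
    refine h.congr fun n => ?_
    simp only [Function.comp]; ring
  have hdp : ∀ n, 0 < κ * ω (R n) / R n := fun n => by
    have := hpos _ (hRn n); have := hRp n; positivity
  obtain ⟨R2, hR2, h2⟩ := exp_weight_le hω (4 * lam) (by positivity) (2 * k + 1)
  have hωS := hpos S le_rfl
  refine deriv_limit _ r0 hr0 (fun t ht => line_contDiffAt Metric.isOpen_ball hf x v t (hr0' t ht)) k _ hdp hd0 F C
    (C * ((κ * ω S)⁻¹) ^ (2 * k + 1)) _ hF1 hF2 ?_ hch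
  filter_upwards [hRtop.eventually (eventually_ge_atTop R2)] with n hn t ht
  refine (hF3 n t ht).trans ?_
  rw [mul_assoc C, ← mul_pow]
  gcongr
  refine (h2 _ hn).trans ?_
  rw [← inv_pow]
  have hRpn := hRp n
  gcongr
  have hm : ω S ≤ ω (R n) := hω.2.1 (Set.mem_Ici.2 hS0.le) (Set.mem_Ici.2 hRpn.le) (hRn n)
  calc (R n)⁻¹ = (κ * ω S)⁻¹ * (κ * ω S / R n) := by field_simp
    _ ≤ _ := by gcongr

lemma two_add_le_top (k : ℕ) : (2 : WithTop ℕ∞) + (k : WithTop ℕ∞) ≤ ((⊤ : ℕ∞) : WithTop ℕ∞) := by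
  have h : (((2 + k : ℕ) : ℕ∞) : WithTop ℕ∞) ≤ ((⊤ : ℕ∞) : WithTop ℕ∞) := WithTop.coe_le_coe.2 le_top
  refine le_trans (le_of_eq ?_) h
  push_cast; rfl

lemma iterF_succ {E : Type*} [NormedAddCommGroup E] [NormedSpace ℝ E] {f : E → ℂ} {U : Set E}
    (hU : IsOpen U) (hf : ContDiffOn ℝ (⊤ : ℕ∞) f U) (k : ℕ) (v : Fin (k+1) → E) (x : E) (hx : x ∈ U) :
    iteratedFDeriv ℝ (k+1) f x v = fderiv ℝ (fun y => iteratedFDeriv ℝ k f y (Fin.tail v)) x (v 0) := by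
  rw [iteratedFDeriv_succ_apply_left]
  have h1 : ContDiffAt ℝ (⊤ : ℕ∞) f x := hf.contDiffAt (hU.mem_nhds hx)
  have h2 : DifferentiableAt ℝ (iteratedFDeriv ℝ k f) x :=
    h1.differentiableAt_iteratedFDeriv (by exact_mod_cast ENat.natCast_lt_top k)
  have h5 := ((ContinuousMultilinearMap.apply ℝ (fun _ : Fin k => E) ℂ (Fin.tail v)).hasFDerivAt
      (x := iteratedFDeriv ℝ k f x)).comp x h2.hasFDerivAt
  have h6 : HasFDerivAt (fun y => iteratedFDeriv ℝ k f y (Fin.tail v)) _ x := h5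
  rw [h6.fderiv]; rfl

lemma iterF_swap {E : Type*} [NormedAddCommGroup E] [NormedSpace ℝ E] {f : E → ℂ} {U : Set E}
    (hU : IsOpen U) (hf : ContDiffOn ℝ (⊤ : ℕ∞) f U) (k : ℕ) : ∀ (i : Fin k) (v : Fin (k+1) → E) (x : E), x ∈ U →
    iteratedFDeriv ℝ (k+1) f x (v ∘ Equiv.swap i.castSucc i.succ) = iteratedFDeriv ℝ (k+1) f x v := by
  induction k with
  | zero => intro i; exact i.elim0
  | succ k ih =>
    intro i v x hx
    induction i using Fin.cases with
    | zero =>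
      have key : ∀ v : Fin (k+2) → E, iteratedFDeriv ℝ (k+2) f x v =
          fderiv ℝ (fderiv ℝ (fun y => iteratedFDeriv ℝ k f y (Fin.tail (Fin.tail v)))) x (v 0) (v 1) := by
        intro v
        rw [iterF_succ hU hf (k+1) v x hx]
        set g := fun y => iteratedFDeriv ℝ k f y (Fin.tail (Fin.tail v)) with hg
        have hev : (fun y => iteratedFDeriv ℝ (k+1) f y (Fin.tail v)) =ᶠ[nhds x] fun y => fderiv ℝ g y (v 1) := by
          filter_upwards [hU.mem_nhds hx] with y hy
          rw [iterF_succ hU hf k _ y hy]; rfl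
        rw [hev.fderiv_eq]
        have h1 : ContDiffAt ℝ (⊤ : ℕ∞) f x := hf.contDiffAt (hU.mem_nhds hx)
        have h2 : ContDiffAt ℝ 2 (iteratedFDeriv ℝ k f) x := h1.iteratedFDeriv_right (by
          exact two_add_le_top k)
        have h3 : ContDiffAt ℝ 2 g x :=
          (ContinuousMultilinearMap.apply ℝ (fun _ : Fin k => E) ℂ (Fin.tail (Fin.tail v))).contDiff.contDiffAt.comp x h2
        have h4 : DifferentiableAt ℝ (fderiv ℝ g) x :=
          (h3.fderiv_right (m := 1) (by norm_num)).differentiableAt (by norm_num)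
        have h5 := ((ContinuousLinearMap.apply ℝ ℂ (v 1)).hasFDerivAt (x := fderiv ℝ g x)).comp x h4.hasFDerivAt
        have h6 : HasFDerivAt (fun y => fderiv ℝ g y (v 1)) _ x := h5
        rw [h6.fderiv]; rfl
      rw [key, key]
      have ht : Fin.tail (Fin.tail (v ∘ Equiv.swap (Fin.castSucc (0 : Fin (k+1))) (Fin.succ 0))) = Fin.tail (Fin.tail v) := by
        funext l
        simp only [Fin.tail, Function.comp]
        rw [Equiv.swap_apply_of_ne_of_ne]
        · simp [Fin.ext_iff]
        · simp [Fin.ext_iff]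
      rw [ht]
      have e0 : (v ∘ Equiv.swap (Fin.castSucc (0 : Fin (k+1))) (Fin.succ 0)) 0 = v 1 := by
        simp
      have e1 : (v ∘ Equiv.swap (Fin.castSucc (0 : Fin (k+1))) (Fin.succ 0)) 1 = v 0 := by
        simp
      rw [e0, e1]
      have h1 : ContDiffAt ℝ (⊤ : ℕ∞) f x := hf.contDiffAt (hU.mem_nhds hx)
      have h2 : ContDiffAt ℝ 2 (iteratedFDeriv ℝ k f) x := h1.iteratedFDeriv_right (by
          exact two_add_le_top k)
      have h3 : ContDiffAt ℝ 2 (fun y => iteratedFDeriv ℝ k f y (Fin.tail (Fin.tail v))) x :=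
          (ContinuousMultilinearMap.apply ℝ (fun _ : Fin k => E) ℂ (Fin.tail (Fin.tail v))).contDiff.contDiffAt.comp x h2
      exact (h3.isSymmSndFDerivAt (by simp)).eq _ _
    | succ i =>
      rw [iterF_succ hU hf _ _ x hx, iterF_succ hU hf _ v x hx]
      have e0 : (v ∘ Equiv.swap (Fin.castSucc (Fin.succ i)) (Fin.succ (Fin.succ i))) 0 = v 0 := by
        simp only [Function.comp]
        rw [Equiv.swap_apply_of_ne_of_ne]
        · simp [Fin.ext_iff]
        · simp [Fin.ext_iff]
      have et : Fin.tail (v ∘ Equiv.swap (Fin.castSucc (Fin.succ i)) (Fin.succ (Fin.succ i)))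
          = Fin.tail v ∘ Equiv.swap i.castSucc i.succ := by
        funext l
        simp only [Fin.tail, Function.comp]
        congr 1
        simp only [Equiv.swap_apply_def, ← Fin.succ_castSucc, Fin.succ_inj]
        split_ifs <;> rfl
      rw [e0, et]
      have hev : (fun y => iteratedFDeriv ℝ (k+1) f y (Fin.tail v ∘ Equiv.swap i.castSucc i.succ))
          =ᶠ[nhds x] fun y => iteratedFDeriv ℝ (k+1) f y (Fin.tail v) := by
        filter_upwards [hU.mem_nhds hx] with y hy
        exact ih i _ y hy
      rw [hev.fderiv_eq]

lemma iterF_perm {E : Type*} [NormedAddCommGroup E] [NormedSpace ℝ E] {f : E → ℂ} {U : Set E}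
    (hU : IsOpen U) (hf : ContDiffOn ℝ (⊤ : ℕ∞) f U) (k : ℕ) (σ : Equiv.Perm (Fin k)) (v : Fin k → E) (x : E)
    (hx : x ∈ U) : iteratedFDeriv ℝ k f x (v ∘ σ) = iteratedFDeriv ℝ k f x v := by
  cases k with
  | zero => congr 1; funext i; exact i.elim0
  | succ k =>
    have hσ : σ ∈ Submonoid.closure (Set.range fun i : Fin k => Equiv.swap i.castSucc i.succ) := by
      rw [Equiv.Perm.mclosure_swap_castSucc_succ]; trivial
    induction hσ using Submonoid.closure_induction generalizing v with
    | mem s hs => obtain ⟨i, rfl⟩ := hs; exact iterF_swap hU hf k i v x hx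
    | one => rfl
    | mul a b _ _ ha hb =>
      have : v ∘ ⇑(a * b) = (v ∘ a) ∘ b := rfl
      rw [this, hb, ha]

lemma polarization {E : Type*} [AddCommGroup E] [Module ℝ E] (k : ℕ)
    (m : MultilinearMap ℝ (fun _ : Fin k => E) ℂ)
    (hm : ∀ (σ : Equiv.Perm (Fin k)) (v : Fin k → E), m (v ∘ σ) = m v) (v : Fin k → E) :
    ∑ S ∈ (Finset.univ : Finset (Fin k)).powerset, (-1:ℂ) ^ S.card * m (fun _ => ∑ i ∈ S, v i)
      = (-1) ^ k * k.factorial * m v := by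
  classical
  have h1 : ∀ S : Finset (Fin k), (-1:ℂ) ^ S.card * m (fun _ => ∑ i ∈ S, v i) =
      ∑ q : Fin k → Fin k, if (∀ i, q i ∈ S) then (-1:ℂ) ^ S.card * m (v ∘ q) else 0 := by
    intro S
    rw [m.map_sum_finset (A := fun _ => S) (g := fun _ j => v j), Finset.mul_sum, ← Finset.sum_filter]
    apply Finset.sum_congr
    · ext q; simp [Fintype.mem_piFinset]
    · intro q _; rfl
  simp_rw [h1]
  rw [Finset.sum_comm]
  have h2 : ∀ q : Fin k → Fin k, (∑ S ∈ (Finset.univ : Finset (Fin k)).powerset,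
      if (∀ i, q i ∈ S) then (-1:ℂ) ^ S.card * m (v ∘ q) else 0)
      = if Function.Bijective q then (-1) ^ k * m v else 0 := by
    intro q
    split_ifs with hq
    · rw [Finset.sum_eq_single_of_mem Finset.univ (by simp)]
      · simp only [Finset.mem_univ, implies_true, if_true, Finset.card_univ, Fintype.card_fin]
        congr 1
        exact hm (Equiv.ofBijective q hq) v
      · intro S _ hS
        rw [if_neg]
        intro h
        apply hS
        rw [Finset.eq_univ_iff_forall]
        intro i
        obtain ⟨l, rfl⟩ := hq.2 i
        exact h l
    · have hns : ¬ Function.Surjective q := fun h => hq (Finite.surjective_iff_bijective.1 h)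
      simp only [Function.Surjective, not_forall, not_exists] at hns
      obtain ⟨a, ha⟩ := hns
      have e : (Finset.univ : Finset (Fin k)) = insert a (Finset.univ.erase a) := by simp
      rw [e, Finset.sum_powerset_insert (by simp), ← Finset.sum_add_distrib]
      apply Finset.sum_eq_zero
      intro S hS
      have haS : a ∉ S := fun h => by
        have := Finset.mem_powerset.1 hS h; simp at this
      have hiff : (∀ i, q i ∈ insert a S) ↔ ∀ i, q i ∈ S := by
        simp [Finset.mem_insert, ha]
      rw [Finset.card_insert_of_notMem haS]
      simp only [hiff]
      split_ifs
      · rw [pow_succ]; ring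
      · simp
  rw [Finset.sum_congr rfl fun q _ => h2 q, ← Finset.sum_filter, Finset.sum_const, nsmul_eq_mul]
  have hcard : (Finset.univ.filter fun q : Fin k → Fin k => Function.Bijective q).card = k.factorial := by
    have : (Finset.univ.filter fun q : Fin k → Fin k => Function.Bijective q)
        = (Finset.univ : Finset (Equiv.Perm (Fin k))).map ⟨fun σ : Equiv.Perm (Fin k) => (σ : Fin k → Fin k), DFunLike.coe_injective⟩ := by
      ext q
      simp only [Finset.mem_filter, Finset.mem_univ, true_and, Finset.mem_map, Function.Embedding.coeFn_mk]
      constructor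
      · intro h; exact ⟨Equiv.ofBijective q h, rfl⟩
      · rintro ⟨σ, rfl⟩; exact σ.bijective
    rw [this, Finset.card_map, Finset.card_univ, Fintype.card_perm, Fintype.card_fin]
  rw [hcard]; ring

lemma symm_norm {E : Type*} [NormedAddCommGroup E] [NormedSpace ℝ E] (k : ℕ)
    (m : ContinuousMultilinearMap ℝ (fun _ : Fin k => E) ℂ)
    (hm : ∀ (σ : Equiv.Perm (Fin k)) (v : Fin k → E), m (v ∘ σ) = m v) (B : ℝ)
    (hB : ∀ w : E, ‖w‖ ≤ 1 → ‖m (fun _ => w)‖ ≤ B) : ‖m‖ ≤ (2 * Real.exp 1) ^ k * B := by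
  have hB0 : 0 ≤ B := (norm_nonneg _).trans (hB 0 (by simp))
  have hB2 : ∀ w : E, ‖w‖ ≤ k → ‖m (fun _ => w)‖ ≤ k ^ k * B := by
    intro w hw
    rcases Nat.eq_zero_or_pos k with rfl | hk
    · simpa using hB w (by linarith [show ((0:ℕ):ℝ) = 0 by simp])
    · have hk' : (0:ℝ) < k := by exact_mod_cast hk
      have h := hB ((k:ℝ)⁻¹ • w) (by
        rw [norm_smul, norm_inv, Real.norm_of_nonneg hk'.le, inv_mul_le_iff₀ hk']; simpa using hw)
      have e : m (fun _ => (k:ℝ)⁻¹ • w) = ((k:ℝ)⁻¹ ^ k) • m (fun _ => w) := by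
        have := m.map_smul_univ (fun _ => (k:ℝ)⁻¹) (fun _ => w)
        simpa using this
      rw [e, norm_smul, norm_pow, norm_inv, Real.norm_of_nonneg hk'.le, inv_pow,
        inv_mul_le_iff₀ (by positivity)] at h
      exact h
  have hunit : ∀ v : Fin k → E, (∀ i, ‖v i‖ ≤ 1) → ‖m v‖ ≤ (2 * Real.exp 1) ^ k * B := by
    intro v hv
    have h := polarization k m.toMultilinearMap hm v
    have h2 : ‖∑ S ∈ (Finset.univ : Finset (Fin k)).powerset, (-1:ℂ) ^ S.card * m (fun _ => ∑ i ∈ S, v i)‖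
        ≤ 2 ^ k * (k ^ k * B) := by
      refine (norm_sum_le _ _).trans ?_
      calc _ ≤ ∑ S ∈ (Finset.univ : Finset (Fin k)).powerset, ((k:ℝ) ^ k * B) := by
            apply Finset.sum_le_sum
            intro S _
            rw [norm_mul, norm_pow, norm_neg, norm_one, one_pow, one_mul]
            apply hB2
            refine (norm_sum_le _ _).trans ?_
            calc ∑ i ∈ S, ‖v i‖ ≤ ∑ i ∈ S, (1:ℝ) := Finset.sum_le_sum fun i _ => hv i
              _ = S.card := by simp
              _ ≤ k := by exact_mod_cast (Finset.card_le_univ S).trans (by simp)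
        _ = _ := by simp
    have h' : ∑ S ∈ (Finset.univ : Finset (Fin k)).powerset, (-1:ℂ) ^ S.card * m (fun _ => ∑ i ∈ S, v i)
      = (-1) ^ k * k.factorial * m v := h
    rw [h', norm_mul, norm_mul, norm_pow, norm_neg, norm_one, one_pow, one_mul, Complex.norm_natCast] at h2
    have h3 := Real.pow_div_factorial_le_exp (x := (k:ℝ)) (by positivity) k
    have hf : (0:ℝ) < k.factorial := by exact_mod_cast k.factorial_pos
    rw [div_le_iff₀ hf] at h3
    have h4 : k.factorial * ‖m v‖ ≤ k.factorial * ((2 * Real.exp 1) ^ k * B) := by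
      refine h2.trans ?_
      rw [mul_pow, ← Real.exp_nat_mul, mul_one]
      calc 2 ^ k * ((k:ℝ) ^ k * B) ≤ 2 ^ k * ((Real.exp k * k.factorial) * B) := by gcongr
        _ = _ := by ring
    exact le_of_mul_le_mul_left h4 hf
  apply ContinuousMultilinearMap.opNorm_le_bound (by positivity)
  intro v
  by_cases h0 : ∃ i, v i = 0
  · obtain ⟨i, hi⟩ := h0
    rw [m.map_coord_zero i hi, norm_zero]; positivity
  · push Not at h0
    have e : v = fun i => ‖v i‖ • ((‖v i‖⁻¹) • v i) := by
      funext i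
      rw [smul_smul, mul_inv_cancel₀ (norm_ne_zero_iff.2 (h0 i)), one_smul]
    have e2 : m v = (∏ i, ‖v i‖) • m (fun i => (‖v i‖⁻¹) • v i) := by
      conv_lhs => rw [e]
      exact m.map_smul_univ _ _
    rw [e2, norm_smul, Real.norm_of_nonneg (by positivity), mul_comm]
    gcongr
    apply hunit
    intro i
    rw [norm_smul, norm_inv, norm_norm, inv_mul_cancel₀ (norm_ne_zero_iff.2 (h0 i))]

lemma cont_of_pows {X : Type*} [TopologicalSpace X] (f : X → ℂ) (j : ℕ) (hj : 1 ≤ j) (s : Set X)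
    (hg : ContinuousOn (f ^ j) s) (hh : ContinuousOn (f ^ (j+1)) s) : ContinuousOn f s := by
  intro x hx
  by_cases h0 : f x = 0
  · have h1 := hg x hx
    unfold ContinuousWithinAt at h1 ⊢
    rw [h0]
    simp only [Pi.pow_apply, h0, zero_pow (by omega : j ≠ 0)] at h1
    rw [Metric.tendsto_nhds] at h1 ⊢
    intro ε hε
    filter_upwards [h1 (ε ^ j) (by positivity)] with y hy
    rw [dist_zero_right] at hy ⊢
    simp only [Pi.pow_apply, norm_pow] at hy
    exact lt_of_pow_lt_pow_left₀ j hε.le hy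
  · have e : f = fun y => (f ^ (j+1)) y / (f ^ j) y := by
      funext y
      simp only [Pi.pow_apply]
      by_cases hy : f y = 0
      · simp [hy]
      · rw [pow_succ]; field_simp
    rw [e]
    exact (hh x hx).div (hg x hx) (by simp [h0])

lemma key_bound {E : Type*} [NormedAddCommGroup E] [InnerProductSpace ℝ E] [FiniteDimensional ℝ E]
    [MeasurableSpace E] [BorelSpace E] {ω : ℝ → ℝ}
    (hω : IsWeightFunction ω) (hconc : ConcaveOn ℝ (Ici 0) ω) (j : ℕ) (hj : 1 ≤ j)
    (ρ : ℝ) (hρ : 0 < ρ) (f : E → ℂ) (r A : ℝ) (hr : 0 < r) (hA : 1 ≤ A)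
    (hg : ContDiffOn ℝ (⊤ : ℕ∞) (f ^ j) (Metric.ball 0 (2 * r)))
    (hh : ContDiffOn ℝ (⊤ : ℕ∞) (f ^ (j + 1)) (Metric.ball 0 (2 * r)))
    (hgM : ∀ x ∈ Metric.ball (0:E) (2 * r), ∀ k, ‖iteratedFDeriv ℝ k (f ^ j) x‖ ≤ A * Mr ω ρ k)
    (hhM : ∀ x ∈ Metric.ball (0:E) (2 * r), ∀ k, ‖iteratedFDeriv ℝ k (f ^ (j + 1)) x‖ ≤ A * Mr ω ρ k) :
    ContDiffOn ℝ (⊤ : ℕ∞) f (Metric.ball 0 (r / 2)) ∧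
    ∃ C : ℝ, 0 < C ∧ ∀ x ∈ Metric.ball (0:E) (r / 2), ∀ k : ℕ,
      ‖iteratedFDeriv ℝ k f x‖ ≤ C * Mr ω (256 * Real.exp 1 ^ 2 * (64 * j * (j + 1)) * ρ) k := by
  obtain ⟨C, R0, hC, hR0, hAP⟩ := approx_property hω hconc j hj ρ hρ f r A hr hA hg hh hgM hhM
  have hj0 : (1:ℝ) ≤ j := by exact_mod_cast hj
  have hsub : Metric.ball (0:E) r ⊆ Metric.ball 0 (2 * r) := Metric.ball_subset_ball (by linarith)
  have hcont : ContinuousOn f (Metric.ball 0 r) :=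
    cont_of_pows f j hj _ (hg.continuousOn.mono hsub) (hh.continuousOn.mono hsub)
  have hsm := smooth_of_AP hω f r _ _ C R0 hr (by positivity) (by positivity) hC hR0 hAP hcont
  refine ⟨hsm, ?_⟩
  set lam := ρ⁻¹ / (64 * j * (j + 1)) with hlam
  have hl : 0 < lam := by positivity
  have e4 : ρ⁻¹ / (16 * j * (j + 1)) = 4 * lam := by rw [hlam]; field_simp; norm_num
  rw [e4] at hAP
  obtain ⟨C', hC', hb⟩ := line_bound hω hconc f r _ lam C R0 hr (by positivity) hl hC hR0 hAP hsm
  refine ⟨C', hC', fun x hx k => ?_⟩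
  have hMp := (Mr_pos ω lam⁻¹ k).le
  have h := symm_norm k (iteratedFDeriv ℝ k f x)
    (fun σ v => iterF_perm Metric.isOpen_ball hsm k σ v x hx) _ (fun w hw => hb x hx w hw k)
  refine h.trans ?_
  have hG : 32 * lam * Real.exp 1 / (ρ⁻¹ / 256) ≤ 128 * Real.exp 1 := by
    have : 32 * lam * Real.exp 1 / (ρ⁻¹ / 256) = 128 * Real.exp 1 / (j * (j + 1)) := by
      rw [hlam]; field_simp; norm_num
    rw [this]
    apply div_le_self (by positivity)
    nlinarith
  have he1 : 1 ≤ Real.exp 1 := Real.one_le_exp (by norm_num)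
  have habs := Mr_absorb hω hconc (256 * Real.exp 1 ^ 2) lam⁻¹ (by nlinarith) (by positivity) k
  have el : 256 * Real.exp 1 ^ 2 * lam⁻¹ = 256 * Real.exp 1 ^ 2 * (64 * j * (j + 1)) * ρ := by
    rw [hlam]; field_simp
  rw [el] at habs
  calc (2 * Real.exp 1) ^ k * (C' * (32 * lam * Real.exp 1 / (ρ⁻¹ / 256)) ^ k * Mr ω lam⁻¹ k)
      ≤ (2 * Real.exp 1) ^ k * (C' * (128 * Real.exp 1) ^ k * Mr ω lam⁻¹ k) := by gcongr
    _ = C' * ((256 * Real.exp 1 ^ 2) ^ k * Mr ω lam⁻¹ k) := by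
        have : (256 * Real.exp 1 ^ 2) ^ k = (2 * Real.exp 1) ^ k * (128 * Real.exp 1) ^ k := by
          rw [← mul_pow]; congr 1; ring
        rw [this]; ring
    _ ≤ _ := by gcongr

lemma choose_r {E : Type*} [NormedAddCommGroup E] (U1 U2 : Set E) (h1 : IsOpen U1) (h2 : IsOpen U2)
    (h01 : (0:E) ∈ U1) (h02 : (0:E) ∈ U2) :
    ∃ r : ℝ, 0 < r ∧ Metric.closedBall (0:E) (2 * r) ⊆ U1 ∧ Metric.closedBall (0:E) (2 * r) ⊆ U2 := by
  obtain ⟨ε, hε, h⟩ := Metric.isOpen_iff.1 (h1.inter h2) 0 ⟨h01, h02⟩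
  refine ⟨ε / 4, by positivity, fun x hx => (h ?_).1, fun x hx => (h ?_).2⟩ <;>
  · rw [mem_closedBall_zero_iff] at hx
    rw [mem_ball_zero_iff]; linarith

lemma roumieu_case {E : Type*} [NormedAddCommGroup E] [InnerProductSpace ℝ E] [FiniteDimensional ℝ E]
    [MeasurableSpace E] [BorelSpace E] {ω : ℝ → ℝ}
    (hω : IsWeightFunction ω) (hconc : ConcaveOn ℝ (Ici 0) ω) (f : E → ℂ) (j : ℕ) (hj : 1 ≤ j)
    (h1 : ∃ U : Set E, IsOpen U ∧ 0 ∈ U ∧ OmegaRoumieuOn ω (f ^ j) U)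
    (h2 : ∃ U : Set E, IsOpen U ∧ 0 ∈ U ∧ OmegaRoumieuOn ω (f ^ (j + 1)) U) :
    ∃ U : Set E, IsOpen U ∧ 0 ∈ U ∧ OmegaRoumieuOn ω f U := by
  obtain ⟨U1, hU1, h01, hs1, hb1⟩ := h1
  obtain ⟨U2, hU2, h02, hs2, hb2⟩ := h2
  obtain ⟨r, hr, hr1, hr2⟩ := choose_r U1 U2 hU1 hU2 h01 h02
  have hcl : closure (Metric.ball (0:E) (2 * r)) ⊆ Metric.closedBall 0 (2 * r) := Metric.closure_ball_subset_closedBall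
  have hcpt : IsCompact (closure (Metric.ball (0:E) (2 * r))) :=
    (isCompact_closedBall (0:E) (2 * r)).of_isClosed_subset isClosed_closure hcl
  have hb1' := hb1 _ Metric.isOpen_ball hcpt (hcl.trans hr1)
  have hb2' := hb2 _ Metric.isOpen_ball hcpt (hcl.trans hr2)
  obtain ⟨C1, ρ1, hC1, hρ1, hb1⟩ := hb1'
  obtain ⟨C2, ρ2, hC2, hρ2, hb2⟩ := hb2'
  have hs1' := hs1.mono (Metric.ball_subset_closedBall.trans hr1)
  have hs2' := hs2.mono (Metric.ball_subset_closedBall.trans hr2)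
  set ρ := max ρ1 ρ2 with hρd
  have hρ : 0 < ρ := lt_of_lt_of_le hρ1 (le_max_left _ _)
  set A := max 1 (max C1 C2) with hA
  have hA1 : C1 ≤ A := (le_max_left _ _).trans (le_max_right _ _)
  have hA2 : C2 ≤ A := (le_max_right _ _).trans (le_max_right _ _)
  obtain ⟨hsm, C, hC, hb⟩ := key_bound hω hconc j hj ρ hρ f r A hr (le_max_left _ _) hs1' hs2'
    (fun x hx k => by
      have h := hb1 x hx k
      rw [iteratedFDerivWithin_of_isOpen k hU1 (hr1 (Metric.ball_subset_closedBall hx))] at h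
      refine h.trans ?_
      have := Mr_mono hω ρ1 ρ hρ1 (le_max_left _ _) k
      have h0 := (Mr_pos ω ρ1 k).le
      change C1 * Mr ω ρ1 k ≤ _
      gcongr)
    (fun x hx k => by
      have h := hb2 x hx k
      rw [iteratedFDerivWithin_of_isOpen k hU2 (hr2 (Metric.ball_subset_closedBall hx))] at h
      refine h.trans ?_
      have := Mr_mono hω ρ2 ρ hρ2 (le_max_right _ _) k
      have h0 := (Mr_pos ω ρ2 k).le
      change C2 * Mr ω ρ2 k ≤ _
      gcongr)
  refine ⟨Metric.ball 0 (r / 2), Metric.isOpen_ball, Metric.mem_ball_self (by positivity), hsm, ?_⟩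
  intro V _ _ hV
  have hj0 : (1:ℝ) ≤ j := by exact_mod_cast hj
  refine ⟨C, 256 * Real.exp 1 ^ 2 * (64 * j * (j + 1)) * ρ, hC, by positivity, fun x hx k => ?_⟩
  have hxU := hV (subset_closure hx)
  rw [iteratedFDerivWithin_of_isOpen k Metric.isOpen_ball hxU]
  exact hb x hxU k

lemma beurling_case {E : Type*} [NormedAddCommGroup E] [InnerProductSpace ℝ E] [FiniteDimensional ℝ E]
    [MeasurableSpace E] [BorelSpace E] {ω : ℝ → ℝ}
    (hω : IsWeightFunction ω) (hconc : ConcaveOn ℝ (Ici 0) ω) (f : E → ℂ) (j : ℕ) (hj : 1 ≤ j)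
    (h1 : ∃ U : Set E, IsOpen U ∧ 0 ∈ U ∧ OmegaBeurlingOn ω (f ^ j) U)
    (h2 : ∃ U : Set E, IsOpen U ∧ 0 ∈ U ∧ OmegaBeurlingOn ω (f ^ (j + 1)) U) :
    ∃ U : Set E, IsOpen U ∧ 0 ∈ U ∧ OmegaBeurlingOn ω f U := by
  obtain ⟨U1, hU1, h01, hs1, hb1⟩ := h1
  obtain ⟨U2, hU2, h02, hs2, hb2⟩ := h2
  obtain ⟨r, hr, hr1, hr2⟩ := choose_r U1 U2 hU1 hU2 h01 h02
  have hcl : closure (Metric.ball (0:E) (2 * r)) ⊆ Metric.closedBall 0 (2 * r) := Metric.closure_ball_subset_closedBall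
  have hcpt : IsCompact (closure (Metric.ball (0:E) (2 * r))) :=
    (isCompact_closedBall (0:E) (2 * r)).of_isClosed_subset isClosed_closure hcl
  have hb1' := hb1 _ Metric.isOpen_ball hcpt (hcl.trans hr1)
  have hb2' := hb2 _ Metric.isOpen_ball hcpt (hcl.trans hr2)
  have hs1' := hs1.mono (Metric.ball_subset_closedBall.trans hr1)
  have hs2' := hs2.mono (Metric.ball_subset_closedBall.trans hr2)
  have main : ∀ ρ : ℝ, 0 < ρ → ContDiffOn ℝ (⊤ : ℕ∞) f (Metric.ball 0 (r / 2)) ∧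
      ∃ C : ℝ, 0 < C ∧ ∀ x ∈ Metric.ball (0:E) (r / 2), ∀ k : ℕ,
        ‖iteratedFDeriv ℝ k f x‖ ≤ C * Mr ω (256 * Real.exp 1 ^ 2 * (64 * j * (j + 1)) * ρ) k := by
    intro ρ hρ
    obtain ⟨C1, hC1, hb1⟩ := hb1' ρ hρ
    obtain ⟨C2, hC2, hb2⟩ := hb2' ρ hρ
    set A := max 1 (max C1 C2) with hA
    have hA1 : C1 ≤ A := (le_max_left _ _).trans (le_max_right _ _)
    have hA2 : C2 ≤ A := (le_max_right _ _).trans (le_max_right _ _)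
    refine key_bound hω hconc j hj ρ hρ f r A hr (le_max_left _ _) hs1' hs2'
      (fun x hx k => ?_) (fun x hx k => ?_)
    · have h := hb1 x hx k
      rw [iteratedFDerivWithin_of_isOpen k hU1 (hr1 (Metric.ball_subset_closedBall hx))] at h
      refine h.trans ?_
      have h0 := (Mr_pos ω ρ k).le
      change C1 * Mr ω ρ k ≤ _
      gcongr
    · have h := hb2 x hx k
      rw [iteratedFDerivWithin_of_isOpen k hU2 (hr2 (Metric.ball_subset_closedBall hx))] at h
      refine h.trans ?_
      have h0 := (Mr_pos ω ρ k).le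
      change C2 * Mr ω ρ k ≤ _
      gcongr
  refine ⟨Metric.ball 0 (r / 2), Metric.isOpen_ball, Metric.mem_ball_self (by positivity), (main 1 one_pos).1, ?_⟩
  intro V _ _ hV ρ hρ
  have hj0 : (1:ℝ) ≤ j := by exact_mod_cast hj
  set γ : ℝ := 256 * Real.exp 1 ^ 2 * (64 * j * (j + 1)) with hγ
  have hγ0 : 0 < γ := by positivity
  obtain ⟨_, C, hC, hb⟩ := main (ρ / γ) (by positivity)
  rw [mul_div_cancel₀ _ hγ0.ne'] at hb
  refine ⟨C, hC, fun x hx k => ?_⟩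
  have hxU := hV (subset_closure hx)
  rw [iteratedFDerivWithin_of_isOpen k Metric.isOpen_ball hxU]
  exact hb x hxU k

/-- for a non-quasianalytic concave weight function `ω` and `d ≥ 1`, the
rings of germs at `0 ∈ ℝ^d` of `E^{ω}`- and `E^{(ω)}`-functions have property (D). -/
theorem statement8 (d : ℕ) (hd : 1 ≤ d) (ω : ℝ → ℝ) (hω : IsWeightFunction ω)
    (hconc : ConcaveOn ℝ (Ici 0) ω) (hnq : NonQuasianalyticW ω) :
    (∀ f : EuclideanSpace ℝ (Fin d) → ℂ, ∀ j : ℕ, 1 ≤ j →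
        (∃ U : Set (EuclideanSpace ℝ (Fin d)), IsOpen U ∧ 0 ∈ U ∧
          OmegaRoumieuOn ω (f ^ j) U) →
        (∃ U : Set (EuclideanSpace ℝ (Fin d)), IsOpen U ∧ 0 ∈ U ∧
          OmegaRoumieuOn ω (f ^ (j + 1)) U) →
        ∃ U : Set (EuclideanSpace ℝ (Fin d)), IsOpen U ∧ 0 ∈ U ∧ OmegaRoumieuOn ω f U) ∧
    (∀ f : EuclideanSpace ℝ (Fin d) → ℂ, ∀ j : ℕ, 1 ≤ j →
        (∃ U : Set (EuclideanSpace ℝ (Fin d)), IsOpen U ∧ 0 ∈ U ∧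
          OmegaBeurlingOn ω (f ^ j) U) →
        (∃ U : Set (EuclideanSpace ℝ (Fin d)), IsOpen U ∧ 0 ∈ U ∧
          OmegaBeurlingOn ω (f ^ (j + 1)) U) →
        ∃ U : Set (EuclideanSpace ℝ (Fin d)), IsOpen U ∧ 0 ∈ U ∧
          OmegaBeurlingOn ω f U) := by
  exact ⟨fun f j hj h1 h2 => roumieu_case hω hconc f j hj h1 h2,
    fun f j hj h1 h2 => beurling_case hω hconc f j hj h1 h2⟩
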